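/- arXiv:math/0304462 — 2 statements merged into one kernel-verified Lean document; each statement's English description precedes it below -/
import Mathlib

section
/- For every d ≥ 2 and every i with 0 ≤ i ≤ d-1, there exist constants c_1, c_2 > 0 depending only on d such that for all sufficiently large r, c_1 · r^{d(d-1)/(d+1)} ≤ f_i(I(rB^d)) ≤ c_2 · r^{d(d-1)/(d+1)}. -/
open MeasureTheory Set Filter
noncomputable section

/-- Euclidean space `ℝ^d`. -/
abbrev E (d : ℕ) := EuclideanSpace ℝ (Fin d)

/-- The integer lattice `ℤ^d` viewed inside `ℝ^d`. -/
def intPoints (d : ℕ) : Set (E d) := {v | ∀ i, ∃ z : ℤ, v i = z}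

/-- The integer convex hull `I(K) = conv(ℤ^d ∩ K)`. -/
def integerHull (d : ℕ) (K : Set (E d)) : Set (E d) := convexHull ℝ (intPoints d ∩ K)

/-- `f₀(P)`: the number of vertices (extreme points) of `P`. -/
def numVertices (d : ℕ) (P : Set (E d)) : ℕ := (Set.extremePoints ℝ P).ncard

/-- `f_i(P)`: the number of `i`-dimensional (exposed) faces of `P`. -/
def numFaces (d i : ℕ) (P : Set (E d)) : ℕ :=
  Set.ncard {F : Set (E d) | F.Nonempty ∧ IsExposed ℝ P F ∧
    Module.finrank ℝ (vectorSpan ℝ F) = i}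

section Faces
variable {H : Type*} [NormedAddCommGroup H] [InnerProductSpace ℝ H]

/-- The part of `V` where the functional `⟨u, ·⟩` is maximal. -/
def fc (V : Set H) (u : H) : Set H := {x | x ∈ V ∧ ∀ y ∈ V, inner ℝ u y ≤ inner ℝ u x}

lemma fc_subset (V : Set H) (u : H) : fc V u ⊆ V := fun _ h => h.1

lemma fc_eq_of_mem {V : Set H} {u x y : H} (hx : x ∈ fc V u) (hy : y ∈ fc V u) :
    inner ℝ u x = inner ℝ u y := le_antisymm (hy.2 x hx.1) (hx.2 y hy.1)

lemma mem_fc_of_eq {V : Set H} {u x y : H} (hx : x ∈ fc V u) (hy : y ∈ V)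
    (h : inner ℝ u y = inner ℝ u x) : y ∈ fc V u := ⟨hy, fun z hz => h ▸ hx.2 z hz⟩

lemma fc_nonempty {V : Set H} (hV : V.Finite) (hne : V.Nonempty) (u : H) : (fc V u).Nonempty := by
  obtain ⟨x, hx, h⟩ := Set.exists_max_image V (fun x => inner ℝ u x) hV hne
  exact ⟨x, hx, h⟩

lemma inner_le_of_mem_hull {V : Set H} {u x : H} {m : ℝ} (h : ∀ y ∈ V, inner ℝ u y ≤ m)
    (hx : x ∈ convexHull ℝ V) : inner ℝ u x ≤ m := by
  have hc : Convex ℝ {y : H | inner ℝ u y ≤ m} :=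
    convex_halfSpace_le ((innerSL ℝ u).toLinearMap.isLinear) m
  exact convexHull_min (s := V) (fun y hy => h y hy) hc hx

lemma fc_hull (V : Set H) (u : H) : fc (convexHull ℝ V) u = convexHull ℝ (fc V u) := by
  apply Set.Subset.antisymm
  · intro x hx
    set m := inner ℝ u x with hm
    have hV : ∀ y ∈ V, inner ℝ u y ≤ m := fun y hy => hx.2 y (subset_convexHull ℝ V hy)
    let S : Set H := {y | inner ℝ u y < m ∨ (y ∈ convexHull ℝ (fc V u) ∧ inner ℝ u y = m)}
    have hS : Convex ℝ S := by
      intro a ha b hb s t hs ht hst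
      have hle : ∀ y ∈ S, inner ℝ u y ≤ m := by
        rintro y (h | h)
        · exact h.le
        · exact h.2.le
      rcases hs.eq_or_lt with rfl | hs'
      · have : t = 1 := by linarith
        subst this; simpa using hb
      rcases ht.eq_or_lt with rfl | ht'
      · have : s = 1 := by linarith
        subst this; simpa using ha
      have hab : inner ℝ u (s • a + t • b) = s * inner ℝ u a + t * inner ℝ u b := by
        rw [inner_add_right, inner_smul_right, inner_smul_right]
      have e : m = s * m + t * m := by rw [← add_mul, hst, one_mul]
      have ha2 := hle a ha
      have hb2 := hle b hb
      rcases ha with ha | ha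
      · left
        rw [hab, e]
        nlinarith
      rcases hb with hb | hb
      · left
        rw [hab, e]
        nlinarith
      · right
        refine ⟨convex_convexHull ℝ _ ha.1 hb.1 hs ht hst, ?_⟩
        rw [hab, ha.2, hb.2, ← e]
    have hVS : V ⊆ S := by
      intro y hy
      rcases (hV y hy).lt_or_eq with h | h
      · exact Or.inl h
      · exact Or.inr ⟨subset_convexHull ℝ _ ⟨hy, fun z hz => h ▸ hV z hz⟩, h⟩
    rcases convexHull_min hVS hS hx.1 with h | h
    · exact absurd h (lt_irrefl _)
    · exact h.1
  · intro x hx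
    have hx' : x ∈ convexHull ℝ V := convexHull_mono (fc_subset V u) hx
    refine ⟨hx', fun y hy => ?_⟩
    obtain ⟨z, hz⟩ : (fc V u).Nonempty := by
      rw [← convexHull_nonempty_iff (𝕜 := ℝ)]; exact ⟨x, hx⟩
    have h1 : inner ℝ u y ≤ inner ℝ u z := inner_le_of_mem_hull hz.2 hy
    have h2 : inner ℝ (-u) x ≤ - inner ℝ u z := by
      refine inner_le_of_mem_hull (V := fc V u) (fun w hw => ?_) hx
      rw [inner_neg_left, fc_eq_of_mem hw hz]
    rw [inner_neg_left] at h2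
    linarith

lemma fc_hull_inter (V : Set H) (u : H) : convexHull ℝ (fc V u) ∩ V = fc V u := by
  rw [← fc_hull]
  ext x
  constructor
  · rintro ⟨h, hx⟩
    exact ⟨hx, fun y hy => h.2 y (subset_convexHull ℝ V hy)⟩
  · intro h
    refine ⟨?_, h.1⟩
    rw [fc_hull]; exact subset_convexHull ℝ _ h

/-- Vertex sets of the `i`-dimensional faces of `conv V`. -/
def faceSet (V : Set H) (i : ℕ) : Set (Set H) :=
  {W | W.Nonempty ∧ (∃ u, W = fc V u) ∧ Module.finrank ℝ (vectorSpan ℝ W) = i}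

lemma vectorSpan_hull (W : Set H) : vectorSpan ℝ (convexHull ℝ W) = vectorSpan ℝ W := by
  rw [← direction_affineSpan, affineSpan_convexHull, direction_affineSpan]

end Faces

lemma numFaces_hull (d i : ℕ) (V : Set (E d)) :
    numFaces d i (convexHull ℝ V) = (faceSet V i).ncard := by
  have key : {F : Set (E d) | F.Nonempty ∧ IsExposed ℝ (convexHull ℝ V) F ∧
      Module.finrank ℝ (vectorSpan ℝ F) = i} = (fun W => convexHull ℝ W) '' (faceSet V i) := by
    ext F
    constructor
    · rintro ⟨hne, hex, hr⟩
      obtain ⟨l, hl⟩ := hex hne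
      obtain ⟨u, rfl⟩ := (InnerProductSpace.toDual ℝ (E d)).surjective l
      have hF : F = convexHull ℝ (fc V u) := by
        rw [← fc_hull, hl]
        ext x
        simp [fc]
      refine ⟨fc V u, ⟨?_, ⟨u, rfl⟩, ?_⟩, hF.symm⟩
      · rwa [hF, convexHull_nonempty_iff] at hne
      · rwa [hF, vectorSpan_hull] at hr
    · rintro ⟨W, ⟨hne, ⟨u, rfl⟩, hr⟩, rfl⟩
      refine ⟨(convexHull_nonempty_iff).2 hne, fun _ => ⟨InnerProductSpace.toDual ℝ (E d) u, ?_⟩, ?_⟩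
      · simp only
        rw [← fc_hull]
        ext x
        simp [fc]
      · change Module.finrank ℝ (vectorSpan ℝ (convexHull ℝ (fc V u))) = i
        rw [vectorSpan_hull]; exact hr
  rw [numFaces, key, Set.InjOn.ncard_image]
  rintro W ⟨_, ⟨u, rfl⟩, _⟩ W' ⟨_, ⟨u', rfl⟩, _⟩ h
  simp only at h
  rw [← fc_hull_inter V u, ← fc_hull_inter V u', h]

section Descent
variable {H : Type*} [NormedAddCommGroup H] [InnerProductSpace ℝ H]

/-- A face of a face is a face. -/
lemma fc_fc {V : Set H} (hV : V.Finite) (l g : H) : ∃ u, fc (fc V l) g = fc V u := by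
  rcases (fc V l).eq_empty_or_nonempty with he | ⟨x0, hx0⟩
  · refine ⟨l, ?_⟩
    rw [he]; ext x; simp [fc]
  have hev : ∀ᶠ s in nhdsWithin (0:ℝ) (Set.Ioi 0), ∀ x ∈ V, ∀ y ∈ V,
      inner ℝ l y < inner ℝ l x → inner ℝ (l + s • g) y < inner ℝ (l + s • g) x := by
    rw [Filter.eventually_all_finite hV]
    intro x hx
    rw [Filter.eventually_all_finite hV]
    intro y hy
    by_cases h : inner ℝ l y < inner ℝ l x
    · have : ContinuousAt (fun s : ℝ => inner ℝ (l + s • g) x - inner ℝ (l + s • g) y) 0 := by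
        fun_prop
      have h2 : ∀ᶠ s in nhds (0:ℝ), 0 < inner ℝ (l + s • g) x - inner ℝ (l + s • g) y :=
        this.eventually_const_lt (by simpa using h)
      filter_upwards [nhdsWithin_le_nhds h2] with s hs _
      linarith
    · exact Filter.Eventually.of_forall fun s h' => absurd h' h
  obtain ⟨s, hs, hs0⟩ := (hev.and self_mem_nhdsWithin).exists
  have hs0 : 0 < s := hs0
  refine ⟨l + s • g, ?_⟩
  have hval : ∀ x, inner ℝ (l + s • g) x = inner ℝ l x + s * inner ℝ g x := fun x => by
    rw [inner_add_left, real_inner_smul_left]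
  ext x
  constructor
  · rintro ⟨hx, hmax⟩
    refine ⟨hx.1, fun y hy => ?_⟩
    rcases (hx.2 y hy).lt_or_eq with h | h
    · exact (hs x hx.1 y hy h).le
    · have := hmax y (mem_fc_of_eq hx hy h)
      rw [hval, hval, h]
      have := mul_le_mul_of_nonneg_left this hs0.le
      linarith
  · rintro ⟨hx, hmax⟩
    have hxl : x ∈ fc V l := by
      refine mem_fc_of_eq hx0 hx ?_
      by_contra hne
      have hlt : inner ℝ l x < inner ℝ l x0 := lt_of_le_of_ne (hx0.2 x hx) hne
      exact absurd (hs x0 hx0.1 x hx hlt) (not_lt.2 (hmax x0 hx0.1))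
    refine ⟨hxl, fun y hy => ?_⟩
    have := hmax y hy.1
    rw [hval, hval, fc_eq_of_mem hy hxl] at this
    have : s * inner ℝ g y ≤ s * inner ℝ g x := by linarith
    exact le_of_mul_le_mul_left this hs0

lemma inner_eq_of_perp {W : Set H} {g x y : H} (hg : g ∈ (vectorSpan ℝ W)ᗮ) (hx : x ∈ W) (hy : y ∈ W) :
    inner ℝ g x = inner ℝ g y := by
  have h := vsub_mem_vectorSpan ℝ hx hy
  rw [vsub_eq_sub] at h
  have := (Submodule.mem_orthogonal' _ _).1 hg _ h
  rw [inner_sub_right] at this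
  linarith

lemma perp_of_inner_eq {W : Set H} {g : H} (h : ∀ x ∈ W, ∀ y ∈ W, inner ℝ g x = inner ℝ g y) :
    g ∈ (vectorSpan ℝ W)ᗮ := by
  rw [Submodule.mem_orthogonal']
  intro v hv
  have : vectorSpan ℝ W ≤ LinearMap.ker (innerSL ℝ g).toLinearMap := by
    rw [vectorSpan, Submodule.span_le]
    rintro _ ⟨x, hx, y, hy, rfl⟩
    simp [inner_sub_right, h x hx y hy]
  simpa using this hv

lemma fc_perp (V : Set H) (u : H) : u ∈ (vectorSpan ℝ (fc V u))ᗮ :=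
  perp_of_inner_eq fun _ hx _ hy => fc_eq_of_mem hx hy

/-- Every polytope of dimension `k+1` has a face of dimension `k`. -/
lemma exists_facet [FiniteDimensional ℝ H] {W : Set H} (hW : W.Finite) {k : ℕ}
    (hk : Module.finrank ℝ (vectorSpan ℝ W) = k + 1) :
    ∃ g, (fc W g).Nonempty ∧ Module.finrank ℝ (vectorSpan ℝ (fc W g)) = k := by
  classical
  have hne : W.Nonempty := by
    by_contra h
    rw [Set.not_nonempty_iff_eq_empty] at h
    subst h
    rw [vectorSpan_empty] at hk
    simp at hk
  -- proper faces
  let P : ℕ → Prop := fun m => ∃ g, fc W g ≠ W ∧ Module.finrank ℝ (vectorSpan ℝ (fc W g)) = m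
  have hlt : ∀ g, fc W g ≠ W → Module.finrank ℝ (vectorSpan ℝ (fc W g)) ≤ k := by
    intro g hg
    have hle : vectorSpan ℝ (fc W g) ≤ vectorSpan ℝ W := vectorSpan_mono ℝ (fc_subset W g)
    have : vectorSpan ℝ (fc W g) < vectorSpan ℝ W := by
      refine lt_of_le_of_ne hle fun he => hg ?_
      refine Set.Subset.antisymm (fc_subset W g) fun x hx => ?_
      obtain ⟨y, hy⟩ := fc_nonempty hW hne g
      have hp := fc_perp W g
      rw [he] at hp
      exact mem_fc_of_eq hy hx (inner_eq_of_perp hp hx hy.1)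
    have := Submodule.finrank_lt_finrank_of_lt this
    omega
  have hex : ∃ m, P m := by
    have : ∃ x ∈ W, ∃ y ∈ W, x ≠ y := by
      by_contra! h
      have hs : W.Subsingleton := fun x hx y hy => h x hx y hy
      have h0 := vectorSpan_of_subsingleton ℝ hs
      rw [h0] at hk
      simp at hk
    obtain ⟨x, hx, y, hy, hxy⟩ := this
    refine ⟨_, x - y, fun he => ?_, rfl⟩
    have hy' : y ∈ fc W (x - y) := by rw [he]; exact hy
    have := hy'.2 x hx
    have h2 : 0 < inner ℝ (x - y) (x - y) := real_inner_self_pos.2 (sub_ne_zero.2 hxy)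
    rw [inner_sub_right] at h2
    linarith
  have hb : ∀ m, P m → m ≤ k := by rintro m ⟨g, hg, rfl⟩; exact hlt g hg
  obtain ⟨m0, hm0⟩ := hex
  have hPm := Nat.findGreatest_spec (P := P) (hb m0 hm0) hm0
  have hmax : ∀ m, P m → m ≤ Nat.findGreatest P k := fun m hm => Nat.le_findGreatest (hb m hm) hm
  set M := Nat.findGreatest P k with hM
  obtain ⟨g, hg, hgr⟩ := hPm
  refine ⟨g, fc_nonempty hW hne g, ?_⟩
  by_contra hMk
  have hMlt : M < k := lt_of_le_of_ne (Nat.findGreatest_le k) (by rwa [hgr] at hMk)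
  -- find the rotation direction
  obtain ⟨g', hg'0, hg'W, hg'G, hg'g⟩ : ∃ g' : H, g' ≠ 0 ∧ g' ∈ vectorSpan ℝ W ∧
      g' ∈ (vectorSpan ℝ (fc W g))ᗮ ∧ inner ℝ g g' = 0 := by
    set A := vectorSpan ℝ (fc W g) ⊔ Submodule.span ℝ {g} with hA
    have h1 : Module.finrank ℝ A ≤ M + 1 := by
      refine (Submodule.finrank_add_le_finrank_add_finrank _ _).trans ?_
      have := finrank_span_le_card (R := ℝ) ({g} : Set H)
      simp at this
      omega
    have h2 : Module.finrank ℝ A + Module.finrank ℝ Aᗮ = Module.finrank ℝ H :=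
      Submodule.finrank_add_finrank_orthogonal A
    have h3 := Submodule.finrank_sup_add_finrank_inf_eq (vectorSpan ℝ W) Aᗮ
    have h4 : Module.finrank ℝ ↑(vectorSpan ℝ W ⊔ Aᗮ) ≤ Module.finrank ℝ H := Submodule.finrank_le _
    have h5 : 0 < Module.finrank ℝ ↑(vectorSpan ℝ W ⊓ Aᗮ) := by omega
    have h6 : vectorSpan ℝ W ⊓ Aᗮ ≠ ⊥ := fun h => by rw [h] at h5; simp at h5
    obtain ⟨g', hg', h0⟩ := Submodule.exists_mem_ne_zero_of_ne_bot h6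
    refine ⟨g', h0, hg'.1, Submodule.orthogonal_le le_sup_left hg'.2, ?_⟩
    exact (Submodule.mem_orthogonal _ _).1 hg'.2 g
      (Submodule.mem_sup_right (Submodule.mem_span_singleton_self g))
  obtain ⟨y, hy⟩ := fc_nonempty hW hne g
  -- choose the sign
  obtain ⟨g', hg'0, hg'W, hg'G, hg'g, z, hzW, hz⟩ : ∃ g' : H, g' ≠ 0 ∧ g' ∈ vectorSpan ℝ W ∧
      g' ∈ (vectorSpan ℝ (fc W g))ᗮ ∧ inner ℝ g g' = 0 ∧ ∃ z ∈ W, inner ℝ g' y < inner ℝ g' z := by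
    by_cases h : ∃ z ∈ W, inner ℝ g' y < inner ℝ g' z
    · exact ⟨g', hg'0, hg'W, hg'G, hg'g, h⟩
    by_cases h' : ∃ z ∈ W, inner ℝ g' z < inner ℝ g' y
    · refine ⟨-g', neg_ne_zero.2 hg'0, neg_mem hg'W, neg_mem hg'G, by simp [hg'g], ?_⟩
      simpa [inner_neg_left] using h'
    exfalso
    push Not at h h'
    have : g' ∈ (vectorSpan ℝ W)ᗮ := perp_of_inner_eq fun a ha b hb =>
      (le_antisymm (h a ha) (h' a ha)).trans (le_antisymm (h b hb) (h' b hb)).symm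
    exact hg'0 (inner_self_eq_zero.1 ((Submodule.mem_orthogonal _ _).1 this g' hg'W))
  have hfin : {x ∈ W | inner ℝ g' y < inner ℝ g' x}.Finite := hW.subset (Set.sep_subset _ _)
  obtain ⟨x, ⟨hxW, hxy⟩, hxmin⟩ := Set.exists_min_image _
    (fun x => (inner ℝ g y - inner ℝ g x) / (inner ℝ g' x - inner ℝ g' y)) hfin ⟨z, hzW, hz⟩
  set t := (inner ℝ g y - inner ℝ g x) / (inner ℝ g' x - inner ℝ g' y) with ht
  have hxG : x ∉ fc W g := fun h => by
    have := inner_eq_of_perp hg'G h hy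
    linarith
  have hgx : inner ℝ g x < inner ℝ g y := by
    refine lt_of_le_of_ne (hy.2 x hxW) fun h => hxG (mem_fc_of_eq hy hxW h)
  have ht0 : 0 < t := div_pos (by linarith) (by linarith)
  have hval : ∀ a, inner ℝ (g + t • g') a = inner ℝ g a + t * inner ℝ g' a := fun a => by
    rw [inner_add_left, real_inner_smul_left]
  have hyf : y ∈ fc W (g + t • g') := by
    refine ⟨hy.1, fun a ha => ?_⟩
    rw [hval, hval]
    have h1 := hy.2 a ha
    by_cases hc : inner ℝ g' y < inner ℝ g' a
    · have h2 := hxmin a ⟨ha, hc⟩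
      rw [le_div_iff₀ (by linarith)] at h2
      nlinarith
    · have : t * inner ℝ g' a ≤ t * inner ℝ g' y := mul_le_mul_of_nonneg_left (not_lt.1 hc) ht0.le
      linarith
  have hxf : x ∈ fc W (g + t • g') := by
    refine mem_fc_of_eq hyf hxW ?_
    rw [hval, hval]
    have : t * (inner ℝ g' x - inner ℝ g' y) = inner ℝ g y - inner ℝ g x :=
      div_mul_cancel₀ _ (by linarith)
    linarith
  have hsub : fc W g ⊆ fc W (g + t • g') := fun a ha => by
    refine mem_fc_of_eq hyf ha.1 ?_
    rw [hval, hval, fc_eq_of_mem ha hy, inner_eq_of_perp hg'G ha hy]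
  have hprop : fc W (g + t • g') ≠ W := fun he => by
    have hp := fc_perp W (g + t • g')
    rw [he] at hp
    have := (Submodule.mem_orthogonal' _ _).1 hp g' hg'W
    rw [hval, hg'g, zero_add] at this
    rcases mul_eq_zero.1 this with h | h
    · exact ht0.ne' h
    · exact hg'0 (inner_self_eq_zero.1 h)
  have hlt2 : vectorSpan ℝ (fc W g) < vectorSpan ℝ (fc W (g + t • g')) := by
    refine lt_of_le_of_ne (vectorSpan_mono ℝ hsub) fun he => ?_
    have hp := fc_perp W g
    rw [he] at hp
    have := inner_eq_of_perp hp hxf hyf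
    linarith
  have h1 := Submodule.finrank_lt_finrank_of_lt hlt2
  have h2 := hmax _ ⟨g + t • g', hprop, rfl⟩
  omega

/-- Faces of faces in every smaller dimension. -/
lemma exists_subface [FiniteDimensional ℝ H] {V : Set H} (hV : V.Finite) {k : ℕ} {W : Set H}
    (hW : W ∈ faceSet V k) (i : ℕ) (hi : i ≤ k) : ∃ W' ∈ faceSet V i, W' ⊆ W := by
  induction k generalizing W with
  | zero => obtain rfl : i = 0 := by omega
            exact ⟨W, hW, subset_rfl⟩
  | succ k ih =>
    rcases hi.eq_or_lt with rfl | hlt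
    · exact ⟨W, hW, subset_rfl⟩
    obtain ⟨hne, ⟨u, rfl⟩, hr⟩ := hW
    obtain ⟨g, hgne, hgr⟩ := exists_facet (hV.subset (fc_subset V u)) hr
    obtain ⟨u', hu'⟩ := fc_fc hV u g
    obtain ⟨W', hW', hs⟩ := ih (W := fc (fc V u) g) ⟨hgne, ⟨u', hu'⟩, hgr⟩ (by omega)
    exact ⟨W', hW', hs.trans (fc_subset _ _)⟩

end Descent

section Polar
variable {H : Type*} [NormedAddCommGroup H] [InnerProductSpace ℝ H]

/-- The polar of `X`. -/
def polarSet (X : Set H) : Set H := {u | ∀ x ∈ X, inner ℝ u x ≤ 1}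

/-- Facet normals of `conv X`. -/
def facetNormals (X : Set H) : Set H :=
  {u | u ∈ polarSet X ∧ Submodule.span ℝ {x | x ∈ X ∧ inner ℝ u x = 1} = ⊤}

lemma convex_polarSet (X : Set H) : Convex ℝ (polarSet X) := by
  intro a ha b hb s t hs ht hst x hx
  rw [inner_add_left, real_inner_smul_left, real_inner_smul_left]
  have h1 := mul_le_mul_of_nonneg_left (ha x hx) hs
  have h2 := mul_le_mul_of_nonneg_left (hb x hx) ht
  linarith

lemma isClosed_polarSet (X : Set H) : IsClosed (polarSet X) := by
  have : polarSet X = ⋂ x ∈ X, {u : H | inner ℝ u x ≤ 1} := by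
    ext u; simp [polarSet]
  rw [this]
  exact isClosed_biInter fun x _ => isClosed_le (by fun_prop) continuous_const

lemma exists_facetNormal [FiniteDimensional ℝ H] {X : Set H} (hX : X.Finite)
    (hb : Bornology.IsBounded (polarSet X)) {w : H} (hw : w ∈ polarSet X) (y : H) :
    ∃ u ∈ facetNormals X, inner ℝ w y ≤ inner ℝ u y := by
  have hcpt : IsCompact (polarSet X) := Metric.isCompact_of_isClosed_isBounded (isClosed_polarSet X) hb
  have hexp : IsExposed ℝ (polarSet X) (fc (polarSet X) y) := by
    intro _
    refine ⟨innerSL ℝ y, ?_⟩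
    ext x; simp [fc]
  obtain ⟨m, hm, hmax⟩ := hcpt.exists_isMaxOn ⟨w, hw⟩
    (f := fun u => inner ℝ y u) (by fun_prop)
  have hne : (fc (polarSet X) y).Nonempty := ⟨m, hm, fun z hz => hmax hz⟩
  obtain ⟨u, hu⟩ := (hexp.isCompact hcpt).extremePoints_nonempty hne
  have hu1 : u ∈ fc (polarSet X) y := extremePoints_subset hu
  have hu2 : u ∈ (polarSet X).extremePoints ℝ := hexp.isExtreme.extremePoints_subset_extremePoints hu
  refine ⟨u, ⟨hu1.1, ?_⟩, ?_⟩
  · by_contra hspan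
    set A := Submodule.span ℝ {x | x ∈ X ∧ inner ℝ u x = 1} with hA
    have : Aᗮ ≠ ⊥ := fun h => hspan ((Submodule.orthogonal_eq_bot_iff).1 h)
    obtain ⟨v, hv, hv0⟩ := Submodule.exists_mem_ne_zero_of_ne_bot this
    have hev : ∀ᶠ s in nhdsWithin (0:ℝ) (Set.Ioi 0), ∀ x ∈ X,
        inner ℝ (u + s • v) x ≤ 1 ∧ inner ℝ (u - s • v) x ≤ 1 := by
      rw [Filter.eventually_all_finite hX]
      intro x hx
      rcases (hu1.1 x hx).lt_or_eq with h | h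
      · have c1 : ContinuousAt (fun s : ℝ => inner ℝ (u + s • v) x) 0 := by fun_prop
        have c2 : ContinuousAt (fun s : ℝ => inner ℝ (u - s • v) x) 0 := by fun_prop
        have h1 := c1.eventually_lt_const (u := 1) (by simpa using h)
        have h2 := c2.eventually_lt_const (u := 1) (by simpa using h)
        filter_upwards [nhdsWithin_le_nhds h1, nhdsWithin_le_nhds h2] with s h1 h2
        exact ⟨h1.le, h2.le⟩
      · refine Filter.Eventually.of_forall fun s => ?_
        have : inner ℝ v x = 0 := (Submodule.mem_orthogonal' _ _).1 hv x (Submodule.subset_span ⟨hx, h⟩)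
        simp [inner_add_left, inner_sub_left, real_inner_smul_left, this, h]
    obtain ⟨s, hs, hs0⟩ := (hev.and self_mem_nhdsWithin).exists
    have hs0 : 0 < s := hs0
    have h1 : u + s • v ∈ polarSet X := fun x hx => (hs x hx).1
    have h2 : u - s • v ∈ polarSet X := fun x hx => (hs x hx).2
    have := hu2.2 h1 h2 (by
      refine ⟨1/2, 1/2, by norm_num, by norm_num, by norm_num, ?_⟩
      module)
    have h3 : s • v = 0 := by simpa using this
    rcases smul_eq_zero.1 h3 with h | h
    · exact hs0.ne' h
    · exact hv0 h
  · rw [real_inner_comm, real_inner_comm y u]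
    exact hu1.2 w hw

lemma facetNormals_mem_faceSet [FiniteDimensional ℝ H] {X : Set H} {n : ℕ}
    (hn : Module.finrank ℝ H = n + 1) {u : H} (hu : u ∈ facetNormals X) :
    {x | x ∈ X ∧ inner ℝ u x = 1} ∈ faceSet X n := by
  obtain ⟨hp, hs⟩ := hu
  set W := {x | x ∈ X ∧ inner ℝ u x = 1} with hW
  have hne : W.Nonempty := by
    by_contra h
    rw [Set.not_nonempty_iff_eq_empty] at h
    rw [h, Submodule.span_empty] at hs
    have : Module.finrank ℝ (⊥ : Submodule ℝ H) = n + 1 := by rw [hs, finrank_top, hn]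
    simp at this
  obtain ⟨x0, hx0⟩ := hne
  have hWf : W = fc X u := by
    ext x
    constructor
    · rintro ⟨h1, h2⟩
      exact ⟨h1, fun y hy => h2 ▸ hp y hy⟩
    · intro h
      exact ⟨h.1, le_antisymm (hp x h.1) (hx0.2 ▸ h.2 x0 hx0.1)⟩
  refine ⟨⟨x0, hx0⟩, ⟨u, hWf⟩, ?_⟩
  have hperp : u ∈ (vectorSpan ℝ W)ᗮ := by rw [hWf]; exact fc_perp X u
  have hu0 : u ≠ 0 := by rintro rfl; simpa using hx0.2
  have h1 : Module.finrank ℝ (vectorSpan ℝ W) + Module.finrank ℝ (vectorSpan ℝ W)ᗮ = n + 1 :=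
    (Submodule.finrank_add_finrank_orthogonal _).trans hn
  have h2 : 0 < Module.finrank ℝ (vectorSpan ℝ W)ᗮ := by
    rw [Module.finrank_pos_iff_exists_ne_zero]
    exact ⟨⟨u, hperp⟩, fun h => hu0 (congrArg Subtype.val h)⟩
  have h3 : (⊤ : Submodule ℝ H) ≤ vectorSpan ℝ W ⊔ Submodule.span ℝ {x0} := by
    rw [← hs, Submodule.span_le]
    intro x hx
    have e : x = (x - x0) + x0 := by abel
    rw [e]
    refine add_mem (Submodule.mem_sup_left ?_) (Submodule.mem_sup_right (Submodule.mem_span_singleton_self x0))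
    exact vsub_mem_vectorSpan ℝ hx hx0
  have h4 := Submodule.finrank_mono h3
  have h5 := Submodule.finrank_add_le_finrank_add_finrank (vectorSpan ℝ W) (Submodule.span ℝ {x0})
  have h6 := finrank_span_le_card (R := ℝ) ({x0} : Set H)
  simp at h6
  rw [finrank_top, hn] at h4
  omega

end Polar

section Count

lemma inner_E {d : ℕ} (u x : E d) : inner ℝ u x = ∑ k, x k * u k := by
  simp [PiLp.inner_apply]

/-- A matrix of active lattice points. -/
lemma exists_active_matrix {d : ℕ} {X : Set (E d)} (hX : X ⊆ intPoints d) {u : E d}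
    (hu : u ∈ facetNormals X) : ∃ A : Matrix (Fin d) (Fin d) ℤ, A.det ≠ 0 ∧
      (∀ j, ∃ x ∈ X, (∀ k, x k = (A j k : ℝ)) ∧ inner ℝ u x = 1) := by
  obtain ⟨hp, hs⟩ := hu
  let b := Module.Basis.ofSpan hs.ge
  have hbX : Set.range b ⊆ {x | x ∈ X ∧ inner ℝ u x = 1} := Module.Basis.ofSpan_subset hs.ge
  have : Fintype _ := FiniteDimensional.fintypeBasisIndex b
  let e := Fintype.equivFinOfCardEq (n := d) (by
    rw [← Module.finrank_eq_card_basis b, finrank_euclideanSpace_fin])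
  let b' := b.reindex e
  have hb' : ∀ j, b' j ∈ X ∧ inner ℝ u (b' j) = 1 := fun j =>
    hbX (by rw [← b.range_reindex e]; exact ⟨j, rfl⟩)
  choose A hA using fun j => hX (hb' j).1
  refine ⟨Matrix.of A, ?_, fun j => ⟨b' j, (hb' j).1, hA j, (hb' j).2⟩⟩
  intro hdet
  have hli := b'.linearIndependent
  have hli2 : LinearIndependent ℝ (fun j => (WithLp.ofLp (b' j) : Fin d → ℝ)) :=
    hli.map' (WithLp.linearEquiv 2 ℝ (Fin d → ℝ)).toLinearMap (LinearEquiv.ker _)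
  have hrows : LinearIndependent ℝ ((Matrix.of A).map (Int.cast : ℤ → ℝ)).row := by
    convert hli2 using 1
    ext j k
    simp [Matrix.row, hA]
  rw [Matrix.linearIndependent_rows_iff_isUnit, Matrix.isUnit_iff_isUnit_det] at hrows
  have : ((Matrix.of A).map (Int.cast : ℤ → ℝ)).det = 0 := by
    have := (Int.castRingHom ℝ).map_det (Matrix.of A)
    rw [hdet] at this
    simpa using this.symm
  rw [this] at hrows
  simp at hrows

lemma facetNormals_card {d : ℕ} (hd : 0 < d) {X : Set (E d)} (hX : X ⊆ intPoints d) {R m T : ℝ}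
    (hm : 0 < m) (hT : 0 < T) (hR0 : 0 ≤ R) (hR : ∀ x ∈ X, ‖x‖ ≤ R)
    (hpol : ∀ u ∈ polarSet X, ∀ j, |u j| ≤ 1 / m) (S : Finset (E d))
    (hS : ∀ u ∈ S, u ∈ facetNormals X) :
    (S.card : ℝ) ≤ (2 * (T / m) + 1) ^ d + (2 * R * d) ^ d / T := by
  classical
  have hact : ∀ u : E d, ∃ A : Matrix (Fin d) (Fin d) ℤ, u ∈ S → A.det ≠ 0 ∧
      (∀ j, ∃ x ∈ X, (∀ k, x k = (A j k : ℝ)) ∧ inner ℝ u x = 1) := fun u => by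
    by_cases h : u ∈ S
    · obtain ⟨A, hA⟩ := exists_active_matrix hX (hS u h)
      exact ⟨A, fun _ => hA⟩
    · exact ⟨0, fun h' => absurd h' h⟩
  choose A hA using hact
  have hone : ∀ u ∈ S, ∀ j, ∑ k, (A u j k : ℝ) * u k = 1 := by
    intro u hu j
    obtain ⟨x, _, hx, h1⟩ := (hA u hu).2 j
    rw [inner_E] at h1
    rw [← h1]; exact Finset.sum_congr rfl fun k _ => by rw [hx]
  have hle : ∀ u ∈ S, ∀ u' ∈ S, ∀ j, ∑ k, (A u j k : ℝ) * u' k ≤ 1 := by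
    intro u hu u' hu' j
    obtain ⟨x, hxX, hx, h1⟩ := (hA u hu).2 j
    have := (hS u' hu').1 x hxX
    rw [inner_E] at this
    refine le_trans (le_of_eq ?_) this
    exact Finset.sum_congr rfl fun k _ => by rw [hx]
  have hArow : ∀ u ∈ S, ∀ j k, |(A u j k : ℝ)| ≤ R := by
    intro u hu j k
    obtain ⟨x, hxX, hx, _⟩ := (hA u hu).2 j
    rw [← hx k, ← Real.norm_eq_abs]
    exact (PiLp.norm_apply_le x k).trans (hR x hxX)
  -- uniqueness from the active matrix
  have huniq : ∀ u ∈ S, ∀ u' : E d, (∀ j, ∑ k, (A u j k : ℝ) * u' k = 1) → u' = u := by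
    intro u hu u' h
    have hdet : ((A u).map (Int.cast : ℤ → ℝ)).det ≠ 0 := by
      have := (Int.castRingHom ℝ).map_det (A u)
      have h2 : ((A u).map (Int.cast : ℤ → ℝ)).det = ((A u).det : ℝ) := by simpa using this.symm
      rw [h2]; exact_mod_cast (hA u hu).1
    have h0 := Matrix.eq_zero_of_mulVec_eq_zero hdet (v := fun k => u' k - u k) (by
      ext j
      simp only [Matrix.mulVec, dotProduct, Matrix.map_apply, Pi.zero_apply, mul_sub]
      rw [Finset.sum_sub_distrib, h j, hone u hu j, sub_self])
    ext k
    have := congrFun h0 k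
    simp only [Pi.zero_apply] at this
    linarith
  -- volume estimate
  have hvol : ∑ u ∈ S, |((A u).det : ℝ)| ≤ (2 * R * d) ^ d := by
    let B : Set (Fin d → ℝ) := Set.pi Set.univ fun _ => Set.Ioo 0 (1 / (d : ℝ))
    let f : E d → (Fin d → ℝ) →ₗ[ℝ] (Fin d → ℝ) :=
      fun u => Matrix.toLin' ((A u).map (Int.cast : ℤ → ℝ)).transpose
    have hf : ∀ u t k, f u t k = ∑ j, t j * (A u j k : ℝ) := by
      intro u t k
      simp [f, Matrix.mulVec, dotProduct, mul_comm]
    have hfdet : ∀ u, LinearMap.det (f u) = ((A u).det : ℝ) := by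
      intro u
      simp only [f, LinearMap.det_toLin', Matrix.det_transpose]
      have := (Int.castRingHom ℝ).map_det (A u)
      simpa using this.symm
    have hBvol : volume B = ENNReal.ofReal ((1 / (d:ℝ)) ^ d) := by
      simp only [B]
      rw [Real.volume_pi_Ioo, ENNReal.ofReal_pow (by positivity)]
      simp
    have hBo : IsOpen B := isOpen_set_pi Set.finite_univ fun _ _ => isOpen_Ioo
    have hmeas : ∀ u ∈ S, MeasurableSet (f u '' B) := by
      intro u hu
      have hsurj : Function.Surjective (f u) := by
        have : LinearMap.det (f u) ≠ 0 := by rw [hfdet]; exact_mod_cast (hA u hu).1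
        exact (LinearMap.equivOfDetNeZero (f u) this).surjective
      exact ((f u).isOpenMap_of_finiteDimensional hsurj B hBo).measurableSet
    -- the pairing
    have hpair : ∀ (u v : E d) (t : Fin d → ℝ), ∑ k, f u t k * v k =
        ∑ j, t j * ∑ k, (A u j k : ℝ) * v k := by
      intro u v t
      simp only [hf, Finset.sum_mul, Finset.mul_sum]
      rw [Finset.sum_comm]
      exact Finset.sum_congr rfl fun j _ => Finset.sum_congr rfl fun k _ => by ring
    have hdisj : Set.PairwiseDisjoint (↑S : Set (E d)) fun u => f u '' B := by
      intro u hu v hv huv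
      have hu : u ∈ S := hu
      have hv : v ∈ S := hv
      rw [Function.onFun, Set.disjoint_left]
      rintro x ⟨t, ht, rfl⟩ ⟨t', ht', he⟩
      have ht0 : ∀ j, 0 < t j := fun j => (ht j trivial).1
      have ht0' : ∀ j, 0 < t' j := fun j => (ht' j trivial).1
      have e1 : ∑ k, f u t k * u k = ∑ j, t j := by
        rw [hpair]; exact Finset.sum_congr rfl fun j _ => by rw [hone u hu, mul_one]
      have e2 : ∑ k, f v t' k * v k = ∑ j, t' j := by
        rw [hpair]; exact Finset.sum_congr rfl fun j _ => by rw [hone v hv, mul_one]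
      have e3 : ∑ k, f v t' k * u k ≤ ∑ j, t' j := by
        rw [hpair]
        exact Finset.sum_le_sum fun j _ => by
          have := mul_le_mul_of_nonneg_left (hle v hv u hu j) (ht0' j).le
          linarith
      rw [he] at e2 e3
      have e4 := hpair u v t
      have e5 : ∑ j, t j * (1 - ∑ k, (A u j k : ℝ) * v k) ≤ 0 := by
        simp only [mul_sub, mul_one]
        rw [Finset.sum_sub_distrib, ← e4]
        linarith
      have hnn : ∀ j ∈ Finset.univ, 0 ≤ t j * (1 - ∑ k, (A u j k : ℝ) * v k) := fun j _ =>
        mul_nonneg (ht0 j).le (by linarith [hle u hu v hv j])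
      have e6 := (Finset.sum_eq_zero_iff_of_nonneg hnn).1 (le_antisymm e5 (Finset.sum_nonneg hnn))
      refine huv (huniq u hu v fun j => ?_).symm
      rcases mul_eq_zero.1 (e6 j (Finset.mem_univ j)) with h | h
      · exact absurd h (ht0 j).ne'
      · linarith
    have hsub : (⋃ u ∈ S, f u '' B) ⊆ Set.pi Set.univ fun _ : Fin d => Set.Icc (-R) R := by
      intro x hx
      simp only [Set.mem_iUnion] at hx
      obtain ⟨u, hu, t, ht, rfl⟩ := hx
      intro k _
      rw [Set.mem_Icc, ← abs_le, hf]
      have hd' : (0:ℝ) < d := by exact_mod_cast hd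
      calc |∑ j, t j * (A u j k : ℝ)| ≤ ∑ j, |t j * (A u j k : ℝ)| := Finset.abs_sum_le_sum_abs _ _
        _ ≤ ∑ j : Fin d, (1 / (d:ℝ)) * R := Finset.sum_le_sum fun j _ => by
            rw [abs_mul]
            have h1 := ht j trivial
            refine mul_le_mul ?_ (hArow u hu j k) (abs_nonneg _) (by positivity)
            rw [abs_of_pos h1.1]; exact h1.2.le
        _ = R := by simp; field_simp
    have hmain : ∑ u ∈ S, volume (f u '' B) ≤ volume (Set.pi Set.univ fun _ : Fin d => Set.Icc (-R) R) := by
      rw [← measure_biUnion_finset hdisj hmeas]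
      exact measure_mono hsub
    rw [volume_pi_pi] at hmain
    simp only [Real.volume_Icc] at hmain
    have h1 : ∀ u ∈ S, volume (f u '' B) = ENNReal.ofReal (|((A u).det : ℝ)| * (1 / (d:ℝ)) ^ d) := by
      intro u hu
      rw [MeasureTheory.Measure.addHaar_image_linearMap, hfdet, hBvol,
        ENNReal.ofReal_mul (abs_nonneg _)]
    rw [Finset.sum_congr rfl h1, ← ENNReal.ofReal_sum_of_nonneg (fun _ _ => by positivity)] at hmain
    simp only [Finset.prod_const, Finset.card_univ, Fintype.card_fin] at hmain
    rw [← ENNReal.ofReal_pow (by linarith), ENNReal.ofReal_le_ofReal_iff (by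
      apply pow_nonneg; linarith), ← Finset.sum_mul] at hmain
    have hd' : (0:ℝ) < d := by exact_mod_cast hd
    rw [one_div, inv_pow, ← div_eq_mul_inv, div_le_iff₀ (by positivity), ← mul_pow] at hmain
    have e : 2 * R * (d:ℝ) = (R - -R) * d := by ring
    rw [e]; exact hmain
  -- splitting
  have hsplit := Finset.card_filter_add_card_filter_not (s := S) (fun u => |((A u).det : ℝ)| ≤ T)
  have hlarge : ((S.filter fun u => ¬ |((A u).det : ℝ)| ≤ T).card : ℝ) ≤ (2 * R * d) ^ d / T := by
    rw [le_div_iff₀ hT]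
    calc ((S.filter fun u => ¬ |((A u).det : ℝ)| ≤ T).card : ℝ) * T
        = ∑ u ∈ S.filter (fun u => ¬ |((A u).det : ℝ)| ≤ T), T := by simp
      _ ≤ ∑ u ∈ S.filter (fun u => ¬ |((A u).det : ℝ)| ≤ T), |((A u).det : ℝ)| :=
          Finset.sum_le_sum fun u hu => (not_le.1 (Finset.mem_filter.1 hu).2).le
      _ ≤ ∑ u ∈ S, |((A u).det : ℝ)| :=
          Finset.sum_le_sum_of_subset_of_nonneg (Finset.filter_subset _ _) fun _ _ _ => abs_nonneg _
      _ ≤ _ := hvol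
  have hsmall : ((S.filter fun u => |((A u).det : ℝ)| ≤ T).card : ℝ) ≤ (2 * (T / m) + 1) ^ d := by
    set N := ⌊T / m⌋ with hN
    have hN0 : 0 ≤ N := Int.floor_nonneg.2 (by positivity)
    have hw : ∀ u : E d, ∃ w : Fin d → ℤ, u ∈ S → ∀ k, (w k : ℝ) = |((A u).det : ℝ)| * u k := by
      intro u
      by_cases hu : u ∈ S
      · have hz : ∃ w : Fin d → ℤ, ∀ k, (w k : ℝ) = ((A u).det : ℝ) * u k := by
          refine ⟨(A u).adjugate.mulVec 1, fun k => ?_⟩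
          have h1 : ((A u).map (Int.cast : ℤ → ℝ)).mulVec (fun k => u k) = 1 := by
            ext j
            simpa [Matrix.mulVec, dotProduct] using hone u hu j
          have h2 : ((A u).map (Int.cast : ℤ → ℝ)).adjugate.mulVec
              (((A u).map (Int.cast : ℤ → ℝ)).mulVec (fun k => u k)) =
              ((A u).map (Int.cast : ℤ → ℝ)).det • (fun k => u k) := by
            rw [Matrix.mulVec_mulVec, Matrix.adjugate_mul, Matrix.smul_mulVec, Matrix.one_mulVec]
          have h3 : ((A u).map (Int.cast : ℤ → ℝ)).det = ((A u).det : ℝ) := by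
            have := (Int.castRingHom ℝ).map_det (A u)
            simpa using this.symm
          have h4 : ((A u).map (Int.cast : ℤ → ℝ)).adjugate = (A u).adjugate.map (Int.cast : ℤ → ℝ) := by
            have := (Int.castRingHom ℝ).map_adjugate (A u)
            simpa using this.symm
          rw [h1, h3, h4] at h2
          have h5 := congrFun h2 k
          simp [Matrix.mulVec, dotProduct] at h5 ⊢
          exact h5
        obtain ⟨w, hw⟩ := hz
        rcases le_total 0 ((A u).det : ℝ) with h | h
        · exact ⟨w, fun _ k => by rw [abs_of_nonneg h, hw]⟩
        · exact ⟨-w, fun _ k => by rw [abs_of_nonpos h]; simp [hw]⟩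
      · exact ⟨0, fun h => absurd h hu⟩
    choose w hw using hw
    have hcard : (S.filter fun u => |((A u).det : ℝ)| ≤ T).card ≤
        (Fintype.piFinset fun _ : Fin d => Finset.Icc (-N) N).card := by
      refine Finset.card_le_card_of_injOn w ?_ ?_
      · intro u hu
        obtain ⟨hu, hT'⟩ := Finset.mem_filter.1 hu
        rw [Finset.mem_coe, Fintype.mem_piFinset]
        intro k
        rw [Finset.mem_Icc]
        rw [← abs_le, hN, Int.le_floor]
        push_cast
        rw [hw u hu k, abs_mul, abs_abs]
        calc |((A u).det : ℝ)| * |u k| ≤ T * (1 / m) :=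
              mul_le_mul hT' (hpol u (hS u hu).1 k) (abs_nonneg _) hT.le
          _ = T / m := by ring
      · intro u hu v hv huv
        have hu := (Finset.mem_filter.1 hu).1
        have hv := (Finset.mem_filter.1 hv).1
        have hpu : 0 < |((A u).det : ℝ)| := abs_pos.2 (by exact_mod_cast (hA u hu).1)
        have hpv : 0 < |((A v).det : ℝ)| := abs_pos.2 (by exact_mod_cast (hA v hv).1)
        have hk : ∀ k, |((A u).det : ℝ)| * u k = |((A v).det : ℝ)| * v k := fun k => by
          rw [← hw u hu, ← hw v hv, huv]
        have hgen : ∀ a b : E d, a ∈ S → b ∈ S → (∀ k, |((A a).det : ℝ)| * a k = |((A b).det : ℝ)| * b k) →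
            |((A a).det : ℝ)| ≤ |((A b).det : ℝ)| := by
          intro a b ha hb hab
          have h1 := hone a ha ⟨0, hd⟩
          have h2 := hle a ha b hb ⟨0, hd⟩
          calc |((A a).det : ℝ)| = |((A a).det : ℝ)| * ∑ k, (A a ⟨0, hd⟩ k : ℝ) * a k := by rw [h1, mul_one]
            _ = |((A b).det : ℝ)| * ∑ k, (A a ⟨0, hd⟩ k : ℝ) * b k := by
                rw [Finset.mul_sum, Finset.mul_sum]
                exact Finset.sum_congr rfl fun k _ => by linear_combination (A a ⟨0, hd⟩ k : ℝ) * hab k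
            _ ≤ |((A b).det : ℝ)| := by nlinarith [abs_nonneg ((A b).det : ℝ)]
        have he := le_antisymm (hgen u v hu hv hk) (hgen v u hv hu fun k => (hk k).symm)
        ext k
        have := hk k
        rw [he] at this
        exact mul_left_cancel₀ hpv.ne' this
    have hNle : ((2 * N + 1 : ℤ) : ℝ) ≤ 2 * (T / m) + 1 := by
      push_cast
      have := Int.floor_le (T / m)
      linarith
    calc ((S.filter fun u => |((A u).det : ℝ)| ≤ T).card : ℝ)
        ≤ ((Fintype.piFinset fun _ : Fin d => Finset.Icc (-N) N).card : ℝ) := by exact_mod_cast hcard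
      _ = ((2 * N + 1 : ℤ) : ℝ) ^ d := by
          rw [Fintype.card_piFinset]
          simp only [Int.card_Icc, Finset.prod_const, Finset.card_univ, Fintype.card_fin]
          rw [Nat.cast_pow]
          congr 1
          have : ((N + 1 - -N).toNat : ℤ) = 2 * N + 1 := by omega
          exact_mod_cast congrArg (Int.cast : ℤ → ℝ) this
      _ ≤ _ := by gcongr
  rw [← hsplit]
  rw [Nat.cast_add]
  exact add_le_add hsmall hlarge

end Count

section Upper

lemma inner_single_E {d : ℕ} (u : E d) (j : Fin d) (a : ℝ) :
    inner ℝ u (EuclideanSpace.single j a) = a * u j := by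
  rw [real_inner_comm, EuclideanSpace.inner_single_left]; simp

lemma polar_coord_bound {d : ℕ} {X : Set (E d)} {m : ℝ} (hm : 0 < m)
    (h : ∀ j, EuclideanSpace.single j m ∈ X ∧ EuclideanSpace.single j (-m) ∈ X) :
    ∀ u ∈ polarSet X, ∀ j, |u j| ≤ 1 / m := by
  intro u hu j
  have h1 := hu _ (h j).1
  have h2 := hu _ (h j).2
  rw [inner_single_E] at h1 h2
  rw [abs_le, le_div_iff₀ hm, neg_le, le_div_iff₀ hm]
  constructor <;> linarith

lemma polar_bounded {d : ℕ} {X : Set (E d)} {m : ℝ} (hm : 0 < m)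
    (h : ∀ j, EuclideanSpace.single j m ∈ X ∧ EuclideanSpace.single j (-m) ∈ X) :
    Bornology.IsBounded (polarSet X) := by
  rw [isBounded_iff_forall_norm_le]
  refine ⟨√(∑ _j : Fin d, (1 / m) ^ 2), fun u hu => ?_⟩
  rw [EuclideanSpace.norm_eq]
  refine Real.sqrt_le_sqrt (Finset.sum_le_sum fun j _ => ?_)
  have := polar_coord_bound hm h u hu j
  rw [Real.norm_eq_abs]
  gcongr

/-- Two faces of the same dimension, one contained in the other, coincide. -/
lemma faceSet_eq_of_subset {d i : ℕ} {V : Set (E d)} {W W' : Set (E d)} (hW : W ∈ faceSet V i)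
    (hW' : W' ∈ faceSet V i) (h : W ⊆ W') : W = W' := by
  refine Set.Subset.antisymm h fun x hx => ?_
  obtain ⟨⟨y, hy⟩, ⟨u, rfl⟩, hr⟩ := hW
  obtain ⟨_, ⟨u', rfl⟩, hr'⟩ := hW'
  have he : vectorSpan ℝ (fc V u) = vectorSpan ℝ (fc V u') :=
    Submodule.eq_of_le_of_finrank_eq (vectorSpan_mono ℝ h) (hr.trans hr'.symm)
  have hp := fc_perp V u
  rw [he] at hp
  exact mem_fc_of_eq hy hx.1 (inner_eq_of_perp hp hx (h hy))

lemma exists_spanning_points {d i : ℕ} {W : Set (E d)} (hW : W.Finite) (hne : W.Nonempty)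
    (hr : Module.finrank ℝ (vectorSpan ℝ W) = i) :
    ∃ v : Fin (i + 1) → E d, (∀ j, v j ∈ W) ∧ W ⊆ affineSpan ℝ (Set.range v) := by
  obtain ⟨t, htW, hspan, hind⟩ := exists_affineIndependent ℝ (E d) W
  have htf : t.Finite := hW.subset htW
  have : Fintype t := htf.fintype
  have hvs : vectorSpan ℝ t = vectorSpan ℝ W := by
    rw [← direction_affineSpan, hspan, direction_affineSpan]
  have htne : t.Nonempty := by
    rw [← affineSpan_nonempty (k := ℝ), hspan, affineSpan_nonempty]; exact hne
  have hcard : Fintype.card t = i + 1 := by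
    have hpos : 0 < Fintype.card t := Fintype.card_pos_iff.2 htne.to_subtype
    have := hind.finrank_vectorSpan (n := Fintype.card t - 1)
      (by change Fintype.card t = _; omega)
    rw [Subtype.range_coe, hvs, hr] at this
    omega
  let e := (Fintype.equivFinOfCardEq hcard).symm
  refine ⟨fun j => (e j : E d), fun j => htW (e j).2, ?_⟩
  have : Set.range (fun j => (e j : E d)) = t := by
    ext x; constructor
    · rintro ⟨j, rfl⟩; exact (e j).2
    · intro hx; exact ⟨e.symm ⟨x, hx⟩, by simp⟩
  rw [this, hspan]
  exact subset_affineSpan ℝ W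

lemma zero_not_mem_face {d i : ℕ} (hi : i < d) {V : Set (E d)} {m : ℝ} (hm : 0 < m)
    (h0 : (0 : E d) ∈ V)
    (h : ∀ j, EuclideanSpace.single j m ∈ V ∧ EuclideanSpace.single j (-m) ∈ V)
    {u : E d} (hr : Module.finrank ℝ (vectorSpan ℝ (fc V u)) = i) : (0 : E d) ∉ fc V u := by
  intro hz
  have hu : u = 0 := by
    ext j
    have h1 := hz.2 _ (h j).1
    have h2 := hz.2 _ (h j).2
    rw [inner_single_E, inner_zero_right] at h1 h2
    simp only [PiLp.zero_apply]
    nlinarith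
  subst hu
  have hV : fc V (0 : E d) = V := by ext x; simp [fc]
  rw [hV] at hr
  have htop : vectorSpan ℝ V = ⊤ := by
    rw [eq_top_iff, ← (EuclideanSpace.basisFun (Fin d) ℝ).toBasis.span_eq, Submodule.span_le]
    rintro _ ⟨j, rfl⟩
    have h1 := vsub_mem_vectorSpan ℝ (h j).1 h0
    rw [vsub_eq_sub, sub_zero] at h1
    have h2 := Submodule.smul_mem _ m⁻¹ h1
    have e : EuclideanSpace.single j (1:ℝ) = m⁻¹ • EuclideanSpace.single j m := by
      ext k
      by_cases hk : k = j <;> simp [hk, hm.ne']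
    rw [← e] at h2
    simpa using h2
  rw [htop, finrank_top, finrank_euclideanSpace_fin] at hr
  omega

lemma faceSet_card_le {d i : ℕ} (hi : i < d) {V : Set (E d)} (hV : V.Finite)
    (hVint : V ⊆ intPoints d) {r m T : ℝ} (hr : ∀ x ∈ V, ‖x‖ ≤ r) (hm : 0 < m) (hT : 0 < T)
    (h0 : (0 : E d) ∈ V)
    (h : ∀ j, EuclideanSpace.single j m ∈ V ∧ EuclideanSpace.single j (-m) ∈ V) :
    ((faceSet V i).ncard : ℝ) ≤
      (2 * (T / m) + 1) ^ d + (2 * ((2 * (i + 1) : ℕ) * r) * d) ^ d / T := by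
  classical
  have hd : 0 < d := by omega
  let X : Set (E d) := {x | ∃ a : (Fin 2 × Fin (i + 1)) → E d, (∀ j, a j ∈ V) ∧
    (∀ W ∈ faceSet V i, ∃ j, a j ∉ W) ∧ x = ∑ j, a j}
  have hr0 : 0 ≤ r := by simpa using hr 0 h0
  have hXf : X.Finite := by
    have : {a : (Fin 2 × Fin (i + 1)) → E d | ∀ j, a j ∈ V}.Finite := Set.Finite.pi' fun _ => hV
    refine (this.image fun a => ∑ j, a j).subset ?_
    rintro x ⟨a, ha, _, rfl⟩
    exact ⟨a, ha, rfl⟩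
  have hXint : X ⊆ intPoints d := by
    rintro x ⟨a, ha, _, rfl⟩ k
    choose z hz using fun j => hVint (ha j) k
    refine ⟨∑ j, z j, ?_⟩
    simp [hz]
  have hXR : ∀ x ∈ X, ‖x‖ ≤ (2 * (i + 1) : ℕ) * r := by
    rintro x ⟨a, ha, _, rfl⟩
    calc ‖∑ j, a j‖ ≤ ∑ j, ‖a j‖ := norm_sum_le _ _
      _ ≤ ∑ _j : (Fin 2 × Fin (i + 1)), r := Finset.sum_le_sum fun j _ => hr _ (ha j)
      _ = _ := by simp
  have hz : ∀ W ∈ faceSet V i, (0 : E d) ∉ W := by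
    rintro W ⟨_, ⟨u, rfl⟩, hW⟩
    exact zero_not_mem_face hi hm h0 h hW
  have hXof : ∀ x ∈ V, x ∈ X := by
    intro x hx
    refine ⟨fun j => if j = (0, 0) then x else 0, ?_, ?_, ?_⟩
    · intro j; dsimp only; split_ifs
      · exact hx
      · exact h0
    · intro W hW
      exact ⟨(1, 0), by simpa using hz W hW⟩
    · simp
  have hXm : ∀ j, EuclideanSpace.single j m ∈ X ∧ EuclideanSpace.single j (-m) ∈ X :=
    fun j => ⟨hXof _ (h j).1, hXof _ (h j).2⟩
  have hbdd := polar_bounded hm hXm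
  have hpol := polar_coord_bound hm hXm
  have hUf : ∀ S : Finset (E d), (∀ u ∈ S, u ∈ facetNormals X) → (S.card : ℝ) ≤
      (2 * (T / m) + 1) ^ d + (2 * ((2 * (i + 1) : ℕ) * r) * d) ^ d / T := fun S hS =>
    facetNormals_card hd hXint hm hT (by positivity) hXR hpol S hS
  have hUfin : (facetNormals X).Finite := by
    by_contra hinf
    set B := (2 * (T / m) + 1) ^ d + (2 * ((2 * (i + 1) : ℕ) * r) * d) ^ d / T
    obtain ⟨S, hS, hc⟩ := Set.Infinite.exists_subset_card_eq hinf (⌊B⌋₊ + 1)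
    have h1 := hUf S (fun u hu => hS hu)
    rw [hc] at h1
    have := Nat.lt_floor_add_one B
    push_cast at h1
    linarith
  -- the spanning points of a face
  have hv : ∀ W : Set (E d), ∃ v : Fin (i + 1) → E d, W ∈ faceSet V i →
      (∀ j, v j ∈ W) ∧ W ⊆ affineSpan ℝ (Set.range v) := by
    intro W
    by_cases hW : W ∈ faceSet V i
    · obtain ⟨u, hu⟩ := hW.2.1
      obtain ⟨v, hv⟩ := exists_spanning_points (hV.subset (hu ▸ fc_subset V u)) hW.1 hW.2.2
      exact ⟨v, fun _ => hv⟩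
    · exact ⟨0, fun h => absurd h hW⟩
  choose v hv using hv
  have hsubV : ∀ W ∈ faceSet V i, W ⊆ V := by
    rintro W ⟨_, ⟨u, rfl⟩, _⟩; exact fc_subset V u
  have hid : ∀ W ∈ faceSet V i, ∀ W' ∈ faceSet V i, (∀ j, v W j ∈ W') → W = W' := by
    intro W hW W' hW' hj
    refine faceSet_eq_of_subset hW hW' fun x hx => ?_
    obtain ⟨_, ⟨u', rfl⟩, hr'⟩ := id hW'
    have hxs := (hv W hW).2 hx
    have hle : affineSpan ℝ (Set.range (v W)) ≤ affineSpan ℝ (fc V u') :=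
      affineSpan_mono ℝ (by rintro _ ⟨j, rfl⟩; exact hj j)
    have h1 : x -ᵥ v W 0 ∈ vectorSpan ℝ (fc V u') := by
      rw [← direction_affineSpan]
      exact AffineSubspace.vsub_mem_direction (hle hxs) (subset_affineSpan ℝ _ (hj 0))
    have h2 := (Submodule.mem_orthogonal' _ _).1 (fc_perp V u') _ h1
    rw [vsub_eq_sub, inner_sub_right] at h2
    exact mem_fc_of_eq (hj 0) (hsubV W hW hx) (by linarith)
  let y : Set (E d) → E d := fun W => ∑ p : (Fin 2 × Fin (i + 1)), v W p.2
  have hsep : ∀ W : Set (E d), ∃ u : E d, W ∈ faceSet V i → u ∈ facetNormals X ∧ 1 < inner ℝ u (y W) := by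
    intro W
    by_cases hW : W ∈ faceSet V i
    swap
    · exact ⟨0, fun h => absurd h hW⟩
    obtain ⟨_, ⟨l, hl⟩, hrank⟩ := id hW
    have hlt : ∀ x ∈ X, inner ℝ l x < inner ℝ l (y W) := by
      rintro x ⟨a, ha, haW, rfl⟩
      obtain ⟨j0, hj0⟩ := haW W hW
      simp only [y, inner_sum]
      have hvm : ∀ j, v W j ∈ fc V l := fun j => hl ▸ (hv W hW).1 j
      refine Finset.sum_lt_sum (fun j _ => (hvm j.2).2 _ (ha j)) ⟨j0, Finset.mem_univ _, ?_⟩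
      refine lt_of_le_of_ne ((hvm j0.2).2 _ (ha j0)) fun he => hj0 ?_
      rw [hl]; exact mem_fc_of_eq (hvm j0.2) (ha j0) he
    obtain ⟨x0, hx0, hmax⟩ := Set.exists_max_image X (fun x => inner ℝ l x) hXf ⟨_, hXof 0 h0⟩
    have hl0 : l ≠ 0 := by
      rintro rfl
      have := hlt x0 hx0
      simp at this
    have hpos : 0 < inner ℝ l x0 := by
      by_contra hc
      have hc := not_lt.1 hc
      refine hl0 ?_
      ext j
      have h1 := (hmax _ (hXm j).1).trans hc
      have h2 := (hmax _ (hXm j).2).trans hc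
      rw [inner_single_E] at h1 h2
      simp only [PiLp.zero_apply]
      nlinarith
    have hw : (inner ℝ l x0)⁻¹ • l ∈ polarSet X := by
      intro x hx
      rw [real_inner_smul_left, inv_mul_le_iff₀ hpos, mul_one]
      exact hmax x hx
    obtain ⟨u, hu, hle⟩ := exists_facetNormal hXf hbdd hw (y W)
    refine ⟨u, fun _ => ⟨hu, lt_of_lt_of_le ?_ hle⟩⟩
    rw [real_inner_smul_left, lt_inv_mul_iff₀ hpos, mul_one]
    exact hlt x0 hx0
  choose n hn using hsep
  have hinj : Set.InjOn n (faceSet V i) := by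
    intro W hW W' hW' he
    by_contra hne
    obtain ⟨hu, h1⟩ := hn W hW
    obtain ⟨_, h2⟩ := hn W' hW'
    rw [← he] at h2
    have hmid : ∑ p : (Fin 2 × Fin (i + 1)), (if p.1 = 0 then v W p.2 else v W' p.2) ∈ X := by
      refine ⟨fun p => if p.1 = 0 then v W p.2 else v W' p.2, ?_, ?_, rfl⟩
      · intro p; dsimp only; split_ifs
        · exact hsubV W hW ((hv W hW).1 _)
        · exact hsubV W' hW' ((hv W' hW').1 _)
      · intro F hF
        by_contra! hall
        have e1 := hid W hW F hF fun j => by simpa using hall (0, j)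
        have e2 := hid W' hW' F hF fun j => by simpa using hall (1, j)
        exact hne (e1.trans e2.symm)
    have h3 := hu.1 _ hmid
    simp only [y, Fintype.sum_prod_type, Fin.sum_univ_two, inner_add_right] at h1 h2 h3
    simp only [if_true, one_ne_zero, if_false] at h3
    linarith
  have hle : (faceSet V i).ncard ≤ (facetNormals X).ncard :=
    Set.ncard_le_ncard_of_injOn n (fun W hW => (hn W hW).1) hinj hUfin
  calc ((faceSet V i).ncard : ℝ) ≤ ((facetNormals X).ncard : ℝ) := by exact_mod_cast hle
    _ = (hUfin.toFinset.card : ℝ) := by rw [Set.ncard_eq_toFinset_card _ hUfin]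
    _ ≤ _ := hUf _ fun u hu => hUfin.mem_toFinset.1 hu

end Upper

section Flatness
variable {H : Type*} [NormedAddCommGroup H] [InnerProductSpace ℝ H]

/-- Projection along `b`. -/
def prj (b : H) : H →ₗ[ℝ] H :=
  LinearMap.id - ((‖b‖ ^ 2)⁻¹ • (innerSL ℝ b).toLinearMap).smulRight b

lemma prj_apply (b x : H) : prj b x = x - (inner ℝ b x / ‖b‖ ^ 2) • b := by
  simp [prj, div_eq_inv_mul]

lemma prj_perp {b : H} (hb : b ≠ 0) (x : H) : inner ℝ b (prj b x) = 0 := by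
  have : ‖b‖ ^ 2 ≠ 0 := by positivity
  rw [prj_apply, inner_sub_right, inner_smul_right, real_inner_self_eq_norm_sq]
  field_simp
  ring

lemma prj_round (b x : H) : ‖x - (round (inner ℝ b x / ‖b‖ ^ 2)) • b‖ ≤ ‖prj b x‖ + ‖b‖ / 2 := by
  set c := inner ℝ b x / ‖b‖ ^ 2 with hc
  have e : x - (round c) • b = prj b x + (c - round c) • b := by
    rw [prj_apply, ← hc, sub_smul, Int.cast_smul_eq_zsmul]; abel
  rw [e]
  refine (norm_add_le _ _).trans ?_
  rw [norm_smul, Real.norm_eq_abs]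
  have := mul_le_mul_of_nonneg_right (abs_sub_round c) (norm_nonneg b)
  linarith

lemma flatness (n : ℕ) : ∃ K : ℝ, 0 < K ∧ ∀ L : AddSubgroup H,
    (∀ R : ℝ, {x | x ∈ L ∧ ‖x‖ ≤ R}.Finite) → (∃ x ∈ L, x ≠ 0) →
    FiniteDimensional ℝ (Submodule.span ℝ (L : Set H)) →
    Module.finrank ℝ (Submodule.span ℝ (L : Set H)) ≤ n →
    ∃ φ : H, φ ≠ 0 ∧ φ ∈ Submodule.span ℝ (L : Set H) ∧ (∀ y ∈ L, ∃ z : ℤ, inner ℝ φ y = z) ∧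
      (∃ b ∈ L, b ≠ 0 ∧ ‖b‖ * ‖φ‖ ≤ K) ∧
      (∀ x ∈ Submodule.span ℝ (L : Set H), ∃ y ∈ L, ‖x - y‖ * ‖φ‖ ≤ K) := by
  induction n with
  | zero =>
    refine ⟨1, one_pos, ?_⟩
    rintro L _ ⟨x, hx, hx0⟩ hfd hr
    exfalso
    have h1 := Submodule.finrank_eq_zero.1 (Nat.le_zero.1 hr)
    have h2 : x ∈ Submodule.span ℝ (L : Set H) := Submodule.subset_span hx
    rw [h1] at h2
    exact hx0 (by simpa using h2)
  | succ n ih =>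
    obtain ⟨K, hK, ih⟩ := ih
    refine ⟨2 * K + 1, by positivity, ?_⟩
    rintro L hfin ⟨x1, hx1, hx10⟩ hfd hr
    -- a shortest vector
    have hf1 : {x | x ∈ L ∧ ‖x‖ ≤ ‖x1‖ ∧ x ≠ 0}.Finite :=
      (hfin ‖x1‖).subset fun x hx => ⟨hx.1, hx.2.1⟩
    obtain ⟨b, ⟨hbL, hb1, hb0⟩, hbmin⟩ := Set.exists_min_image _ (fun x => ‖x‖) hf1 ⟨x1, hx1, le_rfl, hx10⟩
    have hmin : ∀ y ∈ L, y ≠ 0 → ‖b‖ ≤ ‖y‖ := by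
      intro y hy hy0
      rcases le_total ‖y‖ ‖x1‖ with h | h
      · exact hbmin y ⟨hy, h, hy0⟩
      · exact hb1.trans h
    have hbpos : 0 < ‖b‖ := norm_pos_iff.2 hb0
    have hmem : ∀ y ∈ L, ∀ k : ℤ, y - k • b ∈ L := fun y hy k => sub_mem hy (zsmul_mem hbL k)
    have hbs : b ∈ Submodule.span ℝ (L : Set H) := Submodule.subset_span hbL
    by_cases hcase : ∀ y ∈ L, prj b y = 0
    · have hspan : ∀ x ∈ Submodule.span ℝ (L : Set H), prj b x = 0 := by
        intro x hx
        have : Submodule.span ℝ (L : Set H) ≤ LinearMap.ker (prj b) :=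
          Submodule.span_le.2 fun y hy => hcase y hy
        exact this hx
      have hnφ : ‖(‖b‖ ^ 2)⁻¹ • b‖ = ‖b‖⁻¹ := by
        rw [norm_smul, norm_inv, norm_pow, norm_norm]
        field_simp
      refine ⟨(‖b‖ ^ 2)⁻¹ • b, ?_, Submodule.smul_mem _ _ hbs, ?_, ⟨b, hbL, hb0, ?_⟩, ?_⟩
      · exact smul_ne_zero (by positivity) hb0
      · intro y hy
        have h1 := prj_round b y
        rw [hcase y hy, norm_zero, zero_add] at h1
        set k := round (inner ℝ b y / ‖b‖ ^ 2) with hk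
        have h2 : y - k • b = 0 := by
          by_contra h
          have := hmin _ (hmem y hy k) h
          linarith
        refine ⟨k, ?_⟩
        rw [sub_eq_zero.1 h2, ← Int.cast_smul_eq_zsmul ℝ, real_inner_smul_left, inner_smul_right,
          real_inner_self_eq_norm_sq]
        field_simp
      · rw [hnφ, mul_inv_cancel₀ hbpos.ne']; linarith
      · intro x hx
        refine ⟨_, zsmul_mem hbL (round (inner ℝ b x / ‖b‖ ^ 2)), ?_⟩
        have h1 := prj_round b x
        rw [hspan x hx, norm_zero, zero_add] at h1
        rw [hnφ]
        calc _ ≤ ‖b‖ / 2 * ‖b‖⁻¹ := by gcongr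
          _ = 1 / 2 := by field_simp
          _ ≤ _ := by linarith
    · push Not at hcase
      obtain ⟨y0, hy0, hpy0⟩ := hcase
      let L' : AddSubgroup H := L.map (prj b).toAddMonoidHom
      have hL' : ∀ x, x ∈ L' ↔ ∃ y ∈ L, prj b y = x := fun x => by
        simp [L', AddSubgroup.mem_map]
      have hle : Submodule.span ℝ (L' : Set H) ≤ Submodule.span ℝ (L : Set H) := by
        rw [Submodule.span_le]
        intro x hx
        obtain ⟨y, hy, rfl⟩ := (hL' x).1 hx
        rw [prj_apply]
        exact sub_mem (Submodule.subset_span hy) (Submodule.smul_mem _ _ hbs)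
      have hperp : ∀ x ∈ Submodule.span ℝ (L' : Set H), inner ℝ b x = 0 := by
        intro x hx
        have : Submodule.span ℝ (L' : Set H) ≤ LinearMap.ker (innerSL ℝ b).toLinearMap := by
          rw [Submodule.span_le]
          intro x hx
          obtain ⟨y, hy, rfl⟩ := (hL' x).1 hx
          simpa using prj_perp hb0 y
        simpa using this hx
      have hlt : Submodule.span ℝ (L' : Set H) < Submodule.span ℝ (L : Set H) := by
        refine lt_of_le_of_ne hle fun he => ?_
        have := hperp b (he ▸ hbs)
        exact hb0 (inner_self_eq_zero.1 this)
      have hfd' : FiniteDimensional ℝ (Submodule.span ℝ (L' : Set H)) :=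
        Submodule.finiteDimensional_of_le hle
      have hr' : Module.finrank ℝ (Submodule.span ℝ (L' : Set H)) ≤ n := by
        have := Submodule.finrank_lt_finrank_of_lt hlt
        omega
      have hpr : ∀ (x : H) (k : ℤ), prj b (x - k • b) = prj b x := by
        intro x k
        have : prj b b = 0 := by
          rw [prj_apply, real_inner_self_eq_norm_sq, div_self (by positivity), one_smul, sub_self]
        rw [map_sub, map_zsmul, this, smul_zero, sub_zero]
      have hfin' : ∀ R : ℝ, {x | x ∈ L' ∧ ‖x‖ ≤ R}.Finite := by
        intro R
        refine ((hfin (R + ‖b‖ / 2)).image (prj b)).subset ?_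
        rintro x ⟨hx, hxR⟩
        obtain ⟨y, hy, rfl⟩ := (hL' x).1 hx
        refine ⟨y - round (inner ℝ b y / ‖b‖ ^ 2) • b, ⟨hmem y hy _, ?_⟩, hpr _ _⟩
        exact (prj_round b y).trans (by linarith)
      obtain ⟨φ, hφ0, hφs, hφi, ⟨b', hb'L, hb'0, hb'⟩, hcov⟩ :=
        ih L' hfin' ⟨_, (hL' _).2 ⟨y0, hy0, rfl⟩, hpy0⟩ hfd' hr'
      have hφb : inner ℝ φ b = 0 := by rw [real_inner_comm]; exact hperp φ hφs
      have hb2 : ‖b‖ ≤ 2 * ‖b'‖ := by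
        obtain ⟨y, hy, rfl⟩ := (hL' b').1 hb'L
        have h1 := prj_round b y
        have h2 := hmin _ (hmem y hy (round (inner ℝ b y / ‖b‖ ^ 2))) (fun h => hb'0 (by
          rw [← hpr y (round (inner ℝ b y / ‖b‖ ^ 2)), h, map_zero]))
        linarith
      have hbφ : ‖b‖ * ‖φ‖ ≤ 2 * K := by
        have := mul_le_mul_of_nonneg_right hb2 (norm_nonneg φ)
        linarith
      refine ⟨φ, hφ0, hle hφs, ?_, ⟨b, hbL, hb0, by linarith⟩, ?_⟩
      · intro y hy
        obtain ⟨z, hz⟩ := hφi (prj b y) ((hL' _).2 ⟨y, hy, rfl⟩)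
        refine ⟨z, ?_⟩
        rw [← hz, prj_apply, inner_sub_right, inner_smul_right, hφb, mul_zero, sub_zero]
      · intro x hx
        have hpx : prj b x ∈ Submodule.span ℝ (L' : Set H) := by
          have : Submodule.span ℝ (L : Set H) ≤ (Submodule.span ℝ (L' : Set H)).comap (prj b) := by
            rw [Submodule.span_le]
            intro y hy
            exact Submodule.subset_span ((hL' _).2 ⟨y, hy, rfl⟩)
          exact this hx
        obtain ⟨y1, hy1, h1⟩ := hcov _ hpx
        obtain ⟨y, hy, rfl⟩ := (hL' y1).1 hy1
        have h2 := prj_round b (x - y)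
        set k := round (inner ℝ b (x - y) / ‖b‖ ^ 2)
        refine ⟨y - (-k) • b, hmem y hy _, ?_⟩
        have e : x - (y - (-k) • b) = x - y - k • b := by rw [neg_smul]; abel
        rw [e]
        rw [map_sub] at h2
        have := mul_le_mul_of_nonneg_right h2 (norm_nonneg φ)
        rw [add_mul] at this
        linarith

end Flatness

section Cap

lemma intPoints_ball_finite (d : ℕ) (R : ℝ) : {x : E d | x ∈ intPoints d ∧ ‖x‖ ≤ R}.Finite := by
  classical
  have hf : (Set.pi Set.univ fun _ : Fin d => Set.Icc (-⌈R⌉) ⌈R⌉).Finite :=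
    Set.Finite.pi fun _ => Set.finite_Icc _ _
  refine (hf.image fun z : Fin d → ℤ => (WithLp.toLp 2 fun k => (z k : ℝ) : E d)).subset ?_
  rintro x ⟨hx, hR⟩
  choose z hz using hx
  refine ⟨z, fun k _ => ?_, ?_⟩
  · rw [Set.mem_Icc, ← abs_le]
    have h1 : |(z k : ℝ)| ≤ R := by
      rw [← hz k, ← Real.norm_eq_abs]
      exact (PiLp.norm_apply_le x k).trans hR
    have h2 : |(z k : ℝ)| ≤ (⌈R⌉ : ℝ) := h1.trans (Int.le_ceil R)
    exact_mod_cast h2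
  · ext k; simp [hz]

/-- `ℤ^d` as an additive subgroup. -/
def intGroup (d : ℕ) : AddSubgroup (E d) where
  carrier := intPoints d
  zero_mem' := fun _ => ⟨0, by simp⟩
  add_mem' := fun {a b} ha hb k => by
    obtain ⟨x, hx⟩ := ha k
    obtain ⟨y, hy⟩ := hb k
    exact ⟨x + y, by simp [hx, hy]⟩
  neg_mem' := fun {a} ha k => by
    obtain ⟨x, hx⟩ := ha k
    exact ⟨-x, by simp [hx]⟩

variable {H : Type*} [NormedAddCommGroup H] [InnerProductSpace ℝ H]

/-- Scaling by `a` along `ω` and by `b` orthogonally. -/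
def scl (ω : H) (a b : ℝ) : H →ₗ[ℝ] H :=
  b • LinearMap.id + ((a - b) • (innerSL ℝ ω).toLinearMap).smulRight ω

lemma scl_apply (ω : H) (a b : ℝ) (x : H) : scl ω a b x = b • x + ((a - b) * inner ℝ ω x) • ω := by
  simp [scl]

lemma scl_inner {ω : H} (hω : ‖ω‖ = 1) (a b : ℝ) (x : H) : inner ℝ ω (scl ω a b x) = a * inner ℝ ω x := by
  rw [scl_apply, inner_add_right, inner_smul_right, inner_smul_right, real_inner_self_eq_norm_sq, hω]
  ring

lemma scl_perp {ω : H} (hω : ‖ω‖ = 1) (a b : ℝ) (x : H) :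
    scl ω a b x - inner ℝ ω (scl ω a b x) • ω = b • (x - inner ℝ ω x • ω) := by
  rw [scl_inner hω, scl_apply]
  module

lemma scl_scl {ω : H} (hω : ‖ω‖ = 1) (a b a' b' : ℝ) (x : H) :
    scl ω a b (scl ω a' b' x) = scl ω (a * a') (b * b') x := by
  rw [scl_apply ω a b, scl_inner hω, scl_apply, scl_apply]
  module

lemma scl_one (ω : H) (x : H) : scl ω 1 1 x = x := by
  rw [scl_apply]; simp

lemma scl_symm (ω : H) (a b : ℝ) (x y : H) : inner ℝ (scl ω a b x) y = inner ℝ x (scl ω a b y) := by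
  rw [scl_apply, scl_apply, inner_add_left, inner_add_right, inner_smul_right, inner_smul_right,
    real_inner_smul_left, real_inner_smul_left, real_inner_comm x ω]
  ring

lemma norm_sq_decomp {ω : H} (hω : ‖ω‖ = 1) (x : H) :
    ‖x‖ ^ 2 = (inner ℝ ω x) ^ 2 + ‖x - inner ℝ ω x • ω‖ ^ 2 := by
  rw [norm_sub_sq_real, inner_smul_right, norm_smul, hω, real_inner_comm, Real.norm_eq_abs, mul_one,
    sq_abs]
  ring

lemma abs_inner_unit_le {ω : H} (hω : ‖ω‖ = 1) (x : H) : |inner ℝ ω x| ≤ ‖x‖ := by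
  have := abs_real_inner_le_norm ω x
  rwa [hω, one_mul] at this

lemma norm_perp_le {ω : H} (hω : ‖ω‖ = 1) (x : H) : ‖x - inner ℝ ω x • ω‖ ≤ ‖x‖ := by
  have := norm_sq_decomp hω x
  refine (sq_le_sq₀ (norm_nonneg _) (norm_nonneg _)).1 ?_
  nlinarith [sq_nonneg (inner ℝ ω x)]

lemma cap_or_dual (d : ℕ) (hd : 0 < d) : ∃ K : ℝ, 0 < K ∧ ∀ ω : E d, ‖ω‖ = 1 → ∀ r q : ℝ, 0 < r → 0 < q → q ≤ 1 →
    (∃ x ∈ intPoints d, ‖x‖ ≤ r ∧ r - q ^ 2 * r ≤ inner ℝ ω x) ∨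
    (∃ p ∈ intPoints d, p ≠ 0 ∧ |inner ℝ ω p| ≤ 4 * K / (q ^ 2 * r) ∧
      ‖p - inner ℝ ω p • ω‖ ≤ 2 * K / (q * r)) := by
  obtain ⟨K, hK, hflat⟩ := flatness (H := E d) d
  refine ⟨K, hK, ?_⟩
  intro ω hω r q hr hq hq1
  set α := 4 / (q ^ 2 * r) with hα
  set β := 2 / (q * r) with hβ
  have hα0 : 0 < α := by positivity
  have hβ0 : 0 < β := by positivity
  let A := scl ω α β
  let A' := scl ω α⁻¹ β⁻¹
  have hAA' : ∀ x, A' (A x) = x := fun x => by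
    simp only [A, A']
    rw [scl_scl hω, inv_mul_cancel₀ hα0.ne', inv_mul_cancel₀ hβ0.ne', scl_one]
  have hA'A : ∀ x, A (A' x) = x := fun x => by
    simp only [A, A']
    rw [scl_scl hω, mul_inv_cancel₀ hα0.ne', mul_inv_cancel₀ hβ0.ne', scl_one]
  let L : AddSubgroup (E d) := (intGroup d).map A.toAddMonoidHom
  have hL : ∀ x, x ∈ L ↔ ∃ y ∈ intPoints d, A y = x := fun x => by
    simp only [L, AddSubgroup.mem_map]; rfl
  have hsingle : ∀ j : Fin d, EuclideanSpace.single j (1:ℝ) ∈ intPoints d := by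
    intro j k
    by_cases h : k = j
    · exact ⟨1, by simp [h]⟩
    · exact ⟨0, by simp [h]⟩
  have hspan : Submodule.span ℝ (L : Set (E d)) = ⊤ := by
    rw [eq_top_iff]
    rintro x -
    rw [← hA'A x]
    have : (⊤ : Submodule ℝ (E d)) ≤ (Submodule.span ℝ (L : Set (E d))).comap A := by
      rw [← (EuclideanSpace.basisFun (Fin d) ℝ).toBasis.span_eq, Submodule.span_le]
      rintro _ ⟨j, rfl⟩
      refine Submodule.subset_span ((hL _).2 ⟨EuclideanSpace.single j 1, hsingle j, ?_⟩)
      simp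
    exact this (Submodule.mem_top)
  have hfin : ∀ R : ℝ, {x | x ∈ L ∧ ‖x‖ ≤ R}.Finite := by
    intro R
    refine ((intPoints_ball_finite d (‖A'.toContinuousLinearMap‖ * R)).image A).subset ?_
    rintro x ⟨hx, hxR⟩
    obtain ⟨y, hy, rfl⟩ := (hL x).1 hx
    refine ⟨y, ⟨hy, ?_⟩, rfl⟩
    have := A'.toContinuousLinearMap.le_opNorm (A y)
    rw [LinearMap.coe_toContinuousLinearMap', hAA'] at this
    exact this.trans (by gcongr)
  obtain ⟨φ, hφ0, -, hφi, -, hcov⟩ := hflat L hfin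
    ⟨A (EuclideanSpace.single ⟨0, hd⟩ 1), (hL _).2 ⟨_, hsingle _, rfl⟩, fun h => by
      have h1 := hAA' (EuclideanSpace.single ⟨0, hd⟩ 1)
      rw [h, map_zero] at h1
      have h2 := congrArg norm h1
      simp at h2⟩ inferInstance
    ((Submodule.finrank_le _).trans (by simp))
  rcases le_or_gt K ‖φ‖ with hKφ | hKφ
  · left
    set c : E d := (r - q ^ 2 * r / 2) • ω with hc
    obtain ⟨y, hy, hy1⟩ := hcov (A c) (by rw [hspan]; trivial)
    obtain ⟨x, hx, rfl⟩ := (hL y).1 hy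
    have hn : ‖A (x - c)‖ ≤ 1 := by
      rw [map_sub, norm_sub_rev]
      by_contra h
      have h := not_le.1 h
      have hφp : 0 < ‖φ‖ := norm_pos_iff.2 hφ0
      have : ‖φ‖ < ‖A c - A x‖ * ‖φ‖ := by nlinarith
      linarith
    have hωc : inner ℝ ω c = r - q ^ 2 * r / 2 := by
      rw [hc, inner_smul_right, real_inner_self_eq_norm_sq, hω]; ring
    have h1 := (abs_inner_unit_le hω (A (x - c))).trans hn
    have h2 := (norm_perp_le hω (A (x - c))).trans hn
    simp only [A] at h1 h2
    rw [scl_perp hω, norm_smul, Real.norm_of_nonneg hβ0.le] at h2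
    rw [scl_inner hω, abs_mul, abs_of_pos hα0, inner_sub_right, hωc] at h1
    have e : x - c - inner ℝ ω (x - c) • ω = x - inner ℝ ω x • ω := by
      rw [inner_sub_right, hωc, hc]; module
    rw [e, hβ, div_mul_eq_mul_div, div_le_one (by positivity)] at h2
    rw [hα, div_mul_eq_mul_div, div_le_one (by positivity)] at h1
    have h3 : |inner ℝ ω x - (r - q ^ 2 * r / 2)| ≤ q ^ 2 * r / 4 := by linarith
    rw [abs_le] at h3
    have hq2 : q ^ 2 ≤ 1 := by nlinarith
    have hq2r : q ^ 2 * r ≤ r := by nlinarith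
    have hq2p : 0 < q ^ 2 * r := by positivity
    refine ⟨x, hx, ?_, by linarith⟩
    have h4 := norm_sq_decomp hω x
    refine (sq_le_sq₀ (norm_nonneg _) hr.le).1 ?_
    rw [h4]
    have h5 : (inner ℝ ω x) ^ 2 ≤ (r - q ^ 2 * r / 4) ^ 2 := by
      apply pow_le_pow_left₀ <;> linarith
    have h6 : ‖x - inner ℝ ω x • ω‖ ^ 2 ≤ (q * r / 2) ^ 2 := by
      apply pow_le_pow_left₀ (norm_nonneg _); linarith
    have h7 : q ^ 2 * r * (q ^ 2 * r) ≤ q ^ 2 * r * r := mul_le_mul_of_nonneg_left hq2r hq2p.le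
    nlinarith
  · right
    refine ⟨A φ, ?_, ?_, ?_, ?_⟩
    · intro k
      obtain ⟨z, hz⟩ := hφi (A (EuclideanSpace.single k 1)) ((hL _).2 ⟨_, hsingle k, rfl⟩)
      refine ⟨z, ?_⟩
      simp only [A] at hz ⊢
      rw [← scl_symm, inner_single_E, one_mul] at hz
      exact hz
    · intro h
      have h1 := hAA' φ
      rw [h, map_zero] at h1
      exact hφ0 h1.symm
    · simp only [A]
      rw [scl_inner hω, abs_mul, abs_of_pos hα0]
      calc α * |inner ℝ ω φ| ≤ α * K := by
            gcongr; exact (abs_inner_unit_le hω φ).trans hKφ.le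
        _ = _ := by rw [hα]; ring
    · simp only [A]
      rw [scl_perp hω, norm_smul, Real.norm_of_nonneg hβ0.le]
      calc β * ‖φ - inner ℝ ω φ • ω‖ ≤ β * K := by
            gcongr; exact (norm_perp_le hω φ).trans hKφ.le
        _ = _ := by rw [hβ]; ring

end Cap

section Grid

lemma Icc_card_le (a b : ℝ) (h : a ≤ b) : ((Finset.Icc ⌈a⌉ ⌊b⌋).card : ℝ) ≤ b - a + 1 := by
  rw [Int.card_Icc]
  have h1 := Int.floor_le b
  have h2 := Int.le_ceil a
  have h3 : (((⌊b⌋ + 1 - ⌈a⌉).toNat : ℤ) : ℝ) = ((max (⌊b⌋ + 1 - ⌈a⌉) 0 : ℤ) : ℝ) := by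
    rw [Int.toNat_eq_max]
  rw [Int.cast_natCast] at h3
  rw [h3, Int.cast_max]
  apply max_le
  · push_cast; linarith
  · push_cast; linarith

lemma bad_count (n M T : ℕ) (e : ℝ) (he : 0 ≤ e) :
    ∃ B : Finset (Fin n → ℤ), (∀ z : Fin n → ℤ, (∃ m : ℕ, 1 ≤ m ∧ m ≤ T ∧ ∀ j, ∃ q : ℤ, |q| ≤ m ∧
      |(m : ℝ) * z j - M * q| ≤ 2 * M * e) → z ∈ B) ∧
      (B.card : ℝ) ≤ T * (12 * M * e + 3 * T) ^ n := by
  classical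
  let A : ℕ → Finset ℤ := fun m => (Finset.Icc (-(m : ℤ)) m).biUnion fun q =>
    Finset.Icc ⌈((M : ℝ) * q - 2 * M * e) / m⌉ ⌊((M : ℝ) * q + 2 * M * e) / m⌋
  have hMe : 0 ≤ (M : ℝ) * e := by positivity
  have hA : ∀ m ∈ Finset.Icc 1 T, ((A m).card : ℝ) ≤ 12 * M * e + 3 * T := by
    intro m hm
    rw [Finset.mem_Icc] at hm
    have hm1 : (1 : ℝ) ≤ m := by exact_mod_cast hm.1
    have hmT : (m : ℝ) ≤ T := by exact_mod_cast hm.2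
    have h1 : ((A m).card : ℝ) ≤ ∑ q ∈ Finset.Icc (-(m : ℤ)) m, (4 * M * e / m + 1) := by
      refine le_trans (Nat.cast_le.2 Finset.card_biUnion_le) ?_
      push_cast
      refine Finset.sum_le_sum fun q _ => ?_
      refine (Icc_card_le _ _ ?_).trans (le_of_eq ?_)
      · gcongr; linarith
      · field_simp; ring
    rw [Finset.sum_const, Int.card_Icc, nsmul_eq_mul] at h1
    have h2 : (((m : ℤ) + 1 - -(m : ℤ)).toNat : ℝ) = 2 * m + 1 := by
      have : ((m : ℤ) + 1 - -(m : ℤ)).toNat = 2 * m + 1 := by omega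
      rw [this]; push_cast; ring
    rw [h2] at h1
    have h3 : (2 * (m : ℝ) + 1) * (4 * M * e / m + 1) ≤ (3 * m) * (4 * M * e / m + 1) := by
      have : 0 ≤ 4 * M * e / m := by positivity
      apply mul_le_mul_of_nonneg_right <;> linarith
    have h4 : (3 * (m : ℝ)) * (4 * M * e / m + 1) = 12 * M * e + 3 * m := by
      field_simp; ring
    linarith
  refine ⟨(Finset.Icc 1 T).biUnion fun m => Fintype.piFinset fun _ : Fin n => A m, ?_, ?_⟩
  · rintro z ⟨m, hm1, hmT, hz⟩
    rw [Finset.mem_biUnion]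
    refine ⟨m, Finset.mem_Icc.2 ⟨hm1, hmT⟩, ?_⟩
    rw [Fintype.mem_piFinset]
    intro j
    obtain ⟨q, hq, h⟩ := hz j
    rw [Finset.mem_biUnion]
    have hm0 : (0 : ℝ) < m := by exact_mod_cast hm1
    rw [abs_le] at h hq
    refine ⟨q, Finset.mem_Icc.2 hq, ?_⟩
    rw [Finset.mem_Icc, Int.ceil_le, Int.le_floor, div_le_iff₀ hm0, le_div_iff₀ hm0]
    constructor <;> linarith
  · refine le_trans (Nat.cast_le.2 Finset.card_biUnion_le) ?_
    push_cast
    calc ∑ m ∈ Finset.Icc 1 T, ((Fintype.piFinset fun _ : Fin n => A m).card : ℝ)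
        ≤ ∑ m ∈ Finset.Icc 1 T, (12 * M * e + 3 * T) ^ n := by
          refine Finset.sum_le_sum fun m hm => ?_
          rw [Fintype.card_piFinset]
          simp only [Finset.prod_const, Finset.card_univ, Fintype.card_fin]
          push_cast
          exact pow_le_pow_left₀ (by positivity) (hA m hm) n
      _ = T * (12 * M * e + 3 * T) ^ n := by simp

def gz (n M : ℕ) (z : Fin n → ℤ) : E (n + 1) :=
  WithLp.toLp 2 (Fin.cons (M : ℝ) (fun j => (z j : ℝ)))

lemma gz_zero (n M : ℕ) (z : Fin n → ℤ) : gz n M z 0 = M := by simp [gz]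
lemma gz_succ (n M : ℕ) (z : Fin n → ℤ) (j : Fin n) : gz n M z j.succ = z j := by simp [gz]

lemma abs_coord_le {d : ℕ} (x : E d) (j : Fin d) : |x j| ≤ ‖x‖ := by
  have := PiLp.norm_apply_le x j
  rwa [Real.norm_eq_abs] at this

lemma le_norm_gz (n M : ℕ) (z : Fin n → ℤ) : (M : ℝ) ≤ ‖gz n M z‖ := by
  have := abs_coord_le (gz n M z) 0
  rw [gz_zero] at this
  exact (le_abs_self _).trans this

lemma norm_gz_le (n M : ℕ) (z : Fin n → ℤ) (hz : ∀ j, |z j| ≤ M) :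
    ‖gz n M z‖ ≤ (n + 1) * M := by
  refine (sq_le_sq₀ (norm_nonneg _) (by positivity)).1 ?_
  rw [EuclideanSpace.norm_sq_eq, Fin.sum_univ_succ]
  simp only [gz_zero, gz_succ, Real.norm_eq_abs, sq_abs]
  have h1 : ∑ j, (z j : ℝ) ^ 2 ≤ ∑ j : Fin n, (M : ℝ) ^ 2 := by
    refine Finset.sum_le_sum fun j _ => ?_
    rw [← sq_abs]
    refine pow_le_pow_left₀ (abs_nonneg _) ?_ 2
    exact_mod_cast hz j
  rw [Finset.sum_const, Finset.card_univ, Fintype.card_fin, nsmul_eq_mul] at h1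
  nlinarith [sq_nonneg (M : ℝ), mul_nonneg (mul_nonneg (Nat.cast_nonneg (α := ℝ) n) (Nat.cast_nonneg (α := ℝ) n)) (sq_nonneg (M : ℝ)),
    mul_nonneg (Nat.cast_nonneg (α := ℝ) n) (sq_nonneg (M : ℝ))]

def wz (n M : ℕ) (z : Fin n → ℤ) : E (n + 1) := ‖gz n M z‖⁻¹ • gz n M z

lemma norm_wz (n M : ℕ) (hM : 1 ≤ M) (z : Fin n → ℤ) : ‖wz n M z‖ = 1 := by
  have h1 := le_norm_gz n M z
  have h2 : (1 : ℝ) ≤ M := by exact_mod_cast hM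
  have h3 : 0 < ‖gz n M z‖ := by linarith
  rw [wz, norm_smul, norm_inv, norm_norm, inv_mul_cancel₀ h3.ne']

lemma wz_sep (n M : ℕ) (hM : 1 ≤ M) (z z' : Fin n → ℤ) (hz : ∀ j, |z j| ≤ M) (hz' : ∀ j, |z' j| ≤ M)
    (hne : z ≠ z') : 1 ≤ 2 * ((n + 1) * M) * ‖wz n M z - wz n M z'‖ := by
  obtain ⟨j, hj⟩ := Function.ne_iff.1 hne
  have hM' : (1 : ℝ) ≤ M := by exact_mod_cast hM
  set a := ‖gz n M z‖ with ha
  set a' := ‖gz n M z'‖ with ha'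
  set δ := ‖wz n M z - wz n M z'‖ with hδ
  have ha1 : (M : ℝ) ≤ a := le_norm_gz n M z
  have ha1' : (M : ℝ) ≤ a' := le_norm_gz n M z'
  have ha2 : a ≤ (n + 1) * M := norm_gz_le n M z hz
  have hap : 0 < a := by linarith
  have hap' : 0 < a' := by linarith
  have hδ0 : 0 ≤ δ := norm_nonneg _
  have c0 : |a⁻¹ * M - a'⁻¹ * M| ≤ δ := by
    have := abs_coord_le (wz n M z - wz n M z') 0
    simpa [wz, gz_zero, hδ, ← ha, ← ha'] using this
  have c1 : |a⁻¹ * z j - a'⁻¹ * z' j| ≤ δ := by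
    have := abs_coord_le (wz n M z - wz n M z') j.succ
    simpa [wz, gz_succ, hδ, ← ha, ← ha'] using this
  have e1 : ((z j : ℝ) - z' j) = a * (a⁻¹ * z j - a'⁻¹ * z' j) - a * (z' j * (a⁻¹ - a'⁻¹)) := by
    field_simp; ring
  have e2 : |(z' j : ℝ) * (a⁻¹ - a'⁻¹)| ≤ δ := by
    refine le_trans ?_ c0
    rw [← sub_mul, abs_mul, abs_mul, mul_comm]
    refine mul_le_mul_of_nonneg_left ?_ (abs_nonneg _)
    rw [abs_of_nonneg (by linarith : (0 : ℝ) ≤ M)]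
    exact_mod_cast hz' j
  have e3 : (1 : ℝ) ≤ |(z j : ℝ) - z' j| := by
    have : 1 ≤ |z j - z' j| := Int.one_le_abs (sub_ne_zero.2 hj)
    exact_mod_cast this
  have e4 : |(z j : ℝ) - z' j| ≤ a * δ + a * δ := by
    rw [e1]
    refine (abs_sub _ _).trans ?_
    rw [abs_mul, abs_mul a, abs_of_pos hap]
    gcongr
  nlinarith

lemma bad_to_grid (n M : ℕ) (hM : 1 ≤ M) (z : Fin n → ℤ) (hz : ∀ j, |z j| ≤ M) {ω p : E (n + 1)}
    {q τ β e : ℝ} (hω : ‖ω - wz n M z‖ ≤ 3 * q) (hp : p ∈ intPoints (n + 1)) (hp0 : p ≠ 0)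
    (hτ : |inner ℝ ω p| ≤ τ) (hβ : ‖p - inner ℝ ω p • ω‖ ≤ β) (he : β + 3 * q * τ ≤ e) (he4 : e ≤ 1 / 4) :
    ∃ m : ℕ, 1 ≤ m ∧ (m : ℝ) ≤ τ + e ∧ ∀ j, ∃ k : ℤ, |k| ≤ m ∧ |(m : ℝ) * z j - M * k| ≤ 2 * M * e := by
  have hM' : (1 : ℝ) ≤ M := by exact_mod_cast hM
  have ha1 : (M : ℝ) ≤ ‖gz n M z‖ := le_norm_gz n M z
  have hap : 0 < ‖gz n M z‖ := by linarith
  choose P hP using hp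
  set t := inner ℝ ω p with ht
  set s := t * ‖gz n M z‖⁻¹ with hs
  have hE : ‖p - s • gz n M z‖ ≤ e := by
    have : p - s • gz n M z = (p - t • ω) + t • (ω - wz n M z) := by
      rw [hs, wz, smul_sub, smul_smul]; abel
    rw [this]
    refine (norm_add_le _ _).trans ?_
    rw [norm_smul, Real.norm_eq_abs]
    have : |t| * ‖ω - wz n M z‖ ≤ τ * (3 * q) :=
      mul_le_mul hτ hω (norm_nonneg _) ((abs_nonneg _).trans hτ)
    linarith
  have hc0 : |(P 0 : ℝ) - s * M| ≤ e := by
    have := (abs_coord_le (p - s • gz n M z) 0).trans hE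
    simpa [gz_zero, hP] using this
  have hc : ∀ j : Fin n, |(P j.succ : ℝ) - s * z j| ≤ e := by
    intro j
    have := (abs_coord_le (p - s • gz n M z) j.succ).trans hE
    simpa [gz_succ, hP] using this
  have hzr : ∀ j, |(z j : ℝ)| ≤ M := fun j => by exact_mod_cast hz j
  have hsM : |s * M| ≤ τ := by
    rw [hs, mul_assoc, abs_mul]
    refine le_trans ?_ hτ
    refine mul_le_of_le_one_right (abs_nonneg _) ?_
    rw [abs_of_nonneg (by positivity), inv_mul_le_iff₀ hap]
    linarith
  have hsz : ∀ j, |s * z j| ≤ |s * M| := by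
    intro j
    rw [abs_mul s, abs_mul s, abs_of_nonneg (by linarith : (0:ℝ) ≤ M)]
    exact mul_le_mul_of_nonneg_left (hzr j) (abs_nonneg _)
  have hPj : ∀ j : Fin n, |(P j.succ : ℝ)| ≤ |(P 0 : ℝ)| + 2 * e := by
    intro j
    have h1 := abs_sub_abs_le_abs_sub (P j.succ : ℝ) (s * z j)
    have h2 := abs_sub_abs_le_abs_sub (s * M) (P 0 : ℝ)
    rw [abs_sub_comm] at h2
    linarith [hc j, hsz j]
  have hPj' : ∀ j : Fin n, |P j.succ| ≤ |P 0| := by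
    intro j
    have : ((|P j.succ| : ℤ) : ℝ) < ((|P 0| + 1 : ℤ) : ℝ) := by
      push_cast; linarith [hPj j]
    have := Int.cast_lt.1 this
    omega
  have hP0 : P 0 ≠ 0 := by
    intro h0
    apply hp0
    ext j
    rw [hP j]
    refine Fin.cases ?_ (fun j => ?_) j
    · simp [h0]
    · have := hPj' j
      rw [h0, abs_zero, abs_nonpos_iff] at this
      simp [this]
  have hcast : (((P 0).natAbs : ℕ) : ℝ) = |(P 0 : ℝ)| := by
    rw [Nat.cast_natAbs]; push_cast; rfl
  have hkey : ∀ j, |(P 0 : ℝ) * z j - M * P j.succ| ≤ 2 * M * e := by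
    intro j
    have : (P 0 : ℝ) * z j - M * P j.succ = (P 0 - s * M) * z j - M * (P j.succ - s * z j) := by ring
    rw [this]
    refine (abs_sub _ _).trans ?_
    rw [abs_mul, abs_mul, abs_of_nonneg (by linarith : (0:ℝ) ≤ M)]
    have h1 : |(P 0 : ℝ) - s * M| * |(z j : ℝ)| ≤ e * M :=
      mul_le_mul hc0 (hzr j) (abs_nonneg _) ((abs_nonneg _).trans hc0)
    have h2 : (M : ℝ) * |(P j.succ : ℝ) - s * z j| ≤ M * e :=
      mul_le_mul_of_nonneg_left (hc j) (by linarith)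
    linarith
  refine ⟨(P 0).natAbs, Int.natAbs_pos.2 hP0, ?_, ?_⟩
  · rw [hcast]
    have h2 := abs_sub_abs_le_abs_sub (P 0 : ℝ) (s * M)
    linarith
  · intro j
    rw [hcast]
    rcases le_total 0 (P 0) with h | h
    · refine ⟨P j.succ, ?_, ?_⟩
      · rw [Int.natCast_natAbs]; exact hPj' j
      · rw [abs_of_nonneg (by exact_mod_cast h : (0:ℝ) ≤ P 0)]; exact hkey j
    · refine ⟨-P j.succ, ?_, ?_⟩
      · rw [Int.natCast_natAbs, abs_neg]; exact hPj' j
      · rw [abs_of_nonpos (by exact_mod_cast h : (P 0 : ℝ) ≤ 0)]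
        have := hkey j
        rw [← abs_neg] at this
        push_cast
        convert this using 2
        ring

end Grid

section Near

lemma near_of_good {d : ℕ} {V : Set (E d)} {r q : ℝ} (hr : 0 < r) {ω₀ γ x : E d} (hω₀ : ‖ω₀‖ = 1)
    (hγ : γ ∈ polarSet V) (hγ1 : 1 / r ≤ inner ℝ γ ω₀) (hx : x ∈ V)
    (hgood : r - q ^ 2 * r ≤ inner ℝ (‖γ‖⁻¹ • γ) x) :
    ‖‖γ‖⁻¹ • γ - ω₀‖ ^ 2 ≤ 2 * q ^ 2 := by
  have h0 : γ ≠ 0 := by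
    rintro rfl
    rw [inner_zero_left] at hγ1
    have : 0 < 1 / r := by positivity
    linarith
  have hn : 0 < ‖γ‖ := norm_pos_iff.2 h0
  have h1 : ‖‖γ‖⁻¹ • γ‖ = 1 := by rw [norm_smul, norm_inv, norm_norm, inv_mul_cancel₀ hn.ne']
  rw [norm_sub_sq_real, h1, hω₀, real_inner_smul_left]
  rw [real_inner_smul_left] at hgood
  have h2 : inner ℝ γ x ≤ 1 := hγ x hx
  have h3 : ‖γ‖⁻¹ * inner ℝ γ x ≤ ‖γ‖⁻¹ * 1 := mul_le_mul_of_nonneg_left h2 (by positivity)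
  have h4 : ‖γ‖⁻¹ * (1 / r) ≤ ‖γ‖⁻¹ * inner ℝ γ ω₀ := mul_le_mul_of_nonneg_left hγ1 (by positivity)
  have h5 : (r - q ^ 2 * r) * (1 / r) ≤ ‖γ‖⁻¹ * (1 / r) :=
    mul_le_mul_of_nonneg_right (by linarith) (by positivity)
  have h6 : (r - q ^ 2 * r) * (1 / r) = 1 - q ^ 2 := by field_simp
  linarith

lemma facet_near {d : ℕ} {V : Set (E d)} (hV : V.Finite) (hb : Bornology.IsBounded (polarSet V))
    {r q : ℝ} (hr : 0 < r) (hVr : ∀ x ∈ V, ‖x‖ ≤ r) (hq : 0 < q) {ω₀ : E d} (hω₀ : ‖ω₀‖ = 1)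
    (hgood : ∀ ω : E d, ‖ω‖ = 1 → ‖ω - ω₀‖ ≤ 3 * q → ∃ x ∈ V, r - q ^ 2 * r ≤ inner ℝ ω x) :
    ∃ u ∈ facetNormals V, ∀ x ∈ V, inner ℝ u x = 1 → ‖x - r • ω₀‖ ≤ 3 * q * r := by
  have hw : r⁻¹ • ω₀ ∈ polarSet V := by
    intro x hx
    rw [real_inner_smul_left, inv_mul_le_iff₀ hr, mul_one]
    have := real_inner_le_norm ω₀ x
    rw [hω₀, one_mul] at this
    exact this.trans (hVr x hx)
  obtain ⟨u, hu, hu1⟩ := exists_facetNormal hV hb hw ω₀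
  have hw1 : inner ℝ (r⁻¹ • ω₀) ω₀ = 1 / r := by
    rw [real_inner_smul_left, real_inner_self_eq_norm_sq, hω₀]; simp
  rw [hw1] at hu1
  let γ : ℝ → E d := fun t => (1 - t) • (r⁻¹ • ω₀) + t • u
  have hγ : ∀ t ∈ Set.Icc (0 : ℝ) 1, γ t ∈ polarSet V := fun t ht =>
    (convex_polarSet V) hw hu.1 (by linarith [ht.2]) ht.1 (by ring)
  have hγ1 : ∀ t ∈ Set.Icc (0 : ℝ) 1, 1 / r ≤ inner ℝ (γ t) ω₀ := by
    intro t ht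
    simp only [γ]
    rw [inner_add_left, real_inner_smul_left (r⁻¹ • ω₀), hw1, real_inner_smul_left u]
    nlinarith [ht.1, ht.2, mul_le_mul_of_nonneg_left hu1 ht.1]
  have hrp : 0 < 1 / r := by positivity
  have hγ0 : ∀ t ∈ Set.Icc (0 : ℝ) 1, γ t ≠ 0 := by
    intro t ht h
    have := hγ1 t ht
    rw [h, inner_zero_left] at this
    linarith
  have hunit : ∀ t ∈ Set.Icc (0 : ℝ) 1, ‖‖γ t‖⁻¹ • γ t‖ = 1 := by
    intro t ht
    rw [norm_smul, norm_inv, norm_norm, inv_mul_cancel₀ (norm_ne_zero_iff.2 (hγ0 t ht))]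
  let f : ℝ → ℝ := fun t => ‖‖γ t‖⁻¹ • γ t - ω₀‖
  have hγc : Continuous γ := by fun_prop
  have hfc : ContinuousOn f (Set.Icc 0 1) := by
    refine ContinuousOn.norm (ContinuousOn.sub (ContinuousOn.smul (ContinuousOn.inv₀ hγc.norm.continuousOn ?_)
      hγc.continuousOn) continuousOn_const)
    intro t ht
    exact norm_ne_zero_iff.2 (hγ0 t ht)
  have hf0 : f 0 = 0 := by
    simp only [f, γ, sub_zero, one_smul, zero_smul, add_zero]
    rw [norm_smul, hω₀, norm_inv, Real.norm_of_nonneg hr.le, smul_smul]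
    simp [hr.ne']
  have hstep : ∀ t ∈ Set.Icc (0 : ℝ) 1, f t ≤ 3 * q → f t ^ 2 ≤ 2 * q ^ 2 := by
    intro t ht h
    obtain ⟨x, hx, hx1⟩ := hgood _ (hunit t ht) h
    exact near_of_good hr hω₀ (hγ t ht) (hγ1 t ht) hx hx1
  have hf1 : f 1 ≤ 3 * q := by
    by_contra hcon
    push Not at hcon
    obtain ⟨t, ht, hft⟩ := intermediate_value_Icc (zero_le_one' ℝ) hfc
      (show 3 * q ∈ Set.Icc (f 0) (f 1) from ⟨by rw [hf0]; positivity, hcon.le⟩)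
    have := hstep t ht hft.le
    rw [hft] at this
    nlinarith [sq_pos_of_pos hq]
  have h1m : (1 : ℝ) ∈ Set.Icc (0 : ℝ) 1 := ⟨zero_le_one, le_rfl⟩
  have hγu : γ 1 = u := by simp [γ]
  have hf2 := hstep 1 h1m hf1
  obtain ⟨x', hx', hx1'⟩ := hgood _ (hunit 1 h1m) hf1
  have hun := hunit 1 h1m
  have hu0 := hγ0 1 h1m
  simp only [f] at hf2
  rw [hγu] at hx1' hun hf2 hu0
  set v := ‖u‖⁻¹ • u with hv
  have hn : 0 < ‖u‖ := norm_pos_iff.2 hu0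
  have hvd : ‖v - ω₀‖ ≤ 3 / 2 * q := by
    refine (sq_le_sq₀ (norm_nonneg _) (by positivity)).1 ?_
    nlinarith [sq_nonneg q]
  refine ⟨u, hu, fun x hx hux => ?_⟩
  have hvx : r - q ^ 2 * r ≤ inner ℝ v x := by
    refine hx1'.trans ?_
    rw [hv, real_inner_smul_left, real_inner_smul_left, hux]
    exact mul_le_mul_of_nonneg_left (hu.1 x' hx') (by positivity)
  have hxd : ‖x - r • v‖ ≤ 3 / 2 * q * r := by
    refine (sq_le_sq₀ (norm_nonneg _) (by positivity)).1 ?_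
    rw [norm_sub_sq_real, real_inner_smul_right, norm_smul, hun, Real.norm_of_nonneg hr.le, mul_one,
      real_inner_comm]
    have h1 : ‖x‖ ^ 2 ≤ r ^ 2 := pow_le_pow_left₀ (norm_nonneg _) (hVr x hx) 2
    have h2 := mul_le_mul_of_nonneg_left hvx hr.le
    nlinarith [mul_nonneg (sq_nonneg q) (sq_nonneg r)]
  have : x - r • ω₀ = (x - r • v) + r • (v - ω₀) := by rw [smul_sub]; abel
  rw [this]
  refine (norm_add_le _ _).trans ?_
  rw [norm_smul, Real.norm_of_nonneg hr.le]
  nlinarith [mul_le_mul_of_nonneg_left hvd hr.le]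

end Near

section Lower

lemma single_mem_ball {d : ℕ} {r : ℝ} (hr : 1 ≤ r) (j : Fin d) :
    (EuclideanSpace.single j ((⌊r⌋₊ : ℝ)) ∈ {x : E d | x ∈ intPoints d ∧ ‖x‖ ≤ r}) ∧
    (EuclideanSpace.single j (-(⌊r⌋₊ : ℝ)) ∈ {x : E d | x ∈ intPoints d ∧ ‖x‖ ≤ r}) := by
  have h := Nat.floor_le (by linarith : 0 ≤ r)
  refine ⟨⟨fun k => ?_, ?_⟩, ⟨fun k => ?_, ?_⟩⟩
  · by_cases hk : k = j
    · exact ⟨(⌊r⌋₊ : ℤ), by simp [hk]⟩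
    · exact ⟨0, by simp [hk]⟩
  · simpa using h
  · by_cases hk : k = j
    · exact ⟨-(⌊r⌋₊ : ℤ), by simp [hk]⟩
    · exact ⟨0, by simp [hk]⟩
  · simpa using h

lemma faceSet_finite {d : ℕ} {V : Set (E d)} (hV : V.Finite) (i : ℕ) : (faceSet V i).Finite := by
  refine hV.finite_subsets.subset ?_
  rintro W ⟨_, ⟨u, rfl⟩, _⟩
  exact fc_subset V u

lemma lower_core (n M T i : ℕ) (hM : 1 ≤ M) (hi : i ≤ n) {K r q e : ℝ}
    (hK : ∀ ω : E (n + 1), ‖ω‖ = 1 →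
    (∃ x ∈ intPoints (n + 1), ‖x‖ ≤ r ∧ r - q ^ 2 * r ≤ inner ℝ ω x) ∨
    (∃ p ∈ intPoints (n + 1), p ≠ 0 ∧ |inner ℝ ω p| ≤ 4 * K / (q ^ 2 * r) ∧
      ‖p - inner ℝ ω p • ω‖ ≤ 2 * K / (q * r)))
    (hr : 1 ≤ r) (hq : 0 < q) (hMq : 16 * (n + 1) * M * q ≤ 1)
    (he : 14 * K / (q * r) ≤ e) (he0 : 0 ≤ e) (he4 : e ≤ 1 / 4)
    (hT : ∀ m : ℕ, (m : ℝ) ≤ 4 * K / (q ^ 2 * r) + e → m ≤ T) :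
    (M : ℝ) ^ n ≤ ((faceSet {x : E (n + 1) | x ∈ intPoints (n + 1) ∧ ‖x‖ ≤ r} i).ncard : ℝ)
      + T * (12 * M * e + 3 * T) ^ n := by
  classical
  have hr0 : 0 < r := by linarith
  set V : Set (E (n + 1)) := {x : E (n + 1) | x ∈ intPoints (n + 1) ∧ ‖x‖ ≤ r} with hVdef
  have hVf : V.Finite := intPoints_ball_finite (n + 1) r
  have hb : Bornology.IsBounded (polarSet V) := by
    refine polar_bounded (m := (⌊r⌋₊ : ℝ)) ?_ (fun j => single_mem_ball hr j)
    exact_mod_cast Nat.floor_pos.2 hr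
  obtain ⟨B, hB, hBc⟩ := bad_count n M T e he0
  let Z : Finset (Fin n → ℤ) := Fintype.piFinset fun _ => Finset.Icc (1 : ℤ) M
  have hZc : Z.card = M ^ n := by simp [Z]
  have hZ : ∀ z ∈ Z, ∀ j, |z j| ≤ M := by
    intro z hz j
    have := Finset.mem_Icc.1 (Fintype.mem_piFinset.1 hz j)
    rw [abs_of_nonneg (by omega)]; exact this.2
  have hW : ∀ z ∈ Z \ B, ∃ W ∈ faceSet V i, ∀ x ∈ W, ‖x - r • wz n M z‖ ≤ 3 * q * r := by
    intro z hz
    rw [Finset.mem_sdiff] at hz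
    have hgood : ∀ ω : E (n + 1), ‖ω‖ = 1 → ‖ω - wz n M z‖ ≤ 3 * q →
        ∃ x ∈ V, r - q ^ 2 * r ≤ inner ℝ ω x := by
      intro ω hω hωz
      rcases hK ω hω with ⟨x, hx, hxr, hx1⟩ | ⟨p, hp, hp0, h1, h2⟩
      · exact ⟨x, ⟨hx, hxr⟩, hx1⟩
      · exfalso
        apply hz.2
        apply hB
        have hee : 2 * K / (q * r) + 3 * q * (4 * K / (q ^ 2 * r)) ≤ e := by
          refine le_trans (le_of_eq ?_) he
          field_simp; ring
        obtain ⟨m, hm1, hm2, hm3⟩ := bad_to_grid n M hM z (hZ z hz.1) hωz hp hp0 h1 h2 hee he4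
        exact ⟨m, hm1, hT m hm2, hm3⟩
    obtain ⟨u, hu, hux⟩ := facet_near hVf hb hr0 (fun x hx => hx.2) hq (norm_wz n M hM z) hgood
    have hF := facetNormals_mem_faceSet (n := n) (by simp) hu
    obtain ⟨W, hW, hWs⟩ := exists_subface hVf hF i hi
    exact ⟨W, hW, fun x hx => hux x (hWs hx).1 (hWs hx).2⟩
  choose! W hWf hWn using hW
  have hinj : Set.InjOn W (Z \ B : Finset (Fin n → ℤ)) := by
    intro z hz z' hz' hzz
    by_contra hne
    have hz1 : z ∈ Z \ B := by simpa using hz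
    have hz1' : z' ∈ Z \ B := by simpa using hz'
    obtain ⟨x, hx⟩ := (hWf z hz1).1
    have h1 := hWn z hz1 x hx
    have h2 := hWn z' hz1' x (hzz ▸ hx)
    have hsep := wz_sep n M hM z z' (hZ z (Finset.mem_sdiff.1 hz1).1) (hZ z' (Finset.mem_sdiff.1 hz1').1) hne
    have h3 : ‖r • (wz n M z - wz n M z')‖ ≤ 6 * q * r := by
      have : r • (wz n M z - wz n M z') = (x - r • wz n M z') - (x - r • wz n M z) := by
        rw [smul_sub]; abel
      rw [this]
      refine (norm_sub_le _ _).trans ?_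
      linarith
    rw [norm_smul, Real.norm_of_nonneg hr0.le] at h3
    have h4 : ‖wz n M z - wz n M z'‖ ≤ 6 * q := by
      refine le_of_mul_le_mul_left ?_ hr0
      linarith
    have hM1 : (1 : ℝ) ≤ M := by exact_mod_cast hM
    have hnM : (0 : ℝ) < (n + 1) * M := by positivity
    have h5 := mul_le_mul_of_nonneg_left h4 (by positivity : (0 : ℝ) ≤ 2 * ((n + 1) * M))
    nlinarith
  have hcard : (Z \ B).card ≤ (faceSet V i).ncard := by
    rw [← Finset.card_image_of_injOn hinj, ← Set.ncard_coe_finset]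
    refine Set.ncard_le_ncard ?_ (faceSet_finite hVf i)
    intro F hF
    rw [Finset.coe_image] at hF
    obtain ⟨z, hz, rfl⟩ := hF
    exact hWf z (by simpa using hz)
  have h6 : M ^ n ≤ (faceSet V i).ncard + B.card := by
    have := Finset.le_card_sdiff B Z
    rw [hZc] at this
    omega
  have h7 : (M : ℝ) ^ n ≤ ((faceSet V i).ncard : ℝ) + B.card := by exact_mod_cast h6
  linarith

set_option maxHeartbeats 2000000 in
lemma lower_bound (n i : ℕ) (hn : 1 ≤ n) (hi : i ≤ n) : ∃ c : ℝ, 0 < c ∧ ∃ S : ℝ, 1 ≤ S ∧ ∀ s : ℝ, S ≤ s →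
    c * s ^ (n * (n + 1)) ≤
      ((faceSet {x : E (n + 1) | x ∈ intPoints (n + 1) ∧ ‖x‖ ≤ s ^ (n + 2)} i).ncard : ℝ) := by
  obtain ⟨K, hK, hcd⟩ := cap_or_dual (n + 1) (by omega)
  set b : ℝ := 1 / (16 * (n + 1)) with hbdef
  have hb : 0 < b := by positivity
  set cc : ℝ := 168 + 48 / b with hcc
  have hcc0 : 0 < cc := by positivity
  set H : ℝ := 1 + 16 * K ^ (n + 1) * cc ^ n with hH
  have hH1 : 1 ≤ H := by
    have : 0 < 16 * K ^ (n + 1) * cc ^ n := by positivity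
    linarith
  have hH0 : 0 < H := by linarith
  refine ⟨(b / (2 * H)) ^ n / 2, by positivity, H + 56 * K + H ^ 2 / (4 * K) + 2 * H / b, ?_, ?_⟩
  · have : 0 < 56 * K + H ^ 2 / (4 * K) + 2 * H / b := by positivity
    linarith
  intro s hs
  have p1 : 0 < 56 * K := by positivity
  have p2 : 0 < H ^ 2 / (4 * K) := by positivity
  have p3 : 0 < 2 * H / b := by positivity
  have hsH : H ≤ s := by linarith
  have hsK : 56 * K ≤ s := by linarith
  have hsT : H ^ 2 / (4 * K) ≤ s := by linarith
  have hsM : 2 * H / b ≤ s := by linarith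
  have hs1 : 1 ≤ s := by linarith
  have hs0 : 0 < s := by linarith
  set a := s ^ n with ha
  have hsa : s ≤ a := le_self_pow₀ hs1 (by omega)
  have ha0 : 0 < a := by positivity
  have ha1 : 1 ≤ a := by linarith
  have hrs : s ^ (n + 2) = a * s ^ 2 := by rw [ha, pow_add]
  set r := s ^ (n + 2) with hr
  have hr1 : 1 ≤ r := one_le_pow₀ hs1
  have hr0 : 0 < r := by linarith
  set q := H / (a * s) with hq
  have hq0 : 0 < q := by positivity
  have hq1 : q ≤ 1 := by
    rw [hq, div_le_one (by positivity)]
    nlinarith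
  have hqr : q * r = H * s := by rw [hq, hrs]; field_simp
  have hqqr : q ^ 2 * r = H ^ 2 / a := by rw [hq, hrs]; field_simp
  set M := ⌊b / q⌋₊ with hMdef
  have hbq : b / q = b * (a * s) / H := by rw [hq]; field_simp
  have hbq2 : 2 ≤ b / q := by
    rw [hbq, le_div_iff₀ hH0]
    rw [div_le_iff₀ hb] at hsM
    nlinarith [mul_pos hb hs0, mul_le_mul_of_nonneg_left ha1 (mul_pos hb hs0).le]
  have hMle : (M : ℝ) ≤ b / q := Nat.floor_le (by positivity)
  have hMgt : b / q < M + 1 := Nat.lt_floor_add_one _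
  have hMge : b * (a * s) / (2 * H) ≤ M := by
    have : b * (a * s) / (2 * H) = (b / q) / 2 := by rw [hbq]; field_simp
    rw [this]; linarith
  have hM1 : 1 ≤ M := by
    have : (1 : ℝ) ≤ M := by linarith
    exact_mod_cast this
  have hM0 : (0 : ℝ) < M := by exact_mod_cast hM1
  have hMq : 16 * (n + 1) * M * q ≤ 1 := by
    rw [le_div_iff₀ hq0] at hMle
    have := mul_le_mul_of_nonneg_left hMle (by positivity : (0 : ℝ) ≤ 16 * (n + 1))
    have h2 : 16 * ((n : ℝ) + 1) * b = 1 := by rw [hbdef]; field_simp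
    linarith
  set e := 14 * K / (q * r) with he
  have he0 : 0 ≤ e := by positivity
  have he4 : e ≤ 1 / 4 := by
    rw [he, hqr, div_le_iff₀ (by positivity)]
    nlinarith
  have hτ : 4 * K / (q ^ 2 * r) = 4 * K * a / H ^ 2 := by rw [hqqr]; field_simp
  have hτ1 : 1 ≤ 4 * K / (q ^ 2 * r) := by
    rw [hτ, le_div_iff₀ (by positivity)]
    rw [div_le_iff₀ (by positivity)] at hsT
    nlinarith
  set T := ⌊4 * K / (q ^ 2 * r) + 1⌋₊ with hT
  have hTle : (T : ℝ) ≤ 8 * K * a / H ^ 2 := by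
    have h1 : (T : ℝ) ≤ 4 * K / (q ^ 2 * r) + 1 := Nat.floor_le (by positivity)
    have h2 : 8 * K * a / H ^ 2 = 2 * (4 * K / (q ^ 2 * r)) := by rw [hτ]; ring
    linarith
  have hcore := lower_core n M T i hM1 hi (K := K) (r := r) (q := q) (e := e)
    (fun ω hω => hcd ω hω r q hr0 hq0 hq1) hr1 hq0 hMq le_rfl he0 he4
    (fun m hm => Nat.le_floor (by linarith))
  have hT2 : 8 * K * a / H ^ 2 ≤ K * M / (H * s) * (16 / b) := by
    have h1 := mul_le_mul_of_nonneg_left hMge (by positivity : 0 ≤ K / (H * s) * (16 / b))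
    have h2 : K / (H * s) * (16 / b) * (b * (a * s) / (2 * H)) = 8 * K * a / H ^ 2 := by
      field_simp; ring
    have h3 : K / (H * s) * (16 / b) * M = K * M / (H * s) * (16 / b) := by ring
    linarith
  have hsum : 12 * M * e + 3 * T ≤ K * M / (H * s) * cc := by
    have h1 : 12 * M * e = K * M / (H * s) * 168 := by rw [he, hqr]; ring
    have h2 : K * M / (H * s) * cc = K * M / (H * s) * 168 + 3 * (K * M / (H * s) * (16 / b)) := by
      rw [hcc]; ring
    linarith
  have hbad : T * (12 * M * e + 3 * T) ^ n ≤ (M : ℝ) ^ n / 2 := by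
    have h1 : T * (12 * M * e + 3 * T) ^ n ≤ (8 * K * a / H ^ 2) * (K * M / (H * s) * cc) ^ n :=
      mul_le_mul hTle (pow_le_pow_left₀ (by positivity) hsum n) (by positivity) (by positivity)
    have h2 : (8 * K * a / H ^ 2) * (K * M / (H * s) * cc) ^ n
        = (16 * K ^ (n + 1) * cc ^ n / H ^ (n + 2)) * ((M : ℝ) ^ n / 2) := by
      rw [ha, mul_pow, div_pow, mul_pow, mul_pow]
      field_simp
      ring
    have h3 : 16 * K ^ (n + 1) * cc ^ n / H ^ (n + 2) ≤ 1 := by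
      rw [div_le_one (by positivity)]
      have : H ≤ H ^ (n + 2) := le_self_pow₀ hH1 (by omega)
      linarith
    rw [h2] at h1
    exact h1.trans (mul_le_of_le_one_left (by positivity) h3)
  have hMn : (b * (a * s) / (2 * H)) ^ n ≤ (M : ℝ) ^ n := pow_le_pow_left₀ (by positivity) hMge n
  have hfin : (b / (2 * H)) ^ n / 2 * s ^ (n * (n + 1)) = (b * (a * s) / (2 * H)) ^ n / 2 := by
    have : s ^ (n * (n + 1)) = (a * s) ^ n := by
      rw [ha, ← pow_succ, ← pow_mul, mul_comm]
    rw [this, ← mul_div_right_comm, ← mul_pow]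
    ring
  rw [hfin]
  linarith

end Lower

section Final

lemma upper_bound (n i : ℕ) (hi : i ≤ n) (s : ℝ) (hs : 1 ≤ s) :
    ((faceSet {x : E (n + 1) | x ∈ intPoints (n + 1) ∧ ‖x‖ ≤ s ^ (n + 2)} i).ncard : ℝ) ≤
      (5 ^ (n + 1) + (2 * ((2 * (i + 1) : ℕ) : ℝ) * (n + 1 : ℕ)) ^ (n + 1)) * s ^ (n * (n + 1)) := by
  have hs0 : 0 < s := by linarith
  have hr1 : 1 ≤ s ^ (n + 2) := one_le_pow₀ hs
  have hmp : 1 ≤ ⌊s ^ (n + 2)⌋₊ := Nat.floor_pos.2 hr1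
  have hm1 : (1 : ℝ) ≤ (⌊s ^ (n + 2)⌋₊ : ℝ) := by exact_mod_cast hmp
  have hml := Nat.lt_floor_add_one (s ^ (n + 2))
  have hm2 : s ^ (n + 2) ≤ 2 * (⌊s ^ (n + 2)⌋₊ : ℝ) := by linarith
  have hT : 0 < s ^ (2 * (n + 1)) := by positivity
  have hm0 : (0 : ℝ) < (⌊s ^ (n + 2)⌋₊ : ℝ) := by linarith
  have h := faceSet_card_le (d := n + 1) (i := i) (by omega)
    (V := {x : E (n + 1) | x ∈ intPoints (n + 1) ∧ ‖x‖ ≤ s ^ (n + 2)})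
    (intPoints_ball_finite (n + 1) (s ^ (n + 2))) (fun x hx => hx.1)
    (r := s ^ (n + 2)) (m := (⌊s ^ (n + 2)⌋₊ : ℝ)) (T := s ^ (2 * (n + 1)))
    (fun x hx => hx.2) hm0 hT
    ⟨fun j => ⟨0, by simp⟩, by simp; positivity⟩ (fun j => single_mem_ball hr1 j)
  refine h.trans ?_
  rw [add_mul]
  have hTm : s ^ (2 * (n + 1)) / (⌊s ^ (n + 2)⌋₊ : ℝ) ≤ 2 * s ^ n := by
    rw [div_le_iff₀ hm0]
    have : s ^ (2 * (n + 1)) = s ^ n * s ^ (n + 2) := by rw [← pow_add]; congr 1; ring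
    rw [this]
    have := mul_le_mul_of_nonneg_left hm2 (by positivity : 0 ≤ s ^ n)
    linarith
  have ha1 : 1 ≤ s ^ n := one_le_pow₀ hs
  apply add_le_add
  · calc _ ≤ (5 * s ^ n) ^ (n + 1) := by
          refine pow_le_pow_left₀ (by positivity) ?_ _
          linarith
      _ = _ := by rw [mul_pow, ← pow_mul]
  · rw [div_le_iff₀ hT]
    apply le_of_eq
    have : s ^ (n * (n + 1)) * s ^ (2 * (n + 1)) = (s ^ (n + 2)) ^ (n + 1) := by
      rw [← pow_add, ← pow_mul]; congr 1; ring
    rw [mul_assoc _ (s ^ (n * (n + 1))), this, ← mul_pow]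
    congr 1
    ring

end Final


/-- Theorem 4.2 (Bárány–Larman): for every `d ≥ 2` and `0 ≤ i ≤ d-1`, the number of
`i`-faces of the integer hull of the ball of radius `r` is of order `r^{d(d-1)/(d+1)}`. -/
theorem faces_of_integer_hull_of_ball (d i : ℕ) (hd : 2 ≤ d) (hi : i ≤ d - 1) :
    ∃ c₁ c₂ : ℝ, 0 < c₁ ∧ 0 < c₂ ∧ ∃ R : ℝ, ∀ r : ℝ, R ≤ r →
      c₁ * r ^ (((d : ℝ) * ((d : ℝ) - 1)) / ((d : ℝ) + 1)) ≤
          (numFaces d i (integerHull d (Metric.closedBall (0 : E d) r)) : ℝ) ∧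
      (numFaces d i (integerHull d (Metric.closedBall (0 : E d) r)) : ℝ) ≤
          c₂ * r ^ (((d : ℝ) * ((d : ℝ) - 1)) / ((d : ℝ) + 1)) := by
  obtain ⟨n, rfl⟩ : ∃ n, d = n + 1 := ⟨d - 1, by omega⟩
  have hi' : i ≤ n := by omega
  obtain ⟨c, hc, S, hS, hlow⟩ := lower_bound n i (by omega) hi'
  refine ⟨c, 5 ^ (n + 1) + (2 * ((2 * (i + 1) : ℕ) : ℝ) * (n + 1 : ℕ)) ^ (n + 1), hc, by positivity,
    S ^ (n + 2), ?_⟩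
  intro r hr
  have hr1 : 1 ≤ r := (one_le_pow₀ hS).trans hr
  have hr0 : 0 ≤ r := by linarith
  obtain ⟨s, hs⟩ : ∃ s : ℝ, s = r ^ ((1 : ℝ) / (n + 2)) := ⟨_, rfl⟩
  have hs0 : 0 ≤ s := by rw [hs]; positivity
  have hn2 : (n : ℝ) + 2 ≠ 0 := by positivity
  have hsr : s ^ (n + 2) = r := by
    rw [hs, ← Real.rpow_natCast, ← Real.rpow_mul hr0]
    push_cast
    rw [one_div_mul_cancel hn2, Real.rpow_one]
  have hse : r ^ ((((n + 1 : ℕ) : ℝ) * (((n + 1 : ℕ) : ℝ) - 1)) / (((n + 1 : ℕ) : ℝ) + 1)) = s ^ (n * (n + 1)) := by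
    rw [hs, ← Real.rpow_natCast, ← Real.rpow_mul hr0]
    congr 1
    push_cast
    have h3 : (n : ℝ) + 1 + 1 = n + 2 := by ring
    rw [h3]
    field_simp
    ring
  have hSs : S ≤ s := by
    rw [← hsr] at hr
    exact (pow_le_pow_iff_left₀ (by linarith) hs0 (by omega)).1 hr
  have hV : intPoints (n + 1) ∩ Metric.closedBall (0 : E (n + 1)) r
      = {x : E (n + 1) | x ∈ intPoints (n + 1) ∧ ‖x‖ ≤ s ^ (n + 2)} := by
    ext x
    simp [hsr]
  rw [hse, integerHull, numFaces_hull, hV]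
  exact ⟨hlow s hSs, upper_bound n i hi' s (hS.trans hSs)⟩
end
end

section
/- Every convex polytope P in R^d with all vertices in Z^d and with volume V > 0 has at most c_d · V^{(d-1)/(d+1)} vertices, where c_d depends only on d. -/
open MeasureTheory Set Filter
noncomputable section

namespace Andrews

open Matrix

def FullDim {d : ℕ} (F : Finset (Fin d → ℝ)) : Prop :=
  ∀ (u : Fin d → ℝ) (c : ℝ), (∀ x ∈ F, u ⬝ᵥ x = c) → u = 0

def FacetWith {d : ℕ} (F G : Finset (Fin d → ℝ)) (w : Fin d → ℝ) (c : ℝ) : Prop :=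
  w ≠ 0 ∧ G.Nonempty ∧ (∀ x ∈ F, w ⬝ᵥ x ≤ c) ∧ (∀ x, x ∈ G ↔ x ∈ F ∧ w ⬝ᵥ x = c) ∧
    ∀ (u : Fin d → ℝ) (c' : ℝ), (∀ x ∈ G, u ⬝ᵥ x = c') → ∃ b : ℝ, u = b • w

def IsFacet {d : ℕ} (F G : Finset (Fin d → ℝ)) : Prop := ∃ w c, FacetWith F G w c

def IntF {d : ℕ} (F : Finset (Fin d → ℝ)) : Prop := ∀ x ∈ F, ∀ i, ∃ z : ℤ, x i = z

/-- A simplex with vertices in `F` of maximal volume. -/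
def MaxSimplex {d : ℕ} (F : Finset (Fin d → ℝ)) (v0 : Fin d → ℝ)
    (v : Fin d → Fin d → ℝ) : Prop :=
  v0 ∈ F ∧ (∀ i, v0 + v i ∈ F) ∧ (Matrix.of v).det ≠ 0 ∧
    ∀ q0 ∈ F, ∀ q : Fin d → Fin d → ℝ, (∀ i, q0 + q i ∈ F) →
      |(Matrix.of q).det| ≤ |(Matrix.of v).det|

lemma vecMul_of {k d : ℕ} (a : Fin k → ℝ) (v : Fin k → Fin d → ℝ) :
    a ᵥ* Matrix.of v = ∑ i, a i • v i := by
  ext j; simp [vecMul, dotProduct, Finset.sum_apply]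

lemma dot_sum {k d : ℕ} (m : Fin d → ℝ) (v : Fin k → Fin d → ℝ) :
    m ⬝ᵥ ∑ i, v i = ∑ i, m ⬝ᵥ v i := by
  rw [dotProduct_sum]

lemma exists_comb {d : ℕ} {v : Fin d → Fin d → ℝ} (hv : (Matrix.of v).det ≠ 0) (x : Fin d → ℝ) :
    x = ∑ i, (x ᵥ* (Matrix.of v)⁻¹) i • v i := by
  rw [← vecMul_of, vecMul_vecMul, nonsing_inv_mul _ (isUnit_iff_ne_zero.mpr hv), vecMul_one]

lemma eq_zero_of_dot {d : ℕ} {v : Fin d → Fin d → ℝ} (hv : (Matrix.of v).det ≠ 0)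
    {m : Fin d → ℝ} (h : ∀ i, m ⬝ᵥ v i = 0) : m = 0 := by
  refine eq_zero_of_mulVec_eq_zero hv ?_
  ext i
  rw [mulVec, dotProduct_comm]
  exact h i

lemma functional_eq_dot {d : ℕ} (f : (Fin d → ℝ) →ₗ[ℝ] ℝ) :
    ∃ z : Fin d → ℝ, ∀ x, f x = z ⬝ᵥ x := by
  refine ⟨fun i => f (Pi.single i 1), fun x => ?_⟩
  conv_lhs => rw [← Finset.univ_sum_single x]
  rw [map_sum]
  refine Finset.sum_congr rfl fun i _ => ?_
  have : (Pi.single i (x i) : Fin d → ℝ) = x i • Pi.single i 1 := by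
    ext j; by_cases h : j = i
    · subst h; simp
    · simp [h]
  rw [this, map_smul, smul_eq_mul, mul_comm]

lemma exists_det_ne_zero {d : ℕ} (S : Set (Fin d → ℝ))
    (h : ∀ z : Fin d → ℝ, (∀ s ∈ S, z ⬝ᵥ s = 0) → z = 0) :
    ∃ M : Fin d → Fin d → ℝ, (∀ i, M i ∈ S) ∧ (Matrix.of M).det ≠ 0 := by
  have hs : Submodule.span ℝ S = ⊤ := by
    by_contra hne
    obtain ⟨f, hf, hle⟩ := Submodule.exists_le_ker_of_lt_top _ (lt_top_iff_ne_top.mpr hne)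
    obtain ⟨z, hz⟩ := functional_eq_dot f
    have : z = 0 := h z fun s hs => by
      rw [← hz]; exact hle (Submodule.subset_span hs)
    apply hf; ext x; simp [hz, this]
  have hd : Module.finrank ℝ (Submodule.span ℝ S) = d := by rw [hs]; simp
  obtain ⟨f, hfS, -, hli⟩ := Submodule.exists_fun_fin_finrank_span_eq ℝ S
  refine ⟨fun i => f (Fin.cast hd.symm i), fun i => hfS _, ?_⟩
  have hli2 : LinearIndependent ℝ (fun i => f (Fin.cast hd.symm i)) :=
    hli.comp _ (Fin.cast_injective _)
  have : IsUnit (Matrix.of fun i => f (Fin.cast hd.symm i)) :=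
    Matrix.linearIndependent_rows_iff_isUnit.mp hli2
  rw [Matrix.isUnit_iff_isUnit_det] at this
  exact this.ne_zero

lemma exists_maxSimplex {d : ℕ} (F : Finset (Fin d → ℝ)) (hne : F.Nonempty) (hF : FullDim F) :
    ∃ v0 v, MaxSimplex F v0 v := by
  classical
  obtain ⟨x0, hx0⟩ := hne
  obtain ⟨M, hM, hdet⟩ := exists_det_ne_zero {s | x0 + s ∈ F} (fun z hz => hF z (z ⬝ᵥ x0)
    (fun x hx => by
      have := hz (x - x0) (by simpa using hx)
      rw [dotProduct_sub] at this; linarith))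
  have : Nonempty F := ⟨⟨x0, hx0⟩⟩
  obtain ⟨⟨v0, p⟩, hmax⟩ := Finite.exists_max
    (fun a : F × (Fin d → F) =>
      |(Matrix.of fun i => ((a.2 i : Fin d → ℝ) - (a.1 : Fin d → ℝ))).det|)
  refine ⟨v0, fun i => ((p i : Fin d → ℝ) - v0), v0.2, fun i => ?_, ?_, ?_⟩
  · simp
  · have := hmax (⟨x0, hx0⟩, fun i => ⟨x0 + M i, hM i⟩)
    simp only [add_sub_cancel_left] at this
    intro h0
    rw [h0, abs_zero] at this
    exact hdet (abs_nonpos_iff.mp this)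
  · intro q0 hq0 q hq
    have := hmax (⟨q0, hq0⟩, fun i => ⟨q0 + q i, hq i⟩)
    simpa only [add_sub_cancel_left] using this

lemma MaxSimplex.coords {d : ℕ} {F : Finset (Fin d → ℝ)} {v0 v} (h : MaxSimplex F v0 v)
    {x : Fin d → ℝ} (hx : x ∈ F) : ∃ a : Fin d → ℝ, (∀ i, |a i| ≤ 1) ∧
      x = v0 + ∑ i, a i • v i := by
  obtain ⟨h0, hv, hdet, hmax⟩ := h
  have hav := exists_comb hdet (x - v0)
  set a := (x - v0) ᵥ* (Matrix.of v)⁻¹ with ha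
  refine ⟨a, fun i => ?_, ?_⟩
  · have h1 := hmax v0 h0 (Function.update v i (x - v0)) (fun j => by
      by_cases hj : j = i
      · subst hj; simpa using hx
      · simpa [hj] using hv j)
    have h2 : (Matrix.of (Function.update v i (x - v0))).det = a i * (Matrix.of v).det := by
      have := det_updateRow_sum (Matrix.of v) i a
      rw [smul_eq_mul] at this
      rw [← this, hav]
      rfl
    rw [h2, abs_mul] at h1
    have := abs_pos.mpr hdet
    by_contra hc
    push Not at hc
    nlinarith
  · rw [← hav]; simp

/-- The centroid of a simplex. -/
def cen {d : ℕ} (v0 : Fin d → ℝ) (v : Fin d → Fin d → ℝ) : Fin d → ℝ :=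
  v0 + ((d : ℝ) + 1)⁻¹ • ∑ i, v i

lemma cen_ineq {d : ℕ} {v0 : Fin d → ℝ} {v : Fin d → Fin d → ℝ} {m : Fin d → ℝ} {c : ℝ}
    (h0 : m ⬝ᵥ v0 ≤ c) (hv : ∀ i, m ⬝ᵥ (v0 + v i) ≤ c) (i : Fin d) :
    |m ⬝ᵥ v i| ≤ (d + 1) * (c - m ⬝ᵥ cen v0 v) := by
  have key : (d + 1) * (c - m ⬝ᵥ cen v0 v) =
      (c - m ⬝ᵥ v0) + ∑ j, (c - m ⬝ᵥ (v0 + v j)) := by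
    have : ((d : ℝ) + 1) ≠ 0 := by positivity
    simp only [cen, dotProduct_add, dotProduct_smul, dot_sum, Finset.sum_sub_distrib,
      Finset.sum_add_distrib, Finset.sum_const, Finset.card_univ, Fintype.card_fin, smul_eq_mul,
      nsmul_eq_mul]
    field_simp
    ring
  have h1 : c - m ⬝ᵥ (v0 + v i) ≤ ∑ j, (c - m ⬝ᵥ (v0 + v j)) :=
    Finset.single_le_sum (f := fun j => c - m ⬝ᵥ (v0 + v j))
      (fun j _ => sub_nonneg.mpr (hv j)) (Finset.mem_univ i)
  have h2 := hv i
  rw [key]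
  rw [dotProduct_add] at h1 h2
  rw [abs_le]
  constructor <;> linarith

lemma MaxSimplex.cen_pos {d : ℕ} {F : Finset (Fin d → ℝ)} {v0 v} (h : MaxSimplex F v0 v)
    {m : Fin d → ℝ} {c : ℝ} (hm : m ≠ 0) (hc : ∀ x ∈ F, m ⬝ᵥ x ≤ c) :
    0 < c - m ⬝ᵥ cen v0 v := by
  by_contra hneg
  push Not at hneg
  apply hm
  refine eq_zero_of_dot h.2.2.1 fun i => ?_
  have := cen_ineq (hc _ h.1) (fun i => hc _ (h.2.1 i)) i
  have h2 : |m ⬝ᵥ v i| ≤ 0 := this.trans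
      (mul_nonpos_of_nonneg_of_nonpos (by positivity) hneg)
  simpa using h2

lemma MaxSimplex.coords_cen {d : ℕ} {F : Finset (Fin d → ℝ)} {v0 v} (h : MaxSimplex F v0 v)
    {x : Fin d → ℝ} (hx : x ∈ F) :
    ∃ a : Fin d → ℝ, (∀ i, |a i| ≤ 2) ∧ x - cen v0 v = ∑ i, a i • v i := by
  obtain ⟨a, ha, hxa⟩ := h.coords hx
  refine ⟨fun i => a i - ((d : ℝ) + 1)⁻¹, fun i => ?_, ?_⟩
  · have h1 : ((d : ℝ) + 1)⁻¹ ≤ 1 := inv_le_one_of_one_le₀ (by linarith [Nat.cast_nonneg (α := ℝ) d])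
    have h2 : 0 ≤ ((d : ℝ) + 1)⁻¹ := by positivity
    have := abs_le.mp (ha i)
    rw [abs_le]; constructor <;> linarith
  · simp only [sub_smul, Finset.sum_sub_distrib]
    rw [hxa, cen, Finset.smul_sum]
    abel

lemma MaxSimplex.diff_bound {d : ℕ} {F : Finset (Fin d → ℝ)} {v0 v} (h : MaxSimplex F v0 v)
    {m : Fin d → ℝ} {c : ℝ} (hc : ∀ x ∈ F, m ⬝ᵥ x ≤ c) {x y : Fin d → ℝ} (hx : x ∈ F)
    (hy : y ∈ F) : |m ⬝ᵥ (x - y)| ≤ 2 * d * (d + 1) * (c - m ⬝ᵥ cen v0 v) := by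
  obtain ⟨a, ha, hxa⟩ := h.coords hx
  obtain ⟨b, hb, hyb⟩ := h.coords hy
  have : x - y = ∑ i, (a i - b i) • v i := by
    simp only [sub_smul, Finset.sum_sub_distrib]; rw [hxa, hyb]; abel
  rw [this, dot_sum]
  refine (Finset.abs_sum_le_sum_abs _ _).trans ?_
  have : ∀ i ∈ Finset.univ, |m ⬝ᵥ ((a i - b i) • v i)| ≤ 2 * ((d + 1) * (c - m ⬝ᵥ cen v0 v)) := by
    intro i _
    rw [dotProduct_smul, smul_eq_mul, abs_mul]
    have h1 := cen_ineq (hc _ h.1) (fun i => hc _ (h.2.1 i)) i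
    have h2 : |a i - b i| ≤ 2 := by
      have := abs_le.mp (ha i); have := abs_le.mp (hb i)
      rw [abs_le]; constructor <;> linarith
    exact mul_le_mul h2 h1 (abs_nonneg _) (by norm_num)
  refine (Finset.sum_le_sum this).trans ?_
  simp only [Finset.sum_const, Finset.card_univ, Fintype.card_fin, nsmul_eq_mul]
  apply le_of_eq; ring


lemma FacetWith.smul {d : ℕ} {F G : Finset (Fin d → ℝ)} {w : Fin d → ℝ} {c : ℝ}
    (h : FacetWith F G w c) {l : ℝ} (hl : 0 < l) : FacetWith F G (l • w) (l * c) := by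
  obtain ⟨h1, h2, h3, h4, h5⟩ := h
  refine ⟨smul_ne_zero hl.ne' h1, h2, fun x hx => ?_, fun x => ?_, fun u c' hu => ?_⟩
  · rw [smul_dotProduct, smul_eq_mul]
    exact mul_le_mul_of_nonneg_left (h3 x hx) hl.le
  · rw [h4, smul_dotProduct, smul_eq_mul, mul_right_inj' hl.ne']
  · obtain ⟨b, rfl⟩ := h5 u c' hu
    refine ⟨b * l⁻¹, ?_⟩
    rw [smul_smul, mul_assoc, inv_mul_cancel₀ hl.ne', mul_one]

lemma int_det {d : ℕ} (A : Matrix (Fin d) (Fin d) ℝ) (h : ∀ i j, ∃ z : ℤ, A i j = z) :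
    ∃ z : ℤ, A.det = z := by
  choose z hz using h
  refine ⟨(Matrix.of z).det, ?_⟩
  rw [Int.cast_det]
  congr 1
  ext i j
  simp [hz]

lemma facet_data {d : ℕ} (hd : 1 ≤ d) {F G : Finset (Fin d → ℝ)} (hInt : IntF F) {v0 v}
    (hs : MaxSimplex F v0 v) (hG : IsFacet F G) :
    ∃ (m : Fin d → ℤ) (c : ℝ) (T : Fin d → Fin d → ℝ),
      FacetWith F G (fun i => (m i : ℝ)) c ∧ (∀ i, T i ∈ G) ∧
      (Matrix.of fun i => T i - cen v0 v).det ≠ 0 ∧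
      |(Matrix.of fun i => T i - cen v0 v).det| = c - (fun i => (m i : ℝ)) ⬝ᵥ cen v0 v := by
  obtain ⟨w, c, hw⟩ := hG
  have hw' := hw
  obtain ⟨h1, ⟨g, hg⟩, h3, h4, h5⟩ := hw'
  have hh := hs.cen_pos h1 h3
  set o := cen v0 v with ho
  set h := c - w ⬝ᵥ o with hhdef
  obtain ⟨t, ht, hdet⟩ := exists_det_ne_zero {s | o + s ∈ G} (fun z hz => by
    have hz' : ∀ x ∈ G, z ⬝ᵥ x = z ⬝ᵥ o := fun x hx => by
      have := hz (x - o) (by simpa using hx)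
      rw [dotProduct_sub] at this; linarith
    obtain ⟨b, rfl⟩ := h5 z _ hz'
    have := hz' g hg
    rw [smul_dotProduct, smul_dotProduct, ((h4 g).mp hg).2, smul_eq_mul, smul_eq_mul] at this
    have : b * h = 0 := by rw [hhdef]; linarith
    rcases mul_eq_zero.mp this with h0 | h0
    · rw [h0, zero_smul]
    · exact absurd h0 hh.ne')
  have hwt : ∀ i, w ⬝ᵥ t i = h := fun i => by
    have := ((h4 _).mp (ht i)).2
    rw [dotProduct_add] at this; rw [hhdef]; linarith
  let i0 : Fin d := ⟨0, hd⟩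
  set M : Matrix (Fin d) (Fin d) ℝ :=
    (Matrix.of fun i => t i - t i0).updateRow i0 (t i0) with hM
  have hMdet : (Matrix.of t).det = M.det := by
    refine det_eq_of_forall_row_eq_smul_add_const (fun i => if i = i0 then 0 else 1) i0 (by simp) ?_
    intro i j
    by_cases hi : i = i0
    · subst hi; simp [hM]
    · simp [hM, hi]
  have hmul := mul_adjugate M
  set mr : Fin d → ℝ := fun j => M.adjugate j i0 with hmr
  have hM0 : mr ⬝ᵥ t i0 = M.det := by
    have := congrFun (congrFun hmul i0) i0
    simp only [mul_apply, Matrix.smul_apply, one_apply_eq, smul_eq_mul, mul_one] at this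
    rw [← this, dotProduct]
    exact Finset.sum_congr rfl fun j _ => by simp [hM, hmr, mul_comm]
  have hMi : ∀ i, mr ⬝ᵥ t i = M.det := by
    intro i
    by_cases hi : i = i0
    · subst hi; exact hM0
    have := congrFun (congrFun hmul i) i0
    simp only [mul_apply, Matrix.smul_apply, one_apply_ne hi, smul_eq_mul, mul_zero] at this
    have h2 : mr ⬝ᵥ (t i - t i0) = 0 := by
      rw [← this, dotProduct]
      exact Finset.sum_congr rfl fun j _ => by simp [hM, hmr, hi, mul_comm]
    rw [dotProduct_sub] at h2; linarith
  have hmrw : mr = (M.det / h) • w := by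
    rw [← sub_eq_zero]
    refine eq_zero_of_dot hdet fun i => ?_
    rw [sub_dotProduct, smul_dotProduct, hMi, hwt, smul_eq_mul]
    field_simp; ring
  have hInt' : ∀ j, ∃ z : ℤ, mr j = z := by
    intro j
    simp only [hmr, adjugate_apply]
    apply int_det
    intro i l
    by_cases hi : i = i0
    · subst hi
      by_cases hl : l = j
      · subst hl; exact ⟨1, by simp⟩
      · exact ⟨0, by simp [hl]⟩
    · obtain ⟨z1, hz1⟩ := hInt _ ((h4 _).mp (ht i)).1 l
      obtain ⟨z2, hz2⟩ := hInt _ ((h4 _).mp (ht i0)).1 l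
      refine ⟨z1 - z2, ?_⟩
      simp only [hM, updateRow_ne hi, of_apply, Pi.sub_apply]
      rw [Pi.add_apply] at hz1 hz2
      push_cast
      linarith
  choose z hz using hInt'
  have hl : 0 < |M.det| / h := div_pos (abs_pos.mpr (hMdet ▸ hdet)) hh
  have hm : ∃ m : Fin d → ℤ, (fun i => (m i : ℝ)) = (|M.det| / h) • w := by
    rcases abs_choice M.det with h0 | h0
    · refine ⟨z, ?_⟩
      rw [h0, ← hmrw]; ext i; exact (hz i).symm
    · refine ⟨-z, ?_⟩
      rw [h0, neg_div, neg_smul, ← hmrw]; ext i; simp [hz i]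
  obtain ⟨m, hm⟩ := hm
  refine ⟨m, |M.det| / h * c, fun i => o + t i, ?_, ht, ?_, ?_⟩
  · rw [hm]; exact hw.smul hl
  · simpa only [add_sub_cancel_left] using hdet
  · simp only [add_sub_cancel_left]
    rw [hm, hMdet, smul_dotProduct, smul_eq_mul, ← mul_sub, ← hhdef]
    field_simp

/-- The open standard simplex. -/
def simp0 (d : ℕ) : Set (Fin d → ℝ) := {a | (∀ i, 0 < a i) ∧ ∑ i, a i < 1}

lemma simp0_open (d : ℕ) : IsOpen (simp0 d) := by
  have : simp0 d = (⋂ i, {a : Fin d → ℝ | 0 < a i}) ∩ {a | ∑ i, a i < 1} := by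
    ext a; simp [simp0]
  rw [this]
  refine IsOpen.inter (isOpen_iInter_of_finite fun i => ?_) ?_
  · exact isOpen_lt continuous_const (continuous_apply i)
  · exact isOpen_lt (by fun_prop) continuous_const

lemma simp0_pos (d : ℕ) : 0 < (volume (simp0 d)).toReal := by
  have h1 : 0 < volume (simp0 d) := by
    refine (simp0_open d).measure_pos _ ⟨fun _ => ((d : ℝ) + 1)⁻¹, fun i => by positivity, ?_⟩
    simp only [Finset.sum_const, Finset.card_univ, Fintype.card_fin, nsmul_eq_mul]
    rw [← div_eq_mul_inv, div_lt_one (by positivity)]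
    linarith
  refine ENNReal.toReal_pos h1.ne' ?_
  have : simp0 d ⊆ Icc 0 1 := by
    intro a ha
    refine ⟨fun i => (ha.1 i).le, fun i => ?_⟩
    have := Finset.single_le_sum (f := a) (fun j _ => (ha.1 j).le) (Finset.mem_univ i)
    simp only [Pi.one_apply]
    linarith [ha.2]
  exact ((measure_mono this).trans_lt isCompact_Icc.measure_lt_top).ne

lemma vol_preimage {d : ℕ} {t : Fin d → Fin d → ℝ} (ht : (Matrix.of t).det ≠ 0)
    (U : Set (Fin d → ℝ)) :
    volume {x : Fin d → ℝ | x ᵥ* (Matrix.of t)⁻¹ ∈ U} =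
      ENNReal.ofReal |(Matrix.of t).det| * volume U := by
  have hdet : LinearMap.det (Matrix.toLin' ((Matrix.of t)⁻¹)ᵀ) = ((Matrix.of t).det)⁻¹ := by
    rw [LinearMap.det_toLin', det_transpose, det_nonsing_inv, Ring.inverse_eq_inv']
  have := Measure.addHaar_preimage_linearMap volume
    (f := Matrix.toLin' ((Matrix.of t)⁻¹)ᵀ) (by rw [hdet]; exact inv_ne_zero ht) U
  rw [hdet, inv_inv] at this
  rw [← this]
  congr 1
  ext x
  simp [mulVec_transpose]

lemma vol_preimage' {d : ℕ} {t : Fin d → Fin d → ℝ} (ht : (Matrix.of t).det ≠ 0)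
    (U : Set (Fin d → ℝ)) :
    ENNReal.ofReal |(Matrix.of t).det| * volume {x : Fin d → ℝ | (fun i => t i ⬝ᵥ x) ∈ U} =
      volume U := by
  have hdet : LinearMap.det (Matrix.toLin' (Matrix.of t)) = (Matrix.of t).det := by
    rw [LinearMap.det_toLin']
  have := Measure.addHaar_preimage_linearMap volume
    (f := Matrix.toLin' (Matrix.of t)) (by rw [hdet]; exact ht) U
  rw [hdet] at this
  have h2 : {x : Fin d → ℝ | (fun i => t i ⬝ᵥ x) ∈ U} = Matrix.toLin' (Matrix.of t) ⁻¹' U := by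
    ext x; rfl
  rw [h2, this, ← mul_assoc, ← ENNReal.ofReal_mul (abs_nonneg _), ← abs_mul,
    mul_inv_cancel₀ ht]
  simp

lemma weight_sum {d : ℕ} {F : Finset (Fin d → ℝ)} {v0 v} (hs : MaxSimplex F v0 v)
    {ι : Type*} (I : Finset ι) (T : ι → Fin d → Fin d → ℝ) (g : ι → Fin d → ℝ)
    (hT : ∀ i ∈ I, ∀ j, T i j ∈ F)
    (hdet : ∀ i ∈ I, (Matrix.of fun j => T i j - cen v0 v).det ≠ 0)
    (hg1 : ∀ i ∈ I, ∀ x ∈ F, g i ⬝ᵥ (x - cen v0 v) ≤ 1)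
    (hg2 : ∀ i ∈ I, ∀ j, g i ⬝ᵥ (T i j - cen v0 v) = 1)
    (hinj : ∀ i ∈ I, ∀ j ∈ I, g i = g j → i = j) :
    (∑ i ∈ I, |(Matrix.of fun j => T i j - cen v0 v).det|) * (volume (simp0 d)).toReal ≤
      4 ^ d * |(Matrix.of v).det| := by
  set t : ι → Fin d → Fin d → ℝ := fun i j => T i j - cen v0 v with ht
  let S : ι → Set (Fin d → ℝ) := fun i => {x | x ᵥ* (Matrix.of (t i))⁻¹ ∈ simp0 d}
  have hSopen : ∀ i, IsOpen (S i) := fun i =>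
    (simp0_open d).preimage (by fun_prop)
  have hle : ∀ i ∈ I, ∀ j ∈ I, ∀ x ∈ S i, g j ⬝ᵥ x ≤ g i ⬝ᵥ x ∧
      (g j ⬝ᵥ x = g i ⬝ᵥ x → g j = g i) := by
    intro i hi j hj x hx
    have hx2 := exists_comb (hdet i hi) x
    obtain ⟨ha, -⟩ := (hx : x ᵥ* (Matrix.of (t i))⁻¹ ∈ simp0 d)
    set a := x ᵥ* (Matrix.of (t i))⁻¹
    have e1 : g j ⬝ᵥ x = ∑ l, a l * (g j ⬝ᵥ t i l) := by
      conv_lhs => rw [hx2, dot_sum]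
      simp only [dotProduct_smul, smul_eq_mul]; rfl
    have e2 : g i ⬝ᵥ x = ∑ l, a l := by
      conv_lhs => rw [hx2, dot_sum]
      simp only [dotProduct_smul, smul_eq_mul, hg2 i hi, mul_one]
    have hterm : ∀ l ∈ Finset.univ, a l * (g j ⬝ᵥ t i l) ≤ a l := fun l _ =>
      mul_le_of_le_one_right (ha l).le (hg1 j hj _ (hT i hi l))
    constructor
    · rw [e1, e2]; exact Finset.sum_le_sum hterm
    · intro heq
      rw [e1, e2, Finset.sum_eq_sum_iff_of_le hterm] at heq
      rw [← sub_eq_zero]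
      refine eq_zero_of_dot (hdet i hi) fun l => ?_
      have h3 := heq l (Finset.mem_univ l)
      have h4 : g j ⬝ᵥ t i l = 1 := by
        have := (ha l).ne'
        field_simp at h3; linarith
      rw [sub_dotProduct, hg2 i hi]
      exact sub_eq_zero.mpr h4
  have hdisj : (I : Set ι).PairwiseDisjoint S := by
    intro i hi j hj hij
    rw [Function.onFun, Set.disjoint_left]
    intro x hxi hxj
    have h1 := hle i hi j hj x hxi
    have h2 := hle j hj i hi x hxj
    exact hij (hinj i hi j hj (h1.2 (le_antisymm h1.1 h2.1)).symm)
  have hvol := measure_biUnion_finset (μ := volume) hdisj (fun i _ => (hSopen i).measurableSet)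
  have hsub : (⋃ i ∈ I, S i) ⊆ {x | x ᵥ* (Matrix.of v)⁻¹ ∈ Icc (fun _ => (-2 : ℝ)) (fun _ => 2)} := by
    intro x hx
    simp only [mem_iUnion] at hx
    obtain ⟨i, hi, hx⟩ := hx
    have hx2 := exists_comb (hdet i hi) x
    obtain ⟨ha, hasum⟩ := (hx : x ᵥ* (Matrix.of (t i))⁻¹ ∈ simp0 d)
    set a := x ᵥ* (Matrix.of (t i))⁻¹
    have hb : ∀ l, ∃ b : Fin d → ℝ, (∀ i, |b i| ≤ 2) ∧ b = t i l ᵥ* (Matrix.of v)⁻¹ := by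
      intro l
      obtain ⟨b, hb1, hb2⟩ := hs.coords_cen (hT i hi l)
      refine ⟨b, hb1, ?_⟩
      rw [ht]; simp only
      rw [hb2, ← vecMul_of, vecMul_vecMul,
        mul_nonsing_inv _ (isUnit_iff_ne_zero.mpr hs.2.2.1), vecMul_one]
    choose b hb1 hb2 using hb
    have hxb : x ᵥ* (Matrix.of v)⁻¹ = ∑ l, a l • b l := by
      conv_lhs => rw [hx2]
      rw [sum_vecMul]
      refine Finset.sum_congr rfl fun l _ => ?_
      rw [smul_vecMul, hb2]
    have habs : ∀ j, |(x ᵥ* (Matrix.of v)⁻¹) j| ≤ 2 := by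
      intro j
      rw [hxb, Finset.sum_apply]
      refine (Finset.abs_sum_le_sum_abs _ _).trans ?_
      have : ∀ l ∈ Finset.univ, |(a l • b l) j| ≤ a l * 2 := fun l _ => by
        rw [Pi.smul_apply, smul_eq_mul, abs_mul, abs_of_pos (ha l)]
        exact mul_le_mul_of_nonneg_left (hb1 l j) (ha l).le
      refine (Finset.sum_le_sum this).trans ?_
      rw [← Finset.sum_mul]; linarith
    exact ⟨fun j => (abs_le.mp (habs j)).1, fun j => (abs_le.mp (habs j)).2⟩
  have hm := measure_mono (μ := volume) hsub
  rw [hvol, vol_preimage hs.2.2.1, Real.volume_Icc_pi] at hm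
  have hS : ∀ i ∈ I, volume (S i) = ENNReal.ofReal |(Matrix.of (t i)).det| * volume (simp0 d) :=
    fun i hi => vol_preimage (hdet i hi) _
  rw [Finset.sum_congr rfl hS, ← Finset.sum_mul] at hm
  have hfin : ENNReal.ofReal |(Matrix.of v).det| *
      ∏ _i : Fin d, ENNReal.ofReal ((2 : ℝ) - (-2)) ≠ ⊤ :=
    ENNReal.mul_ne_top ENNReal.ofReal_ne_top (ENNReal.prod_ne_top fun _ _ => ENNReal.ofReal_ne_top)
  have := ENNReal.toReal_mono hfin hm
  rw [ENNReal.toReal_mul, ENNReal.toReal_mul, ENNReal.toReal_sum (fun _ _ => ENNReal.ofReal_ne_top),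
    ENNReal.toReal_prod] at this
  simp only [ENNReal.toReal_ofReal (abs_nonneg _)] at this
  rw [ENNReal.toReal_ofReal (by norm_num)] at this
  refine this.trans (le_of_eq ?_)
  simp
  norm_num
  ring


lemma count_lattice {k : ℕ} (N : Finset (Fin k → ℤ)) (Y : Fin k → Fin k → ℝ)
    (hY : (Matrix.of Y).det ≠ 0) {R : ℝ} (hR : 0 ≤ R)
    (hN : ∀ n ∈ N, ∀ i, |Y i ⬝ᵥ (fun j => (n j : ℝ))| ≤ R)
    (hspan : ∀ z : Fin k → ℝ, (∀ n ∈ N, z ⬝ᵥ (fun j => (n j : ℝ)) = 0) → z = 0) :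
    (N.card : ℝ) * |(Matrix.of Y).det| ≤ (2 * (k + 1) * R) ^ k := by
  classical
  obtain ⟨M, hM, hMdet⟩ := exists_det_ne_zero
    {s : Fin k → ℝ | ∃ n ∈ N, s = fun j => (n j : ℝ)}
    (fun z hz => hspan z fun n hn => hz _ ⟨n, hn, rfl⟩)
  choose n hnN hn using hM
  set B : Set (Fin k → ℝ) :=
    {x | (fun i => Y i ⬝ᵥ x) ∈ Icc (fun _ => -((k + 1) * R)) (fun _ => (k + 1) * R)} with hB
  have hBvol : ENNReal.ofReal |(Matrix.of Y).det| * volume B =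
      ENNReal.ofReal ((2 * (k + 1) * R) ^ k) := by
    rw [hB, vol_preimage' hY, Real.volume_Icc_pi]
    simp only [Finset.prod_const, Finset.card_univ, Fintype.card_fin]
    rw [← ENNReal.ofReal_pow (by nlinarith [Nat.cast_nonneg (α := ℝ) k])]
    congr 2; ring
  have hBmeas : MeasurableSet B := by
    apply IsClosed.measurableSet
    refine isClosed_Icc.preimage (f := fun x : Fin k → ℝ => fun i => Y i ⬝ᵥ x) ?_
    fun_prop
  let b := Pi.basisFun ℝ (Fin k)
  have hfd := ZSpan.isAddFundamentalDomain b (volume : Measure (Fin k → ℝ))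
  have : VAddInvariantMeasure (Submodule.span ℤ (Set.range b)) (Fin k → ℝ) volume :=
    inferInstanceAs <| VAddInvariantMeasure (Submodule.span ℤ (Set.range b)).toAddSubgroup
      (Fin k → ℝ) volume
  have hvolfd : volume (ZSpan.fundamentalDomain b) = 1 := by
    rw [ZSpan.volume_fundamentalDomain]
    have : (Matrix.of b) = 1 := by
      ext i j; simp [b, Matrix.one_apply, Pi.single_apply, eq_comm]
    rw [this]; simp
  have hmemL : ∀ z : Fin k → ℤ, (fun j => (z j : ℝ)) ∈ Submodule.span ℤ (Set.range b) := by
    intro z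
    rw [b.mem_span_iff_repr_mem ℤ]
    intro i
    exact ⟨z i, by simp [b]⟩
  have hcard : (N.card : ENNReal) ≤ volume B := by
    rw [← lintegral_indicator_one hBmeas, hfd.lintegral_eq_tsum'',
      ← lintegral_tsum (fun g => by
        refine Measurable.aemeasurable ?_
        exact (measurable_one.indicator hBmeas).comp (measurable_const_vadd g))]
    calc (N.card : ENNReal) = ∫⁻ x in ZSpan.fundamentalDomain b, (N.card : ENNReal) := by
          rw [setLIntegral_const, hvolfd, mul_one]
      _ ≤ _ := by
          refine lintegral_mono fun x => ?_
          have hx := exists_comb hMdet x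
          set a := x ᵥ* (Matrix.of M)⁻¹
          let z0 : Fin k → ℤ := fun j => - ∑ i, ⌊a i⌋ * n i j
          let φ : (Fin k → ℤ) → Submodule.span ℤ (Set.range b) := fun m =>
            ⟨fun j => ((z0 + m) j : ℝ), hmemL _⟩
          have hφ : Function.Injective φ := by
            intro m m' h
            have := congrArg Subtype.val h
            ext j
            have h2 : (((z0 + m) j : ℤ) : ℝ) = (((z0 + m') j : ℤ) : ℝ) := congrFun this j
            have h3 := Int.cast_injective h2
            simpa using h3
          have hz0 : (fun j => ((z0 j : ℤ) : ℝ)) + x = ∑ i, Int.fract (a i) • M i := by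
            conv_lhs => rw [hx]
            ext j
            simp only [z0, Pi.add_apply, Finset.sum_apply, Pi.smul_apply, smul_eq_mul,
              Int.cast_neg, Int.cast_sum, Int.cast_mul, hn, Int.fract]
            simp only [sub_mul, Finset.sum_sub_distrib]
            ring
          have hmem : ∀ m ∈ N, φ m +ᵥ x ∈ B := by
            intro m hm
            have e : φ m +ᵥ x = (∑ i, Int.fract (a i) • M i) + fun j => (m j : ℝ) := by
              rw [← hz0]
              ext j
              simp [φ, Submodule.vadd_def]
              ring
            have hbd : ∀ i, |Y i ⬝ᵥ (φ m +ᵥ x)| ≤ (k + 1) * R := by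
              intro i
              rw [e, dotProduct_add, dot_sum]
              refine (abs_add_le _ _).trans ?_
              have h1 := hN m hm i
              have h2 : |∑ l, Y i ⬝ᵥ Int.fract (a l) • M l| ≤ ∑ l : Fin k, R := by
                refine (Finset.abs_sum_le_sum_abs _ _).trans (Finset.sum_le_sum fun l _ => ?_)
                rw [dotProduct_smul, smul_eq_mul, abs_mul, abs_of_nonneg (Int.fract_nonneg _)]
                have h3 := hN _ (hnN l) i
                rw [← hn l] at h3
                calc _ ≤ 1 * |Y i ⬝ᵥ M l| :=
                      mul_le_mul_of_nonneg_right (Int.fract_lt_one _).le (abs_nonneg _)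
                  _ ≤ R := by rw [one_mul]; exact h3
              simp only [Finset.sum_const, Finset.card_univ, Fintype.card_fin, nsmul_eq_mul] at h2
              linarith
            exact ⟨fun i => (abs_le.mp (hbd i)).1, fun i => (abs_le.mp (hbd i)).2⟩
          refine le_trans ?_ (ENNReal.sum_le_tsum (N.image φ))
          rw [Finset.sum_image hφ.injOn]
          have : ∀ m ∈ N, B.indicator (1 : (Fin k → ℝ) → ENNReal) (φ m +ᵥ x) = 1 := fun m hm => by
            rw [indicator_of_mem (hmem m hm)]; rfl
          rw [Finset.sum_congr rfl this]
          simp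
  have h1 : ENNReal.ofReal |(Matrix.of Y).det| * N.card ≤ ENNReal.ofReal ((2 * (k + 1) * R) ^ k) := by
    rw [← hBvol]; gcongr
  have := ENNReal.toReal_mono ENNReal.ofReal_ne_top h1
  rw [ENNReal.toReal_mul, ENNReal.toReal_ofReal (abs_nonneg _),
    ENNReal.toReal_ofReal (by positivity)] at this
  simpa [mul_comm] using this

lemma exists_facet_sep {d : ℕ} {F : Finset (Fin d → ℝ)} (hne : F.Nonempty) (hF : FullDim F)
    {p : Fin d → ℝ} (hp : p ∉ convexHull ℝ (F : Set (Fin d → ℝ))) :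
    ∃ G w c, FacetWith F G w c ∧ c < w ⬝ᵥ p := by
  classical
  obtain ⟨v0, v, hs⟩ := exists_maxSimplex F hne hF
  set o := cen v0 v with ho
  let K : Set (Fin d → ℝ) := {u | ∀ x ∈ F, u ⬝ᵥ (x - o) ≤ 1}
  have hKclosed : IsClosed K := by
    have : K = ⋂ x ∈ F, {u | u ⬝ᵥ (x - o) ≤ 1} := by ext; simp [K]
    rw [this]
    exact isClosed_biInter fun x _ => isClosed_le (by fun_prop) continuous_const
  have hKcomp : IsCompact K := by
    have hbox : IsCompact ((fun y : Fin d → ℝ => (Matrix.of v)⁻¹ *ᵥ y) ''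
        Icc (fun _ => -((d : ℝ) + 1)) (fun _ => (d : ℝ) + 1)) :=
      isCompact_Icc.image (by fun_prop)
    refine hbox.of_isClosed_subset hKclosed fun u hu => ?_
    refine ⟨Matrix.of v *ᵥ u, ?_, ?_⟩
    · have hb : ∀ i, |(Matrix.of v *ᵥ u) i| ≤ (d : ℝ) + 1 := by
        intro i
        have hu' : ∀ x ∈ F, u ⬝ᵥ x ≤ 1 + u ⬝ᵥ o := fun x hx => by
          have := hu x hx
          rw [dotProduct_sub] at this; linarith
        have := cen_ineq (hu' _ hs.1) (fun i => hu' _ (hs.2.1 i)) i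
        rw [← ho, add_sub_cancel_right, mul_one, dotProduct_comm] at this
        exact this
      exact ⟨fun i => (abs_le.mp (hb i)).1, fun i => (abs_le.mp (hb i)).2⟩
    · simp only
      rw [mulVec_mulVec, nonsing_inv_mul _ (isUnit_iff_ne_zero.mpr hs.2.2.1), one_mulVec]
  have hconvcl : IsClosed (convexHull ℝ (F : Set (Fin d → ℝ))) :=
    F.finite_toSet.isClosed_convexHull ℝ
  obtain ⟨f, s, hfs, hsp⟩ := geometric_hahn_banach_closed_point (convex_convexHull ℝ _) hconvcl hp
  obtain ⟨y, hy⟩ := functional_eq_dot (f : (Fin d → ℝ) →ₗ[ℝ] ℝ)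
  have hy' : ∀ x, f x = y ⬝ᵥ x := hy
  have hyF : ∀ x ∈ F, y ⬝ᵥ x < s := fun x hx => by
    rw [← hy']; exact hfs x (subset_convexHull ℝ _ hx)
  rw [hy'] at hsp
  have hyo : y ⬝ᵥ o < s := by
    by_cases hy0 : y = 0
    · have := hyF _ hs.1
      rw [hy0, zero_dotProduct] at this ⊢; exact this
    have := hs.cen_pos hy0 (fun x hx => (hyF x hx).le)
    linarith
  have hexK : ∃ u ∈ K, 1 < u ⬝ᵥ (p - o) := by
    have hpos : 0 < s - y ⬝ᵥ o := by linarith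
    refine ⟨(s - y ⬝ᵥ o)⁻¹ • y, fun x hx => ?_, ?_⟩
    · rw [smul_dotProduct, smul_eq_mul, inv_mul_le_iff₀ hpos, dotProduct_sub]
      linarith [hyF x hx]
    · rw [smul_dotProduct, smul_eq_mul, lt_inv_mul_iff₀ hpos, dotProduct_sub]
      linarith
  obtain ⟨u1, hu1K, hu1⟩ := hexK
  let l : (Fin d → ℝ) →L[ℝ] ℝ :=
    LinearMap.toContinuousLinearMap
      { toFun := fun u => u ⬝ᵥ (p - o)
        map_add' := fun a b => add_dotProduct _ _ _
        map_smul' := fun a b => smul_dotProduct _ _ _ }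
  have hl : ∀ u, l u = u ⬝ᵥ (p - o) := fun u => rfl
  have hexp : IsExposed ℝ K (l.toExposed K) := ContinuousLinearMap.toExposed.isExposed
  obtain ⟨um, humK, hum⟩ := hKcomp.exists_isMaxOn ⟨u1, hu1K⟩ l.continuous.continuousOn
  have hne2 : (l.toExposed K).Nonempty := ⟨um, humK, fun z hz => hum hz⟩
  obtain ⟨u, hu⟩ := (hexp.isCompact hKcomp).extremePoints_nonempty hne2
  have huext : u ∈ K.extremePoints ℝ := hexp.isExtreme.extremePoints_subset_extremePoints hu
  have hup : 1 < u ⬝ᵥ (p - o) := lt_of_lt_of_le hu1 (hu.1.2 u1 hu1K)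
  have hu0 : u ≠ 0 := by
    rintro rfl; rw [zero_dotProduct] at hup; linarith
  have huK : u ∈ K := huext.1
  have key : ∀ z : Fin d → ℝ, (∀ x ∈ F, u ⬝ᵥ (x - o) = 1 → z ⬝ᵥ (x - o) = 0) → z = 0 := by
    intro z hz
    have hev : ∀ᶠ ε : ℝ in nhds 0, ∀ x ∈ F, (u + ε • z) ⬝ᵥ (x - o) ≤ 1 := by
      rw [Filter.eventually_all_finset]
      intro x hx
      by_cases h1 : u ⬝ᵥ (x - o) = 1
      · refine Filter.Eventually.of_forall fun ε => ?_
        rw [add_dotProduct, smul_dotProduct, hz x hx h1, h1]; simp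
      · have hlt : u ⬝ᵥ (x - o) < 1 := lt_of_le_of_ne (huK x hx) h1
        have hc : Continuous fun ε : ℝ => (u + ε • z) ⬝ᵥ (x - o) := by fun_prop
        have : (u + (0 : ℝ) • z) ⬝ᵥ (x - o) < 1 := by simpa using hlt
        exact (hc.continuousAt.eventually_lt continuousAt_const this).mono fun _ h => h.le
    obtain ⟨δ, hδ, hball⟩ := Metric.eventually_nhds_iff.mp hev
    have hp1 : u + (δ / 2) • z ∈ K := hball (by
      rw [Real.dist_eq, sub_zero, abs_of_pos (by positivity)]; linarith)
    have hm1 : u + (-(δ / 2)) • z ∈ K := hball (by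
      rw [Real.dist_eq, sub_zero, abs_neg, abs_of_pos (by positivity)]; linarith)
    have hseg : u ∈ openSegment ℝ (u + (δ / 2) • z) (u + (-(δ / 2)) • z) :=
      ⟨1 / 2, 1 / 2, by norm_num, by norm_num, by norm_num, by module⟩
    have := huext.2 hp1 hm1 hseg
    have h2 : (δ / 2) • z = 0 := by simpa using this
    exact (smul_eq_zero.mp h2).resolve_left (by positivity)
  have hiff : ∀ x, u ⬝ᵥ x = 1 + u ⬝ᵥ o ↔ u ⬝ᵥ (x - o) = 1 := fun x => by
    rw [dotProduct_sub]; constructor <;> intro h <;> linarith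
  refine ⟨F.filter (fun x => u ⬝ᵥ x = 1 + u ⬝ᵥ o), u, 1 + u ⬝ᵥ o,
    ⟨hu0, ?_, fun x hx => ?_, fun x => Finset.mem_filter, fun y' c' hy'' => ?_⟩, ?_⟩
  · by_contra hemp
    rw [Finset.not_nonempty_iff_eq_empty, Finset.filter_eq_empty_iff] at hemp
    exact hu0 (key u fun x hx h1 => absurd ((hiff x).mpr h1) (hemp hx))
  · have := huK x hx
    rw [dotProduct_sub] at this; linarith
  · refine ⟨c' - y' ⬝ᵥ o, ?_⟩
    rw [← sub_eq_zero]
    refine key _ fun x hx h1 => ?_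
    rw [sub_dotProduct, smul_dotProduct, h1, dotProduct_sub,
      hy'' x (Finset.mem_filter.mpr ⟨hx, (hiff x).mpr h1⟩)]
    simp
  · rw [dotProduct_sub] at hup; linarith


lemma lattice_basis {d : ℕ} {ι : Type*} (I : Finset ι) (m : ι → Fin d → ℤ) :
    ∃ (k : ℕ) (b : Fin k → Fin d → ℤ) (n : ι → Fin k → ℤ), k ≤ d ∧
      LinearIndependent ℝ (fun j => (fun i => (b j i : ℝ))) ∧
      (∀ i ∈ I, m i = ∑ j, n i j • b j) ∧
      ∀ z : Fin k → ℝ, (∀ i ∈ I, z ⬝ᵥ (fun j => (n i j : ℝ)) = 0) → z = 0 := by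
  classical
  set N : Submodule ℤ (Fin d → ℤ) := Submodule.span ℤ (m '' (I : Set ι)) with hN
  let B : Module.Basis (Fin (Module.finrank ℤ N)) ℤ N := Module.finBasis ℤ N
  have hli : LinearIndependent ℤ (fun j => (B j : Fin d → ℤ)) :=
    B.linearIndependent.map' N.subtype (Submodule.ker_subtype N)
  have hliR : LinearIndependent ℝ (fun j => (fun i => ((B j : Fin d → ℤ) i : ℝ))) :=
    (linearIndependent_algebraMap_comp_iff (R := ℤ) (S := ℝ)).mpr hli
  have hmem : ∀ i ∈ I, m i ∈ N := fun i hi => Submodule.subset_span ⟨i, hi, rfl⟩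
  refine ⟨_, fun j => B j, fun i => if h : m i ∈ N then B.repr ⟨m i, h⟩ else 0, ?_, hliR, ?_, ?_⟩
  · have := hliR.fintype_card_le_finrank
    simpa using this
  · intro i hi
    simp only [hmem i hi, dif_pos]
    have := congrArg Subtype.val (B.sum_repr ⟨m i, hmem i hi⟩)
    rw [Submodule.coe_sum] at this
    exact this.symm
  · intro z hz
    have key : ∀ (x : Fin d → ℤ) (hx : x ∈ N),
        z ⬝ᵥ (fun j => ((B.repr ⟨x, hx⟩ j : ℤ) : ℝ)) = 0 := by
      intro x hx
      induction hx using Submodule.span_induction with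
      | mem x h =>
        obtain ⟨i, hi, rfl⟩ := h
        have := hz i hi
        simp only [hmem i hi, dif_pos] at this
        exact this
      | zero =>
        have : (⟨0, N.zero_mem⟩ : N) = 0 := rfl
        simp [this, dotProduct]
      | add x y hx hy h1 h2 =>
        have e : (⟨x + y, N.add_mem hx hy⟩ : N) = ⟨x, hx⟩ + ⟨y, hy⟩ := rfl
        rw [e]
        simp only [map_add, Finsupp.add_apply, Int.cast_add]
        have := congrArg₂ (· + ·) h1 h2
        simpa [dotProduct, mul_add, Finset.sum_add_distrib] using this
      | smul a x hx h1 =>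
        have e : (⟨a • x, N.smul_mem a hx⟩ : N) = a • ⟨x, hx⟩ := rfl
        rw [e]
        have := congrArg (fun t => (a : ℝ) * t) h1
        simp only [dotProduct, Finset.mul_sum, mul_zero] at this
        rw [← this]
        simp only [dotProduct, map_smul, Finsupp.smul_apply, smul_eq_mul, Int.cast_mul]
        exact Finset.sum_congr rfl fun j _ => by ring
    ext j
    have := key (B j) (B j).2
    simpa [dotProduct, Finsupp.single_apply] using this

lemma FacetWith.eq {d : ℕ} {F G G' : Finset (Fin d → ℝ)} {w : Fin d → ℝ} {c c' : ℝ}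
    (h : FacetWith F G w c) (h' : FacetWith F G' w c') : G = G' := by
  obtain ⟨_, ⟨g, hg⟩, h3, h4, _⟩ := h
  obtain ⟨_, ⟨g', hg'⟩, h3', h4', _⟩ := h'
  have e1 := (h4 g).mp hg
  have e2 := (h4' g').mp hg'
  have e3 := h3 _ e2.1
  have e4 := h3' _ e1.1
  have : c = c' := by linarith
  subst this
  ext x; rw [h4, h4']

lemma small_reduction {d : ℕ} {F : Finset (Fin d → ℝ)} (hInt : IntF F) (hF : FullDim F)
    {v0 v} (hs : MaxSimplex F v0 v) (GG : Finset (Finset (Fin d → ℝ)))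
    (m : Finset (Fin d → ℝ) → Fin d → ℤ) (c : Finset (Fin d → ℝ) → ℝ)
    (hfac : ∀ G ∈ GG, FacetWith F G (fun i => (m G i : ℝ)) (c G)) {R : ℝ}
    (hR : ∀ G ∈ GG, c G - (fun i => (m G i : ℝ)) ⬝ᵥ cen v0 v ≤ R) (hne : GG.Nonempty) :
    ∃ (k : ℕ) (F' : Finset (Fin k → ℝ)) (GG' : Finset (Finset (Fin k → ℝ)))
      (q0 : Fin k → ℝ) (q : Fin k → Fin k → ℝ), 1 ≤ k ∧ k ≤ d ∧ IntF F' ∧ FullDim F' ∧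
      (∀ G ∈ GG', IsFacet F' G) ∧ GG'.card = GG.card ∧ MaxSimplex F' q0 q ∧
      (GG.card : ℝ) * |(Matrix.of q).det| ≤ (2 * (k + 1) * (2 * d * (d + 1) * R)) ^ k ∧
      (k = d → |(Matrix.of v).det| ≤ |(Matrix.of q).det|) := by
  classical
  obtain ⟨k, b, n, hkd, hli, hmn, hspan⟩ := lattice_basis GG m
  let bR : Fin k → Fin d → ℝ := fun j i => (b j i : ℝ)
  let nR : Finset (Fin d → ℝ) → Fin k → ℝ := fun G j => (n G j : ℝ)
  let mR : Finset (Fin d → ℝ) → Fin d → ℝ := fun G i => (m G i : ℝ)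
  let p : (Fin d → ℝ) → Fin k → ℝ := fun x j => bR j ⬝ᵥ x
  have hdot : ∀ (u : Fin k → ℝ) (x : Fin d → ℝ), u ⬝ᵥ p x = (∑ j, u j • bR j) ⬝ᵥ x := by
    intro u x
    rw [sum_dotProduct]
    simp [p, dotProduct, smul_eq_mul, Finset.mul_sum, mul_assoc]
  have hmR : ∀ G ∈ GG, mR G = ∑ j, nR G j • bR j := by
    intro G hG
    ext i
    have := congrFun (hmn G hG) i
    simp only [mR, nR, bR]
    rw [this]
    simp [Finset.sum_apply]
  have hnm : ∀ G ∈ GG, ∀ x, nR G ⬝ᵥ p x = mR G ⬝ᵥ x := fun G hG x => by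
    rw [hdot, ← hmR G hG]
  have hind : ∀ u u' : Fin k → ℝ, ∑ j, u j • bR j = ∑ j, u' j • bR j → u = u' := by
    intro u u' h
    have h0 : ∑ j, (u j - u' j) • bR j = 0 := by
      simp only [sub_smul, Finset.sum_sub_distrib]; rw [h, sub_self]
    have := Fintype.linearIndependent_iff.mp hli _ h0
    ext j; linarith [this j]
  have hFne : F.Nonempty := ⟨_, hs.1⟩
  have hFull : FullDim (F.image p) := by
    intro u c' hu
    apply hind u 0
    simp only [Pi.zero_apply, zero_smul, Finset.sum_const_zero]
    refine hF _ c' fun x hx => ?_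
    rw [← hdot]; exact hu _ (Finset.mem_image_of_mem _ hx)
  have hIntF : IntF (F.image p) := by
    intro y hy j
    obtain ⟨x, hx, rfl⟩ := Finset.mem_image.mp hy
    choose z hz using hInt x hx
    exact ⟨∑ i, b j i * z i, by simp [p, bR, dotProduct, hz]⟩
  have hfac' : ∀ G ∈ GG, FacetWith (F.image p) (G.image p) (nR G) (c G) := by
    intro G hG
    obtain ⟨h1, h2, h3, h4, h5⟩ := hfac G hG
    refine ⟨fun h => h1 ?_, h2.image _, fun y hy => ?_, fun y => ⟨fun hy => ?_, fun hy => ?_⟩,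
      fun u c' hu => ?_⟩
    · change mR G = 0
      rw [hmR G hG, h]; simp
    · obtain ⟨x, hx, rfl⟩ := Finset.mem_image.mp hy
      rw [hnm G hG]; exact h3 x hx
    · obtain ⟨x, hx, rfl⟩ := Finset.mem_image.mp hy
      rw [hnm G hG]
      exact ⟨Finset.mem_image_of_mem _ ((h4 x).mp hx).1, ((h4 x).mp hx).2⟩
    · obtain ⟨hy1, hy2⟩ := hy
      obtain ⟨x, hx, rfl⟩ := Finset.mem_image.mp hy1
      rw [hnm G hG] at hy2
      exact Finset.mem_image_of_mem _ ((h4 x).mpr ⟨hx, hy2⟩)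
    · obtain ⟨β, hβ⟩ := h5 (∑ j, u j • bR j) c' fun x hx => by
        rw [← hdot]; exact hu _ (Finset.mem_image_of_mem _ hx)
      refine ⟨β, hind _ _ ?_⟩
      rw [hβ]
      change β • mR G = _
      rw [hmR G hG, Finset.smul_sum]
      simp [smul_smul]
  obtain ⟨q0, q, hq⟩ := exists_maxSimplex (F.image p) (hFne.image _) hFull
  have hninj : ∀ G ∈ GG, ∀ G' ∈ GG, n G = n G' → G = G' := by
    intro G hG G' hG' h
    have e : mR G = mR G' := by
      rw [hmR G hG, hmR G' hG']; simp [nR, h]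
    have h1 := hfac G hG
    have h2 := hfac G' hG'
    change FacetWith F G (mR G) _ at h1
    change FacetWith F G' (mR G') _ at h2
    rw [e] at h1
    exact h1.eq h2
  refine ⟨k, F.image p, GG.image (fun G => G.image p), q0, q, ?_, hkd, hIntF, hFull, ?_, ?_, hq,
    ?_, ?_⟩
  · obtain ⟨G, hG⟩ := hne
    by_contra hk
    have hk0 : k = 0 := by omega
    subst hk0
    apply (hfac G hG).1
    change mR G = 0
    rw [hmR G hG]; simp
  · intro G' hG'
    obtain ⟨G, hG, rfl⟩ := Finset.mem_image.mp hG'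
    exact ⟨_, _, hfac' G hG⟩
  · apply Finset.card_image_of_injOn
    intro G hG G' hG' h
    simp only at h
    have hsub : ∀ A ∈ GG, ∀ A' ∈ GG, A.image p = A'.image p → A ⊆ A' := by
      intro A hA A' hA' hAA x hx
      have hx1 := (((hfac A hA).2.2.2.1 x).mp hx).1
      have hx2 : p x ∈ A'.image p := hAA ▸ Finset.mem_image_of_mem _ hx
      have hx3 := (((hfac' A' hA').2.2.2.1 _).mp hx2).2
      rw [hnm A' hA'] at hx3
      exact ((hfac A' hA').2.2.2.1 x).mpr ⟨hx1, hx3⟩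
    exact Finset.Subset.antisymm (hsub _ hG _ hG' h) (hsub _ hG' _ hG h.symm)
  · have hR0 : 0 ≤ R := by
      obtain ⟨G, hG⟩ := hne
      exact (hs.cen_pos (hfac G hG).1 (hfac G hG).2.2.1).le.trans (hR G hG)
    have hcard : (GG.image n).card = GG.card :=
      Finset.card_image_of_injOn fun G hG G' hG' h => hninj G hG G' hG' h
    have := count_lattice (GG.image n) q hq.2.2.1 (R := 2 * d * (d + 1) * R) (by positivity)
      (fun nn hnn i => by
        obtain ⟨G, hG, rfl⟩ := Finset.mem_image.mp hnn
        obtain ⟨x0, hx0, e0⟩ := Finset.mem_image.mp hq.1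
        obtain ⟨x1, hx1, e1⟩ := Finset.mem_image.mp (hq.2.1 i)
        have e : q i ⬝ᵥ nR G = mR G ⬝ᵥ (x1 - x0) := by
          rw [dotProduct_sub, ← hnm G hG, ← hnm G hG, e0, e1, dotProduct_add, dotProduct_comm]
          ring
        change |q i ⬝ᵥ nR G| ≤ _
        rw [e]
        refine (hs.diff_bound (hfac G hG).2.2.1 hx1 hx0).trans ?_
        exact mul_le_mul_of_nonneg_left (hR G hG) (by positivity))
      (fun z hz => hspan z fun G hG => hz _ (Finset.mem_image_of_mem _ hG))
    rwa [hcard] at this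
  · intro hk
    subst hk
    have h1 := hq.2.2.2 (p v0) (Finset.mem_image_of_mem _ hs.1) (fun i => p (v i)) (fun i => by
      have : p v0 + p (v i) = p (v0 + v i) := by ext j; simp [p, dotProduct_add]
      rw [this]; exact Finset.mem_image_of_mem _ (hs.2.1 i))
    have h2 : (Matrix.of fun i => p (v i)) = Matrix.of v * (Matrix.of bR)ᵀ := by
      ext i j; simp [p, mul_apply, dotProduct, mul_comm]
    rw [h2, det_mul, det_transpose, abs_mul] at h1
    have hb0 : (Matrix.of bR).det ≠ 0 := by
      have : LinearIndependent ℝ (Matrix.of bR).row := hli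
      exact (Matrix.isUnit_iff_isUnit_det _).mp
        (Matrix.linearIndependent_rows_iff_isUnit.mp this) |>.ne_zero
    obtain ⟨z, hz⟩ := int_det (Matrix.of bR) fun i j => ⟨b i j, rfl⟩
    have hz1 : 1 ≤ |(Matrix.of bR).det| := by
      rw [hz] at hb0 ⊢
      have : z ≠ 0 := by rintro rfl; simp at hb0
      exact_mod_cast Int.one_le_abs this
    nlinarith [abs_nonneg (Matrix.of v).det]

def FacetBd (d : ℕ) (c : ℝ) : Prop :=
  ∀ F : Finset (Fin d → ℝ), IntF F → FullDim F → ∀ GG : Finset (Finset (Fin d → ℝ)),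
    (∀ G ∈ GG, IsFacet F G) → ∀ v0 v, MaxSimplex F v0 v →
    (GG.card : ℝ) ≤ c * |(Matrix.of v).det| ^ (((d : ℝ) - 1) / ((d : ℝ) + 1))

lemma MaxSimplex.one_le {d : ℕ} {F : Finset (Fin d → ℝ)} (hInt : IntF F) {v0 v}
    (hs : MaxSimplex F v0 v) : 1 ≤ |(Matrix.of v).det| := by
  obtain ⟨z, hz⟩ := int_det (Matrix.of v) fun i j => by
    obtain ⟨a, ha⟩ := hInt _ hs.1 j
    obtain ⟨b, hb⟩ := hInt _ (hs.2.1 i) j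
    refine ⟨b - a, ?_⟩
    push_cast
    rw [← ha, ← hb]; simp
  have h0 := hs.2.2.1
  rw [hz] at h0 ⊢
  have : z ≠ 0 := by rintro rfl; simp at h0
  exact_mod_cast Int.one_le_abs this

lemma big_bound {d : ℕ} {F : Finset (Fin d → ℝ)} {v0 v} (hs : MaxSimplex F v0 v)
    (GG : Finset (Finset (Fin d → ℝ))) (m : Finset (Fin d → ℝ) → Fin d → ℤ)
    (c : Finset (Fin d → ℝ) → ℝ) (T : Finset (Fin d → ℝ) → Fin d → Fin d → ℝ)
    (hfac : ∀ G ∈ GG, FacetWith F G (fun i => (m G i : ℝ)) (c G) ∧ (∀ i, T G i ∈ G) ∧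
      (Matrix.of fun i => T G i - cen v0 v).det ≠ 0 ∧
      |(Matrix.of fun i => T G i - cen v0 v).det| =
        c G - (fun i => (m G i : ℝ)) ⬝ᵥ cen v0 v) {R : ℝ}
    (hR : ∀ G ∈ GG, R ≤ c G - (fun i => (m G i : ℝ)) ⬝ᵥ cen v0 v) :
    (GG.card : ℝ) * R * (volume (simp0 d)).toReal ≤ 4 ^ d * |(Matrix.of v).det| := by
  classical
  let H : Finset (Fin d → ℝ) → ℝ := fun G => c G - (fun i => (m G i : ℝ)) ⬝ᵥ cen v0 v
  have hH : ∀ G ∈ GG, 0 < H G := fun G hG => hs.cen_pos (hfac G hG).1.1 (hfac G hG).1.2.2.1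
  let g : Finset (Fin d → ℝ) → Fin d → ℝ := fun G => (H G)⁻¹ • (fun i => (m G i : ℝ))
  have hTF : ∀ G ∈ GG, ∀ j, T G j ∈ F ∧ (fun i => (m G i : ℝ)) ⬝ᵥ T G j = c G := fun G hG j =>
    ((hfac G hG).1.2.2.2.1 _).mp ((hfac G hG).2.1 j)
  have hgx : ∀ G ∈ GG, ∀ x, g G ⬝ᵥ (x - cen v0 v) = 1 ↔ (fun i => (m G i : ℝ)) ⬝ᵥ x = c G := by
    intro G hG x
    have := hH G hG
    simp only [g]
    rw [smul_dotProduct, smul_eq_mul, inv_mul_eq_one₀ this.ne', dotProduct_sub]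
    simp only [H]
    constructor <;> intro h <;> linarith
  have h := weight_sum hs GG T g (fun G hG j => (hTF G hG j).1) (fun G hG => (hfac G hG).2.2.1)
    (fun G hG x hx => by
      have h1 := hH G hG
      have h2 := (hfac G hG).1.2.2.1 x hx
      simp only [g]
      rw [smul_dotProduct, smul_eq_mul, inv_mul_le_iff₀ h1, dotProduct_sub]
      simp only [H]
      linarith)
    (fun G hG j => (hgx G hG _).mpr (hTF G hG j).2)
    (fun G hG G' hG' hg => by
      ext x
      rw [(hfac G hG).1.2.2.2.1, (hfac G' hG').1.2.2.2.1, ← hgx G hG, ← hgx G' hG', hg])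
  refine le_trans ?_ h
  refine mul_le_mul_of_nonneg_right ?_ ENNReal.toReal_nonneg
  rw [← nsmul_eq_mul]
  refine Finset.card_nsmul_le_sum _ _ _ fun G hG => ?_
  rw [(hfac G hG).2.2.2]; exact hR G hG

theorem facet_bound (d : ℕ) (hd : 1 ≤ d) : ∃ c : ℝ, 0 < c ∧ FacetBd d c := by
  classical
  induction d using Nat.strong_induction_on with
  | _ d ih =>
  have hf : ∀ k : ℕ, ∃ c : ℝ, 0 < c ∧ (k < d → 1 ≤ k → FacetBd k c) := by
    intro k
    by_cases h : k < d ∧ 1 ≤ k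
    · obtain ⟨c, hc, hb⟩ := ih k h.1 h.2
      exact ⟨c, hc, fun _ _ => hb⟩
    · exact ⟨1, one_pos, fun h1 h2 => absurd ⟨h1, h2⟩ h⟩
  choose f hfpos hfb using hf
  set s := (volume (simp0 d)).toReal with hs_def
  have hspos : 0 < s := simp0_pos d
  let K : ℕ → ℝ := fun k => (2 * (k + 1) * (2 * d * (d + 1))) ^ k
  have hKpos : ∀ k, 0 ≤ K k := fun k => by positivity
  refine ⟨4 ^ d / s + (∑ k ∈ Finset.range (d + 1), K k + ∑ k ∈ Finset.range d, f k), ?_, ?_⟩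
  · have h1 : 0 ≤ ∑ k ∈ Finset.range (d + 1), K k := Finset.sum_nonneg fun k _ => hKpos k
    have h2 : 0 ≤ ∑ k ∈ Finset.range d, f k := Finset.sum_nonneg fun k _ => (hfpos k).le
    have : 0 < 4 ^ d / s := by positivity
    linarith
  intro F hInt hFull GG hGG v0 v hs
  have hdata : ∀ G : Finset (Fin d → ℝ), ∃ (m : Fin d → ℤ) (c : ℝ) (T : Fin d → Fin d → ℝ),
      G ∈ GG → FacetWith F G (fun i => (m i : ℝ)) c ∧ (∀ i, T i ∈ G) ∧
      (Matrix.of fun i => T i - cen v0 v).det ≠ 0 ∧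
      |(Matrix.of fun i => T i - cen v0 v).det| = c - (fun i => (m i : ℝ)) ⬝ᵥ cen v0 v := by
    intro G
    by_cases hG : G ∈ GG
    · obtain ⟨m, c, T, h⟩ := facet_data hd hInt hs (hGG G hG)
      exact ⟨m, c, T, fun _ => h⟩
    · exact ⟨0, 0, 0, fun h => absurd h hG⟩
  choose m c T hfac using hdata
  set D := |(Matrix.of v).det| with hD
  have hD1 : 1 ≤ D := hs.one_le hInt
  have hD0 : 0 < D := by linarith
  have hd1 : (0 : ℝ) < (d : ℝ) + 1 := by positivity
  set R : ℝ := D ^ (2 / ((d : ℝ) + 1)) with hR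
  have hR0 : 0 < R := Real.rpow_pos_of_pos hD0 _
  set α : ℝ := ((d : ℝ) - 1) / ((d : ℝ) + 1) with hα
  have hDα : 0 < D ^ α := Real.rpow_pos_of_pos hD0 _
  have hDR : D ^ α * R = D := by
    rw [hR, ← Real.rpow_add hD0]
    have : α + 2 / ((d : ℝ) + 1) = 1 := by rw [hα]; field_simp; ring
    rw [this, Real.rpow_one]
  have hRpow : ∀ k : ℕ, k ≤ d → R ^ (((k : ℝ) - 1) / 2) ≤ D ^ α := by
    intro k hk
    rw [hR, ← Real.rpow_mul hD0.le]
    refine Real.rpow_le_rpow_of_exponent_le hD1 ?_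
    have hk' : (k : ℝ) ≤ d := by exact_mod_cast hk
    rw [hα, div_mul_div_comm, div_le_div_iff₀ (by positivity) (by positivity)]
    nlinarith
  let H : Finset (Fin d → ℝ) → ℝ := fun G => c G - (fun i => (m G i : ℝ)) ⬝ᵥ cen v0 v
  set Gb := GG.filter (fun G => R ≤ H G) with hGb
  set Gs := GG.filter (fun G => ¬ R ≤ H G) with hGs
  have hcard : (GG.card : ℝ) = Gb.card + Gs.card := by
    rw [hGb, hGs]; exact_mod_cast (Finset.card_filter_add_card_filter_not _).symm
  have hbig : (Gb.card : ℝ) ≤ 4 ^ d / s * D ^ α := by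
    have h1 := big_bound hs Gb m c T (fun G hG => hfac G (Finset.mem_filter.mp hG).1)
      (R := R) (fun G hG => (Finset.mem_filter.mp hG).2)
    rw [← hs_def, ← hD] at h1
    have h2 : (Gb.card : ℝ) * s * R ≤ 4 ^ d * D ^ α * R := by
      calc _ = (Gb.card : ℝ) * R * s := by ring
        _ ≤ 4 ^ d * D := h1
        _ = 4 ^ d * (D ^ α * R) := by rw [hDR]
        _ = _ := by ring
    have h3 := le_of_mul_le_mul_right h2 hR0
    rw [div_mul_eq_mul_div, le_div_iff₀ hspos]
    exact h3
  have hsmall : (Gs.card : ℝ) ≤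
      (∑ k ∈ Finset.range (d + 1), K k + ∑ k ∈ Finset.range d, f k) * D ^ α := by
    have hS1 : 0 ≤ ∑ k ∈ Finset.range (d + 1), K k := Finset.sum_nonneg fun k _ => hKpos k
    have hS2 : 0 ≤ ∑ k ∈ Finset.range d, f k := Finset.sum_nonneg fun k _ => (hfpos k).le
    rcases Gs.eq_empty_or_nonempty with hemp | hne
    · rw [hemp]; simp only [Finset.card_empty, Nat.cast_zero]; positivity
    obtain ⟨k, F', GG', q0, q, hk1, hkd, hInt', hFull', hfac', hcard', hq, hcount, hkeq⟩ :=
      small_reduction hInt hFull hs Gs m c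
        (fun G hG => (hfac G (Finset.mem_filter.mp hG).1).1)
        (R := R) (fun G hG => (not_le.mp (Finset.mem_filter.mp hG).2).le) hne
    set Dk := |(Matrix.of q).det| with hDk
    have hDk1 : 1 ≤ Dk := hq.one_le hInt'
    have hk0 : (0 : ℝ) < (k : ℝ) + 1 := by positivity
    have hk1' : (1 : ℝ) ≤ k := by exact_mod_cast hk1
    set X := R ^ (((k : ℝ) + 1) / 2) with hX
    have hXpos : 0 < X := Real.rpow_pos_of_pos hR0 _
    by_cases hcase : X ≤ Dk
    · have e1 : (2 * ((k : ℝ) + 1) * (2 * d * (d + 1) * R)) ^ k =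
          K k * R ^ (((k : ℝ) - 1) / 2) * X := by
        have : R ^ (((k : ℝ) - 1) / 2) * X = R ^ k := by
          rw [hX, ← Real.rpow_add hR0, ← Real.rpow_natCast]
          congr 1; ring
        rw [mul_assoc (K k), this]
        simp only [K]
        rw [← mul_pow]; congr 1; ring
      rw [e1] at hcount
      have h2 : (Gs.card : ℝ) * X ≤ K k * R ^ (((k : ℝ) - 1) / 2) * X :=
        (mul_le_mul_of_nonneg_left hcase (Nat.cast_nonneg _)).trans hcount
      have h3 := le_of_mul_le_mul_right h2 hXpos
      have h4 : K k ≤ ∑ k ∈ Finset.range (d + 1), K k :=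
        Finset.single_le_sum (f := K) (fun k _ => hKpos k) (Finset.mem_range.mpr (by omega))
      calc (Gs.card : ℝ) ≤ K k * R ^ (((k : ℝ) - 1) / 2) := h3
        _ ≤ K k * D ^ α := mul_le_mul_of_nonneg_left (hRpow k hkd) (hKpos k)
        _ ≤ _ := mul_le_mul_of_nonneg_right (by linarith) hDα.le
    · push Not at hcase
      have hklt : k < d := by
        refine lt_of_le_of_ne hkd fun h => ?_
        have h1 := hkeq h
        have h2 : X = D := by
          rw [hX, hR, ← Real.rpow_mul hD0.le, h]
          have : 2 / ((d : ℝ) + 1) * (((d : ℝ) + 1) / 2) = 1 := by field_simp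
          rw [this, Real.rpow_one]
        linarith
      have h1 := hfb k hklt hk1 F' hInt' hFull' GG' hfac' q0 q hq
      rw [hcard', ← hDk] at h1
      have h2 : Dk ^ (((k : ℝ) - 1) / ((k : ℝ) + 1)) ≤ R ^ (((k : ℝ) - 1) / 2) := by
        refine (Real.rpow_le_rpow (by linarith) hcase.le
          (div_nonneg (by linarith) hk0.le)).trans (le_of_eq ?_)
        rw [hX, ← Real.rpow_mul hR0.le]
        congr 1; field_simp
      have h4 : f k ≤ ∑ k ∈ Finset.range d, f k :=
        Finset.single_le_sum (f := f) (fun k _ => (hfpos k).le) (Finset.mem_range.mpr hklt)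
      calc (Gs.card : ℝ) ≤ f k * Dk ^ (((k : ℝ) - 1) / ((k : ℝ) + 1)) := h1
        _ ≤ f k * D ^ α :=
          mul_le_mul_of_nonneg_left (h2.trans (hRpow k hkd)) (hfpos k).le
        _ ≤ _ := mul_le_mul_of_nonneg_right (by linarith) hDα.le
  rw [hcard, add_mul]
  linarith

lemma vol_hyperplane {d : ℕ} {P : Set (Fin d → ℝ)} {u : Fin d → ℝ} {c : ℝ} (hu : u ≠ 0)
    (hP : ∀ x ∈ P, u ⬝ᵥ x = c) : volume P = 0 := by
  rcases P.eq_empty_or_nonempty with rfl | ⟨x0, hx0⟩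
  · exact measure_empty
  let f : (Fin d → ℝ) →ₗ[ℝ] ℝ :=
    { toFun := fun x => u ⬝ᵥ x
      map_add' := fun a b => dotProduct_add _ _ _
      map_smul' := fun a b => dotProduct_smul _ _ _ }
  have hker : LinearMap.ker f ≠ ⊤ := by
    intro h
    have h1 : u ∈ LinearMap.ker f := h ▸ Submodule.mem_top
    have h2 : u ⬝ᵥ u = 0 := h1
    exact hu (dotProduct_self_eq_zero.mp h2)
  have h0 := Measure.addHaar_submodule (volume : Measure (Fin d → ℝ)) _ hker
  rw [← measure_preimage_add_right volume x0 P]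
  refine measure_mono_null (fun x hx => ?_) h0
  have h1 := hP _ hx
  have h2 := hP _ hx0
  rw [dotProduct_add, h2] at h1
  change u ⬝ᵥ x = 0
  linarith

lemma simplex_vol {d : ℕ} {C : Set (Fin d → ℝ)} (hC : Convex ℝ C) {q0 : Fin d → ℝ}
    {q : Fin d → Fin d → ℝ} (h0 : q0 ∈ C) (hq : ∀ i, q0 + q i ∈ C)
    (hdet : (Matrix.of q).det ≠ 0) :
    ENNReal.ofReal |(Matrix.of q).det| * volume (simp0 d) ≤ volume C := by
  rw [← vol_preimage hdet, ← measure_preimage_add volume q0 C]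
  refine measure_mono fun x hx => ?_
  have hxq := exists_comb hdet x
  set a := x ᵥ* (Matrix.of q)⁻¹ with ha
  obtain ⟨ha1, ha2⟩ : a ∈ simp0 d := hx
  change q0 + x ∈ C
  have := hC.sum_mem (t := (Finset.univ : Finset (Option (Fin d))))
    (w := fun o => o.elim (1 - ∑ i, a i) a) (z := fun o => o.elim q0 (fun i => q0 + q i))
    (fun o _ => by
      cases o with
      | none => simp only [Option.elim]; linarith
      | some i => exact (ha1 i).le)
    (by simp [Fintype.sum_option])
    (fun o _ => by
      cases o with
      | none => exact h0
      | some i => exact hq i)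
  rw [Fintype.sum_option] at this
  simp only [Option.elim, smul_add, Finset.sum_add_distrib, ← Finset.sum_smul] at this
  rw [← hxq, ← add_assoc, ← add_smul] at this
  simpa using this

open scoped Pointwise in
theorem vertex_bound (d : ℕ) (hd : 1 ≤ d) :
    ∃ c : ℝ, 0 < c ∧ ∀ F : Finset (Fin d → ℝ), IntF F →
      0 < (volume (convexHull ℝ (F : Set (Fin d → ℝ)))).toReal →
      ((extremePoints ℝ (convexHull ℝ (F : Set (Fin d → ℝ)))).ncard : ℝ) ≤
        c * (volume (convexHull ℝ (F : Set (Fin d → ℝ)))).toReal ^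
          (((d : ℝ) - 1) / ((d : ℝ) + 1)) := by
  classical
  obtain ⟨c, hc, hb⟩ := facet_bound d hd
  set s := (volume (simp0 d)).toReal with hs_def
  have hspos : 0 < s := simp0_pos d
  set α : ℝ := ((d : ℝ) - 1) / ((d : ℝ) + 1) with hα
  have hα0 : 0 ≤ α := div_nonneg (by
    have : (1 : ℝ) ≤ d := by exact_mod_cast hd
    linarith) (by positivity)
  refine ⟨c * (3 ^ d / s) ^ α, mul_pos hc (Real.rpow_pos_of_pos (by positivity) _), ?_⟩
  intro F hInt hV
  set P := convexHull ℝ (F : Set (Fin d → ℝ)) with hP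
  set V := (volume P).toReal with hVdef
  have hPconv : Convex ℝ P := convex_convexHull ℝ _
  have hPcomp : IsCompact P := F.finite_toSet.isCompact_convexHull ℝ
  have hXsub : P.extremePoints ℝ ⊆ F := extremePoints_convexHull_subset
  have hXfin : (P.extremePoints ℝ).Finite := F.finite_toSet.subset hXsub
  set X : Finset (Fin d → ℝ) := hXfin.toFinset with hX
  have hXmem : ∀ x, x ∈ X ↔ x ∈ P.extremePoints ℝ := fun x => hXfin.mem_toFinset
  have hcardX : (P.extremePoints ℝ).ncard = X.card := Set.ncard_eq_toFinset_card _ hXfin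
  let F' : Finset (Fin d → ℝ) := X.offDiag.image (fun r => (2 : ℝ) • r.1 + r.2)
  have hF'mem : ∀ v ∈ X, ∀ w ∈ X, v ≠ w → (2 : ℝ) • v + w ∈ F' := fun v hv w hw hvw =>
    Finset.mem_image.mpr ⟨(v, w), Finset.mem_offDiag.mpr ⟨hv, hw, hvw⟩, rfl⟩
  have hF'ex : ∀ y ∈ F', ∃ v ∈ X, ∃ w ∈ X, v ≠ w ∧ y = (2 : ℝ) • v + w := by
    intro y hy
    obtain ⟨⟨v, w⟩, hr, rfl⟩ := Finset.mem_image.mp hy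
    obtain ⟨h1, h2, h3⟩ := Finset.mem_offDiag.mp hr
    exact ⟨v, h1, w, h2, h3, rfl⟩
  have hInt' : IntF F' := by
    intro y hy i
    obtain ⟨v, hv, w, hw, -, rfl⟩ := hF'ex y hy
    obtain ⟨a, ha⟩ := hInt v (hXsub ((hXmem v).mp hv)) i
    obtain ⟨b, hb⟩ := hInt w (hXsub ((hXmem w).mp hw)) i
    exact ⟨2 * a + b, by simp [ha, hb]⟩
  have hFull : FullDim F' := by
    intro u c' hu
    by_contra hu0
    have hconst : ∀ v ∈ X, ∀ w ∈ X, u ⬝ᵥ v = u ⬝ᵥ w := by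
      intro v hv w hw
      by_cases hvw : v = w
      · rw [hvw]
      have h1 := hu _ (hF'mem v hv w hw hvw)
      have h2 := hu _ (hF'mem w hw v hv (Ne.symm hvw))
      simp only [dotProduct_add, dotProduct_smul, smul_eq_mul] at h1 h2
      linarith
    have hex : ∃ c'', ∀ v ∈ X, u ⬝ᵥ v = c'' := by
      rcases X.eq_empty_or_nonempty with h | ⟨w, hw⟩
      · exact ⟨0, fun v hv => by rw [h] at hv; simp at hv⟩
      · exact ⟨_, fun v hv => hconst v hv w hw⟩
    obtain ⟨c'', hc''⟩ := hex
    have hcl : IsClosed {x : Fin d → ℝ | u ⬝ᵥ x = c''} :=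
      isClosed_eq (by fun_prop) continuous_const
    have hcv : Convex ℝ {x : Fin d → ℝ | u ⬝ᵥ x = c''} := by
      intro x hx y hy a b _ _ hab
      simp only [Set.mem_ofPred_eq] at hx hy ⊢
      rw [dotProduct_add, dotProduct_smul, dotProduct_smul, hx, hy, ← add_smul, hab, one_smul]
    have hsub : P ⊆ {x : Fin d → ℝ | u ⬝ᵥ x = c''} := by
      rw [← closure_convexHull_extremePoints hPcomp hPconv]
      exact closure_minimal (convexHull_min (fun x hx => hc'' x ((hXmem x).mpr hx)) hcv) hcl
    have := vol_hyperplane hu0 (fun x hx => hsub hx)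
    rw [hVdef, this] at hV
    simp at hV
  have hne : F'.Nonempty := by
    by_contra h
    rw [Finset.not_nonempty_iff_eq_empty] at h
    have h1 := hFull (fun _ => 1) 0 (fun x hx => by rw [h] at hx; simp at hx)
    have := congrFun h1 ⟨0, hd⟩
    simp at this
  have hsep : ∀ v : Fin d → ℝ, ∃ (G : Finset (Fin d → ℝ)) (w : Fin d → ℝ) (c' : ℝ), v ∈ X →
      FacetWith F' G w c' ∧ c' < w ⬝ᵥ ((3 : ℝ) • v) := by
    intro v
    by_cases hv : v ∈ X
    swap
    · exact ⟨∅, 0, 0, fun h => absurd h hv⟩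
    have hvP := (hXmem v).mp hv
    have hnot : (3 : ℝ) • v ∉ convexHull ℝ (F' : Set (Fin d → ℝ)) := by
      have hcv : Convex ℝ ((fun x : Fin d → ℝ => (3 : ℝ) • x) '' (P \ {v})) :=
        (hPconv.mem_extremePoints_iff_convex_sdiff.mp hvP).2.smul 3
      intro hmem
      have hsub : (F' : Set (Fin d → ℝ)) ⊆ (fun x : Fin d → ℝ => (3 : ℝ) • x) '' (P \ {v}) := by
        intro y hy
        obtain ⟨v', hv', w', hw', hne', rfl⟩ := hF'ex y hy
        have hv'P := ((hXmem v').mp hv').1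
        have hw'P := ((hXmem w').mp hw').1
        refine ⟨(2 / 3 : ℝ) • v' + (1 / 3 : ℝ) • w', ⟨?_, ?_⟩, ?_⟩
        · exact hPconv hv'P hw'P (by norm_num) (by norm_num) (by norm_num)
        · intro h
          have h' : (2 / 3 : ℝ) • v' + (1 / 3 : ℝ) • w' = v := h
          have := (mem_extremePoints.mp hvP).2 v' hv'P w' hw'P
            ⟨2 / 3, 1 / 3, by norm_num, by norm_num, by norm_num, h'⟩
          exact hne' (this.1.trans this.2.symm)
        · simp only [smul_add, smul_smul]
          norm_num
      obtain ⟨y, hy, hyv⟩ := convexHull_min hsub hcv hmem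
      have : y = v := smul_right_injective _ (three_ne_zero (α := ℝ)) hyv
      exact hy.2 this
    obtain ⟨G, w, c', h1, h2⟩ := exists_facet_sep hne hFull hnot
    exact ⟨G, w, c', fun _ => ⟨h1, h2⟩⟩
  choose G w c' hG using hsep
  have hGinj : Set.InjOn G (X : Set (Fin d → ℝ)) := by
    intro v hv v' hv' hGG
    by_contra hvv
    obtain ⟨⟨h1, h2, h3, h4, h5⟩, h6⟩ := hG v hv
    obtain ⟨⟨k1, k2, k3, k4, k5⟩, k6⟩ := hG v' hv'
    obtain ⟨β, hβ⟩ := k5 (w v) (c' v) (fun x hx => ((h4 x).mp (hGG ▸ hx)).2)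
    obtain ⟨g, hg⟩ := h2
    have hg1 := (h4 g).mp hg
    have hg2 := (k4 g).mp (hGG ▸ hg)
    have hcc : c' v = β * c' v' := by
      rw [← hg1.2, ← hg2.2, hβ, smul_dotProduct, smul_eq_mul]
    have hβpos : 0 < β := by
      by_contra hneg
      push Not at hneg
      rcases hneg.lt_or_eq with hlt | heq
      · apply k1
        refine hFull _ (c' v') fun x hx => le_antisymm (k3 x hx) ?_
        have := h3 x hx
        rw [hβ, smul_dotProduct, smul_eq_mul, hcc] at this
        nlinarith
      · apply h1; rw [hβ, heq, zero_smul]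
    rw [hβ, smul_dotProduct, smul_eq_mul, hcc] at h6
    have h7 := lt_of_mul_lt_mul_left h6 hβpos.le
    have h8 := k3 _ (hF'mem v hv v' hv' hvv)
    simp only [dotProduct_add, dotProduct_smul, smul_eq_mul] at h7 h8 k6
    linarith
  obtain ⟨q0, q, hq⟩ := exists_maxSimplex F' hne hFull
  have hcount := hb F' hInt' hFull (X.image G) (fun A hA => by
    obtain ⟨v, hv, rfl⟩ := Finset.mem_image.mp hA
    exact ⟨_, _, (hG v hv).1⟩) q0 q hq
  rw [Finset.card_image_of_injOn hGinj] at hcount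
  set D := |(Matrix.of q).det| with hD
  have hDV : D ≤ 3 ^ d / s * V := by
    have hCconv : Convex ℝ ((3 : ℝ) • P) := hPconv.smul 3
    have hF'C : ∀ y ∈ F', y ∈ (3 : ℝ) • P := by
      intro y hy
      obtain ⟨v', hv', w', hw', hne', rfl⟩ := hF'ex y hy
      refine ⟨(2 / 3 : ℝ) • v' + (1 / 3 : ℝ) • w', hPconv ((hXmem v').mp hv').1
        ((hXmem w').mp hw').1 (by norm_num) (by norm_num) (by norm_num), ?_⟩
      simp only [smul_add, smul_smul]
      norm_num
    have h1 := simplex_vol hCconv (hF'C _ hq.1) (fun i => hF'C _ (hq.2.1 i)) hq.2.2.1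
    rw [Measure.addHaar_smul] at h1
    have h2 := ENNReal.toReal_mono
      (ENNReal.mul_ne_top ENNReal.ofReal_ne_top hPcomp.measure_lt_top.ne) h1
    rw [ENNReal.toReal_mul, ENNReal.toReal_mul, ENNReal.toReal_ofReal (abs_nonneg _),
      ENNReal.toReal_ofReal (abs_nonneg _), ← hD, ← hs_def, ← hVdef] at h2
    simp only [Module.finrank_fintype_fun_eq_card, Fintype.card_fin] at h2
    rw [abs_of_pos (by positivity)] at h2
    rw [div_mul_eq_mul_div, le_div_iff₀ hspos]
    exact h2
  rw [hcardX]
  calc (X.card : ℝ) ≤ c * D ^ α := hcount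
    _ ≤ c * (3 ^ d / s * V) ^ α :=
      mul_le_mul_of_nonneg_left (Real.rpow_le_rpow (abs_nonneg _) hDV hα0) hc.le
    _ = c * (3 ^ d / s) ^ α * V ^ α := by
      rw [Real.mul_rpow (by positivity) hV.le]; ring

end Andrews

theorem andrews_lattice_polytope_vertex_bound (d : ℕ) (hd : 1 ≤ d) :
    ∃ c : ℝ, 0 < c ∧ ∀ F : Finset (E d), (↑F : Set (E d)) ⊆ intPoints d →
      0 < (volume (convexHull ℝ (↑F : Set (E d)))).toReal →
      (numVertices d (convexHull ℝ (↑F : Set (E d))) : ℝ) ≤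
        c * ((volume (convexHull ℝ (↑F : Set (E d)))).toReal) ^
          (((d : ℝ) - 1) / ((d : ℝ) + 1)) := by
  classical
  obtain ⟨c, hc, hb⟩ := Andrews.vertex_bound d hd
  refine ⟨c, hc, fun F hF hV => ?_⟩
  let e : E d ≃ₗ[ℝ] (Fin d → ℝ) := WithLp.linearEquiv 2 ℝ (Fin d → ℝ)
  have himg : convexHull ℝ ((F.image e : Finset (Fin d → ℝ)) : Set (Fin d → ℝ)) =
      e '' convexHull ℝ (F : Set (E d)) := by
    rw [Finset.coe_image]
    exact (LinearMap.image_convexHull e.toLinearMap (F : Set (E d))).symm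
  have hvol : volume (convexHull ℝ ((F.image e : Finset (Fin d → ℝ)) : Set (Fin d → ℝ))) =
      volume (convexHull ℝ (F : Set (E d))) := by
    have hcl : IsClosed (convexHull ℝ ((F.image e : Finset (Fin d → ℝ)) : Set (Fin d → ℝ))) :=
      (F.image e).finite_toSet.isClosed_convexHull ℝ
    rw [← (PiLp.volume_preserving_ofLp (Fin d)).measure_preimage
      hcl.measurableSet.nullMeasurableSet, himg]
    congr 1
    exact preimage_image_eq _ e.injective
  have hext : (extremePoints ℝ
      (convexHull ℝ ((F.image e : Finset (Fin d → ℝ)) : Set (Fin d → ℝ)))).ncard =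
      numVertices d (convexHull ℝ (F : Set (E d))) := by
    rw [himg, ← image_extremePoints e, Set.ncard_image_of_injective _ e.injective, numVertices]
  have := hb (F.image e) (fun x hx i => by
    obtain ⟨y, hy, rfl⟩ := Finset.mem_image.mp hx
    exact hF hy i) (by rw [hvol]; exact hV)
  rw [hvol, hext] at this
  exact this
end
end
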